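/- arXiv:2505.15826 — 10 statements merged into one kernel-verified Lean document; each statement's English description precedes it below -/
import Mathlib

section
/- For every integer n ≥ 1, the number of parking functions of length n equals (n+1)^(n−1). -/
/-- A sequence `x : Fin n → Fin n` (so with values in `{0,…,n-1}`) is a *parking function*
of length `n` if its weakly increasing rearrangement `z = x ∘ σ` satisfies `z i ≤ i`
(0-indexed; equivalently `z_i ≤ i - 1` in 1-indexed notation). -/
def IsParkingFunction {n : ℕ} (x : Fin n → Fin n) : Prop :=
  ∃ σ : Equiv.Perm (Fin n), Monotone (x ∘ σ) ∧ ∀ i : Fin n, (x (σ i) : ℕ) ≤ (i : ℕ)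

theorem pf_iff {n : ℕ} (x : Fin n → Fin n) : IsParkingFunction x ↔
    ∀ k ≤ n, k ≤ (Finset.univ.filter fun i => (x i : ℕ) < k).card := by
  constructor
  · rintro ⟨σ, -, h⟩ k hk
    have h1 : (Finset.univ.filter fun i : Fin n => (i : ℕ) < k).card = k := by
      rw [Fin.card_filter_val_lt]; omega
    calc k = (Finset.univ.filter fun i : Fin n => (i : ℕ) < k).card := h1.symm
      _ ≤ _ := by
        apply Finset.card_le_card_of_injOn σ
        · intro i hi
          have := h i
          simp at hi ⊢
          omega
        · exact σ.injective.injOn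
  · intro h
    refine ⟨Tuple.sort x, Tuple.monotone_sort x, fun i => ?_⟩
    by_contra hc
    push Not at hc
    have h1 := h (i + 1) i.2
    have h2 : (Finset.univ.filter fun j => (x j : ℕ) < i + 1).card
        ≤ (Finset.univ.filter fun j : Fin n => (j : ℕ) < i).card := by
      apply Finset.card_le_card_of_injOn (Tuple.sort x).symm
      · intro j hj
        simp at hj ⊢
        by_contra hl
        push Not at hl
        have := Tuple.monotone_sort x hl
        simp only [Function.comp_apply, Equiv.apply_symm_apply] at this
        have h3 : (x (Tuple.sort x i) : ℕ) ≤ (x j : ℕ) := this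
        omega
      · exact (Tuple.sort x).symm.injective.injOn
    rw [Fin.card_filter_val_lt] at h2
    omega

def PQ {n : ℕ} (y : Fin n → ZMod (n + 1)) : Prop :=
    ∀ k ≤ n, k ≤ (Finset.univ.filter fun i => (y i).val < k).card

theorem PQ_lt {n : ℕ} {y : Fin n → ZMod (n + 1)} (h : PQ y) (i : Fin n) : (y i).val < n := by
  have h1 := h n le_rfl
  have h2 : (Finset.univ.filter fun i => (y i).val < n) = Finset.univ := by
    apply Finset.eq_univ_of_card
    apply le_antisymm (Finset.card_le_univ _)
    simpa using h1
  have := Finset.mem_univ i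
  rw [← h2] at this
  simpa using this

def pfEquiv (n : ℕ) : {x : Fin n → Fin n // IsParkingFunction x} ≃
    {y : Fin n → ZMod (n + 1) // PQ y} where
  toFun x := ⟨fun i => ((x.1 i : ℕ) : ZMod (n + 1)), by
    have h := (pf_iff x.1).1 x.2
    intro k hk
    convert h k hk using 5 with i
    exact ZMod.val_cast_of_lt (by omega)⟩
  invFun y := ⟨fun i => ⟨(y.1 i).val, PQ_lt y.2 i⟩, (pf_iff _).2 y.2⟩
  left_inv x := by
    ext i
    exact ZMod.val_cast_of_lt (Nat.lt_succ_of_lt (x.1 i).2)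
  right_inv y := by
    ext i
    simp

def SS {n : ℕ} (y : Fin n → ZMod (n + 1)) (m : ℕ) : ℤ :=
  ∑ j ∈ Finset.range m, (((Finset.univ.filter fun i => y i = (j : ZMod (n + 1))).card : ℤ) - 1)

theorem SS_add {n : ℕ} (y : Fin n → ZMod (n + 1)) (c k : ℕ) (hk : k ≤ n + 1) :
    SS y (c + k) - SS y c =
      ((Finset.univ.filter fun i => (y i - (c : ZMod (n + 1))).val < k).card : ℤ) - k := by
  unfold SS
  rw [Finset.sum_range_add, add_sub_cancel_left, Finset.sum_sub_distrib]
  congr 1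
  · rw [Finset.card_eq_sum_card_fiberwise (t := Finset.range k)
      (f := fun i => (y i - (c : ZMod (n + 1))).val)]
    · push_cast
      apply Finset.sum_congr rfl
      intro j hj
      have hj := Finset.mem_range.1 hj
      congr 2
      ext i
      simp only [Finset.mem_filter, Finset.mem_univ, true_and]
      constructor
      · intro h
        have : (y i - (c : ZMod (n + 1))).val = j := by
          rw [h, add_sub_cancel_left]
          exact ZMod.val_cast_of_lt (by omega)
        omega
      · rintro ⟨-, h⟩
        rw [← h]
        simp
    · intro i hi
      simpa using hi
  · simp

theorem SS_period {n : ℕ} (y : Fin n → ZMod (n + 1)) (c : ℕ) :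
    SS y (c + (n + 1)) = SS y c - 1 := by
  have h := SS_add y c (n + 1) le_rfl
  rw [Finset.filter_true_of_mem (fun i _ => ZMod.val_lt _)] at h
  simp at h
  linarith

theorem PQ_iff {n : ℕ} (y : Fin n → ZMod (n + 1)) (c : ℕ) :
    PQ (fun i => y i - (c : ZMod (n + 1))) ↔ ∀ k ≤ n, SS y c ≤ SS y (c + k) := by
  unfold PQ
  refine forall₂_congr fun k hk => ?_
  have := SS_add y c k (by omega)
  beta_reduce
  omega

theorem PQ_unique {n : ℕ} (y : Fin n → ZMod (n + 1)) (c d : ℕ) (hcd : c < d) (hd : d < n + 1)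
    (h1 : ∀ k ≤ n, SS y c ≤ SS y (c + k)) (h2 : ∀ k ≤ n, SS y d ≤ SS y (d + k)) : False := by
  have a := h1 (d - c) (by omega)
  have b := h2 (c + (n + 1) - d) (by omega)
  rw [show c + (d - c) = d by omega] at a
  rw [show d + (c + (n + 1) - d) = c + (n + 1) by omega, SS_period] at b
  omega

theorem PQ_exists {n : ℕ} (y : Fin n → ZMod (n + 1)) :
    ∃ c : ℕ, ∀ k ≤ n, SS y c ≤ SS y (c + k) := by
  obtain ⟨c, hc, h⟩ := Finset.exists_min_image (Finset.range (n + 1))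
    (fun c => toLex (SS y c, c)) ⟨0, by simp⟩
  refine ⟨c, fun k hk => ?_⟩
  simp only [Finset.mem_range, Prod.Lex.toLex_le_toLex] at hc h
  by_cases hck : c + k < n + 1
  · have := h _ hck
    omega
  · have h3 := h (c + k - (n + 1)) (by omega)
    have h4 := SS_period y (c + k - (n + 1))
    rw [show c + k - (n + 1) + (n + 1) = c + k by omega] at h4
    omega

/-- For every `n ≥ 1`, the number of parking functions of length `n` is `(n+1)^(n-1)`. -/
theorem card_parkingFunctions (n : ℕ) (hn : 1 ≤ n) :
    Nat.card {x : Fin n → Fin n // IsParkingFunction x} = (n + 1) ^ (n - 1) := by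
  rw [Nat.card_congr (pfEquiv n)]
  let F : {y : Fin n → ZMod (n + 1) // PQ y} × ZMod (n + 1) → (Fin n → ZMod (n + 1)) :=
    fun p i => p.1.1 i + p.2
  have hF : Function.Bijective F := by
    constructor
    · rintro ⟨⟨y, hy⟩, c⟩ ⟨⟨z, hz⟩, d⟩ h
      have hy' : y = fun i => F (⟨y, hy⟩, c) i - ((c.val : ℕ) : ZMod (n + 1)) := by
        ext i; simp [F]
      have hz' : z = fun i => F (⟨y, hy⟩, c) i - ((d.val : ℕ) : ZMod (n + 1)) := by
        rw [h]; ext i; simp [F]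
      have h1 := hy
      have h2 := hz
      rw [hy', PQ_iff] at h1
      rw [hz', PQ_iff] at h2
      have hcd : c = d := by
        rcases lt_trichotomy c.val d.val with hlt | heq | hlt
        · exact (PQ_unique _ _ _ hlt (ZMod.val_lt d) h1 h2).elim
        · exact ZMod.val_injective _ heq
        · exact (PQ_unique _ _ _ hlt (ZMod.val_lt c) h2 h1).elim
      have hyz : y = z := by
        rw [hy', hz', hcd]
      subst hcd
      subst hyz
      rfl
    · intro y
      obtain ⟨c, hc⟩ := PQ_exists y
      refine ⟨(⟨_, (PQ_iff y c).2 hc⟩, (c : ZMod (n + 1))), ?_⟩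
      ext i
      simp [F]
  have h := Nat.card_congr (Equiv.ofBijective F hF)
  rw [Nat.card_prod, Nat.card_fun, Nat.card_zmod, Nat.card_fin] at h
  obtain ⟨m, rfl⟩ : ∃ m, n = m + 1 := ⟨n - 1, by omega⟩
  rw [pow_succ] at h
  exact Nat.eq_of_mul_eq_mul_right (by omega) h
end

section
/- (Pollak) For every integer n ≥ 1, the map from PF_n to (Z_{n+1})^(n−1) sending (x_1,…,x_n) to (x_2 − x_1 mod (n+1), x_3 − x_2 mod (n+1), …, x_n − x_{n−1} mod (n+1)) is a bijection. -/
open Finset in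
theorem park_iff {n : ℕ} (x : Fin n → Fin n) :
    IsParkingFunction x ↔ ∀ k ≤ n, k ≤ #{i : Fin n | (x i : ℕ) < k} := by
  constructor
  · rintro ⟨σ, -, h⟩ k hk
    have h1 : #{j : Fin n | (j : ℕ) < k} = k := by
      rw [Fin.card_filter_val_lt]; omega
    calc k = #(({j : Fin n | (j : ℕ) < k} : Finset (Fin n)).map σ.toEmbedding) := by
          rw [card_map, h1]
      _ ≤ _ := by
          apply card_le_card
          intro a ha
          simp only [mem_map, mem_filter, mem_univ, true_and] at ha ⊢
          obtain ⟨j, hj, rfl⟩ := ha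
          exact lt_of_le_of_lt (h j) hj
  · intro h
    refine ⟨Tuple.sort x, Tuple.monotone_sort x, fun i => ?_⟩
    by_contra hlt
    push Not at hlt
    have h2 := h (i + 1) i.isLt
    have h1 : #{j : Fin n | (j : ℕ) < (i : ℕ)} = i := by
      rw [Fin.card_filter_val_lt]; have := i.isLt; omega
    have h3 : #{j : Fin n | (x j : ℕ) < (i : ℕ) + 1} ≤
        #(({j : Fin n | (j : ℕ) < i} : Finset (Fin n)).map (Tuple.sort x).toEmbedding) := by
      apply card_le_card
      intro a ha
      simp only [mem_map, mem_filter, mem_univ, true_and] at ha ⊢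
      refine ⟨(Tuple.sort x).symm a, ?_, by simp⟩
      by_contra hle
      push Not at hle
      have := Tuple.monotone_sort x (show i ≤ (Tuple.sort x).symm a from hle)
      simp only [Function.comp, Equiv.apply_symm_apply] at this
      have : (x (Tuple.sort x i) : ℕ) ≤ x a := this
      omega
    rw [card_map, h1] at h3
    omega

open Finset in
/-- partial sums of (multiplicity - 1) -/
def pollS {n : ℕ} (y : Fin n → ZMod (n + 1)) (m : ℕ) : ℤ :=
  ∑ t ∈ range m, ((#{i : Fin n | y i = (t : ZMod (n + 1))} : ℤ) - 1)

open Finset in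
theorem pollS_add {n : ℕ} (y : Fin n → ZMod (n + 1)) (c k : ℕ) (hk : k ≤ n + 1) :
    pollS y (c + k) = pollS y c + #{i : Fin n | (y i - (c : ZMod (n + 1))).val < k} - k := by
  have h : #{i : Fin n | (y i - (c : ZMod (n + 1))).val < k}
      = ∑ t ∈ range k, #{i : Fin n | y i = ((c + t : ℕ) : ZMod (n + 1))} := by
    rw [card_eq_sum_card_fiberwise (f := fun i => (y i - (c : ZMod (n + 1))).val) (t := range k)]
    · apply sum_congr rfl
      intro t ht
      have ht' : t < k := mem_range.1 ht
      congr 1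
      ext i
      simp only [mem_filter, mem_univ, true_and]
      constructor
      · rintro ⟨_, h⟩
        rw [← h]; push_cast; rw [ZMod.natCast_zmod_val]; ring
      · intro h
        have : (y i - (c : ZMod (n + 1))).val = t := by
          rw [h]; push_cast; rw [add_sub_cancel_left, ZMod.val_natCast, Nat.mod_eq_of_lt (by omega)]
        exact ⟨by omega, this⟩
    · intro i hi
      simpa using hi
  rw [h]
  unfold pollS
  rw [sum_range_add, sum_sub_distrib (s := range k)]
  push_cast
  simp
  ring

theorem pollS_period {n : ℕ} (y : Fin n → ZMod (n + 1)) (c : ℕ) :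
    pollS y (c + (n + 1)) = pollS y c - 1 := by
  rw [pollS_add y c (n + 1) le_rfl]
  have : ∀ i, (y i - (c : ZMod (n + 1))).val < n + 1 := fun i => ZMod.val_lt _
  simp [this]
  ring

open Finset in
/-- shift by `c` is a parking function -/
def PGood {n : ℕ} (y : Fin n → ZMod (n + 1)) (c : ZMod (n + 1)) : Prop :=
  ∀ k ≤ n, k ≤ #{i : Fin n | (y i - c).val < k}

theorem pgood_iff {n : ℕ} (y : Fin n → ZMod (n + 1)) (c : ℕ) :
    PGood y (c : ZMod (n + 1)) ↔ ∀ k ≤ n, pollS y c ≤ pollS y (c + k) := by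
  unfold PGood
  refine forall₂_congr fun k hk => ?_
  rw [pollS_add y c k (by omega)]
  omega

theorem pgood_exists {n : ℕ} (y : Fin n → ZMod (n + 1)) : ∃ c, PGood y c := by
  have hm : ∃ c, c < n + 1 ∧ ∀ d < n + 1, pollS y c ≤ pollS y d := by
    obtain ⟨c, hc, h⟩ := Finset.exists_min_image (Finset.range (n + 1)) (pollS y) ⟨0, by simp⟩
    exact ⟨c, by simpa using hc, fun d hd => h d (by simpa using hd)⟩
  classical
  obtain ⟨hc, hmin⟩ := Nat.find_spec hm
  have hfirst := fun d => @Nat.find_min _ _ hm d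
  generalize Nat.find hm = c at *
  refine ⟨(c : ZMod (n + 1)), (pgood_iff y c).2 fun k hk => ?_⟩
  by_cases h : c + k < n + 1
  · exact hmin _ h
  · obtain ⟨d, hd⟩ : ∃ d, c + k = d + (n + 1) := ⟨c + k - (n + 1), by omega⟩
    rw [hd, pollS_period]
    by_contra hlt
    apply hfirst d (by omega)
    refine ⟨by omega, fun e he => ?_⟩
    have := hmin e he
    omega

theorem pgood_lt {n : ℕ} (y : Fin n → ZMod (n + 1)) (c d : ℕ) (hcd : c < d) (hd : d < n + 1)
    (h1 : PGood y (c : ZMod (n + 1))) (h2 : PGood y (d : ZMod (n + 1))) : False := by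
  rw [pgood_iff] at h1 h2
  have a := h1 (d - c) (by omega)
  have b := h2 (c + (n + 1) - d) (by omega)
  rw [show c + (d - c) = d by omega] at a
  rw [show d + (c + (n + 1) - d) = c + (n + 1) by omega, pollS_period] at b
  omega

theorem pgood_unique {n : ℕ} (y : Fin n → ZMod (n + 1)) (c d : ZMod (n + 1))
    (h1 : PGood y c) (h2 : PGood y d) : c = d := by
  have hc := ZMod.val_lt c
  have hd := ZMod.val_lt d
  rw [← ZMod.natCast_zmod_val c] at h1
  rw [← ZMod.natCast_zmod_val d] at h2
  rcases lt_trichotomy c.val d.val with h | h | h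
  · exact (pgood_lt y _ _ h hd h1 h2).elim
  · exact ZMod.val_injective _ h
  · exact (pgood_lt y _ _ h hc h2 h1).elim

theorem park_good {n : ℕ} (x : Fin n → Fin n) (y : Fin n → ZMod (n + 1)) (c : ZMod (n + 1))
    (h : ∀ i, y i - c = ((x i : ℕ) : ZMod (n + 1))) : IsParkingFunction x ↔ PGood y c := by
  rw [park_iff]
  unfold PGood
  have : ∀ i, (y i - c).val = (x i : ℕ) := fun i => by
    rw [h, ZMod.val_natCast, Nat.mod_eq_of_lt (by have := (x i).isLt; omega)]
  simp only [this]

/-- (Pollak) For every `n ≥ 1`, the map `PF_n → (ℤ/(n+1))^(n-1)` sending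
`(x_1,…,x_n)` to `(x_2 - x_1, …, x_n - x_{n-1})` (differences mod `n+1`) is a bijection. -/
theorem pollak_bijection (n : ℕ) (hn : 1 ≤ n) :
    Function.Bijective
      (fun x : {x : Fin n → Fin n // IsParkingFunction x} =>
        fun i : Fin (n - 1) =>
          (((x.1 ⟨(i : ℕ) + 1, by have := i.isLt; omega⟩ : Fin n) : ℕ) : ZMod (n + 1)) -
            (((x.1 ⟨(i : ℕ), by have := i.isLt; omega⟩ : Fin n) : ℕ) : ZMod (n + 1))) := by
  constructor
  · rintro ⟨x, hx⟩ ⟨x', hx'⟩ he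
    have hs : ∀ (m : ℕ) (hm : m < n), ((x ⟨m, hm⟩ : ℕ) : ZMod (n + 1)) - ((x' ⟨m, hm⟩ : ℕ))
        = ((x ⟨0, hn⟩ : ℕ) : ZMod (n + 1)) - ((x' ⟨0, hn⟩ : ℕ)) := by
      intro m
      induction m with
      | zero => intro _; rfl
      | succ m ih =>
        intro hm
        rw [← ih (by omega)]
        have := congrFun he ⟨m, by omega⟩
        simp only at this
        linear_combination this
    have g1 := (park_good x (fun i => ((x i : ℕ) : ZMod (n + 1))) 0 (by simp)).1 hx
    have g2 := (park_good x' (fun i => ((x i : ℕ) : ZMod (n + 1)))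
      (((x ⟨0, hn⟩ : ℕ) : ZMod (n + 1)) - ((x' ⟨0, hn⟩ : ℕ))) (fun i => by
        rw [← hs i.1 i.2]; simp)).1 hx'
    have g := pgood_unique _ _ _ g1 g2
    apply Subtype.ext
    funext i
    have h := hs i.1 i.2
    rw [← g, sub_eq_zero] at h
    have h := congrArg ZMod.val h
    rw [ZMod.val_natCast, ZMod.val_natCast, Nat.mod_eq_of_lt (by have := (x i).isLt; omega),
      Nat.mod_eq_of_lt (by have := (x' i).isLt; omega)] at h
    exact Fin.ext h
  · intro d
    let y : Fin n → ZMod (n + 1) := fun i =>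
      ∑ j ∈ Finset.range i, if h : j < n - 1 then d ⟨j, h⟩ else 0
    obtain ⟨c, hc⟩ := pgood_exists y
    have hlt : ∀ i, (y i - c).val < n := by
      intro i
      have h := hc n le_rfl
      have h' := Finset.eq_univ_of_card _ (le_antisymm (Finset.card_le_univ _)
        (by simpa using h : Fintype.card (Fin n) ≤ _))
      have := Finset.mem_univ i
      rw [← h'] at this
      simpa using this
    have hx : ∀ i, y i - c = (((⟨(y i - c).val, hlt i⟩ : Fin n) : ℕ) : ZMod (n + 1)) := by
      intro i; simp
    refine ⟨⟨fun i => ⟨(y i - c).val, hlt i⟩, (park_good _ y c hx).2 hc⟩, ?_⟩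
    funext i
    simp only [ZMod.natCast_zmod_val]
    simp [y, Finset.sum_range_succ]
end

section
/- Let n ≥ 1 and let π be a permutation of {1,…,n} whose cycle type has l cycles (fixed points counted as cycles). Then the number of parking functions (x_1,…,x_n) of length n that are fixed by π acting by permutation of coordinates (i.e., x_{π(i)} = x_i for all i, equivalently x is constant on each cycle of π) equals (n+1)^(l−1). -/
open Equiv.Perm in
lemma pf_card_quot {n : ℕ} (π : Equiv.Perm (Fin n)) :
    Nat.card (Quotient (SameCycle.setoid π)) = Multiset.card π.cycleType +
        (Finset.univ.filter fun i : Fin n => π i = i).card := by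
  classical
  let g : Fin n → (π.cycleFactorsFinset ⊕ {i : Fin n // π i = i}) := fun i =>
    if h : π i = i then Sum.inr ⟨i, h⟩ else
      Sum.inl ⟨π.cycleOf i, cycleOf_mem_cycleFactorsFinset_iff.2 (mem_support.2 h)⟩
  have hg : ∀ i j, SameCycle π i j ↔ g i = g j := by
    intro i j
    by_cases hi : π i = i <;> by_cases hj : π j = j
    · simp only [g, hi, hj, dif_pos, Sum.inr.injEq, Subtype.mk.injEq]
      constructor
      · intro h
        exact h.eq_of_left hi
      · rintro rfl; exact SameCycle.refl _ _
    · simp only [g, hi, hj, dif_pos, dif_neg, not_false_eq_true, reduceCtorEq, iff_false]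
      intro h
      exact hj (h.apply_eq_self_iff.1 hi)
    · simp only [g, hi, hj, dif_pos, dif_neg, not_false_eq_true, reduceCtorEq, iff_false]
      intro h
      exact hi (h.apply_eq_self_iff.2 hj)
    · simp only [g, hi, hj, dif_neg, not_false_eq_true, Sum.inl.injEq, Subtype.mk.injEq]
      exact sameCycle_iff_cycleOf_eq_of_mem_support (mem_support.2 hi) (mem_support.2 hj)
  have hcard : Nat.card (Quotient (SameCycle.setoid π)) =
      Nat.card (π.cycleFactorsFinset ⊕ {i : Fin n // π i = i}) := by
    refine Nat.card_eq_of_bijective (Quotient.lift g fun a b h => (hg a b).1 h) ⟨?_, ?_⟩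
    · intro a b
      induction a using Quotient.inductionOn
      induction b using Quotient.inductionOn
      intro h
      exact Quotient.sound ((hg _ _).2 h)
    · rintro (⟨c, hc⟩ | ⟨i, hi⟩)
      · obtain ⟨a, ha⟩ := (mem_cycleFactorsFinset_iff.1 hc).1.nonempty_support
        refine ⟨Quotient.mk _ a, ?_⟩
        have h1 := cycle_is_cycleOf ha hc
        have h2 : ¬ π a = a := mem_support.1 (mem_cycleFactorsFinset_support_le hc ha)
        simp [g, h2, ← h1]
      · exact ⟨Quotient.mk _ i, by simp [g, hi]⟩
  rw [hcard, Nat.card_sum, cycleType_def, Multiset.card_map]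
  simp [Fintype.card_subtype]

open Equiv.Perm in
lemma pf_card_fixed {n : ℕ} (π : Equiv.Perm (Fin n)) (β : Type) :
    Nat.card {f : Fin n → β // ∀ i, f (π i) = f i} =
      Nat.card β ^ Nat.card (Quotient (SameCycle.setoid π)) := by
  rw [← Nat.card_fun]
  have key : ∀ f : Fin n → β, (∀ i, f (π i) = f i) → ∀ a b, SameCycle π a b → f a = f b := by
    intro f hf a b hab
    obtain ⟨m, rfl⟩ := hab.exists_nat_pow_eq
    induction m with
    | zero => simp
    | succ m ih => 
      rw [pow_succ', mul_apply, hf]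
      exact ih (by exact ⟨m, by simp⟩)
  refine Nat.card_congr
    { toFun := fun f => Quotient.lift f.1 (fun a b h => key f.1 f.2 a b h)
      invFun := fun h => ⟨fun i => h (Quotient.mk _ i), fun i => by
        exact congrArg h (Quotient.sound (s := SameCycle.setoid π) (sameCycle_apply_left.2 (SameCycle.refl _ _)))⟩
      left_inv := fun f => rfl
      right_inv := fun h => by
        funext q
        induction q using Quotient.inductionOn
        rfl }

lemma pf_cycle (N : ℕ) (hN : 0 < N) (S : ℕ → ℤ) (hS : ∀ m, S (m + N) = S m - 1) :
    ∃ c < N, (∀ k < N, S c ≤ S (c + k)) ∧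
      ∀ c' < N, (∀ k < N, S c' ≤ S (c' + k)) → c' = c := by
  classical
  have hex : ∃ c, c < N ∧ ∀ j < N, S c ≤ S j := by
    obtain ⟨c, hc, h⟩ := Finset.exists_min_image (Finset.range N) S ⟨0, by simpa⟩
    exact ⟨c, by simpa using hc, fun j hj => h j (by simpa)⟩
  obtain ⟨h1, h2⟩ := Nat.find_spec hex
  have h3 := fun j => @Nat.find_min _ _ hex j
  set c := Nat.find hex
  have good : ∀ k < N, S c ≤ S (c + k) := by
    intro k hk
    by_cases h : c + k < N
    · exact h2 _ h
    · have e : c + k = (c + k - N) + N := by omega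
      rw [e, hS]
      have := h3 (c + k - N) (by omega)
      have hlt : S c < S (c + k - N) := by
        by_contra hle
        exact this ⟨by omega, fun j hj => (not_lt.1 hle).trans (h2 j hj)⟩
      omega
  have uniq : ∀ a b, a < b → b < N → (∀ k < N, S a ≤ S (a + k)) →
      (∀ k < N, S b ≤ S (b + k)) → False := by
    intro a b hab hb ha' hb'
    have e1 := ha' (b - a) (by omega)
    have e2 := hb' (a + N - b) (by omega)
    rw [show a + (b - a) = b by omega] at e1
    rw [show b + (a + N - b) = a + N by omega, hS] at e2
    omega
  refine ⟨c, h1, good, fun c' hc' hg => ?_⟩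
  rcases lt_trichotomy c' c with h | h | h
  · exact (uniq _ _ h h1 hg good).elim
  · exact h
  · exact (uniq _ _ h hc' good hg).elim

def PFGood {n : ℕ} (g : Fin n → ZMod (n + 1)) : Prop :=
  ∀ k ≤ n, k ≤ (Finset.univ.filter fun i => (g i).val < k).card

lemma pf_count {n : ℕ} (f : Fin n → ZMod (n + 1)) (c k : ℕ) (hk : k ≤ n + 1) :
    (Finset.univ.filter fun i => (f i - (c : ZMod (n + 1))).val < k).card =
      ∑ j ∈ Finset.range k,
        (Finset.univ.filter fun i => f i = ((c + j : ℕ) : ZMod (n + 1))).card := by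
  rw [Finset.card_eq_sum_card_fiberwise (f := fun i => (f i - (c : ZMod (n + 1))).val)
    (t := Finset.range k) (by intro i; simp)]
  refine Finset.sum_congr rfl fun j hj => ?_
  congr 1
  ext i
  have hj' : j < k := by simpa using hj
  simp only [Finset.mem_filter, Finset.mem_univ, true_and]
  constructor
  · rintro ⟨_, h⟩
    have := ZMod.natCast_zmod_val (f i - (c : ZMod (n + 1)))
    rw [h] at this
    push_cast
    rw [this]; ring
  · intro h
    have : (f i - (c : ZMod (n + 1))) = ((j : ℕ) : ZMod (n + 1)) := by
      rw [h]; push_cast; ring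
    rw [this, ZMod.val_cast_of_lt (by omega)]
    exact ⟨hj', rfl⟩

lemma pf_unique {n : ℕ} (f : Fin n → ZMod (n + 1)) :
    ∃! c : ZMod (n + 1), PFGood (fun i => f i - c) := by
  let d : ℕ → ℤ := fun j =>
    ((Finset.univ.filter fun i => f i = ((j : ℕ) : ZMod (n + 1))).card : ℤ) - 1
  let S : ℕ → ℤ := fun m => ∑ j ∈ Finset.range m, d j
  have hadd : ∀ c k, k ≤ n + 1 → S (c + k) = S c +
      ((Finset.univ.filter fun i => (f i - (c : ZMod (n + 1))).val < k).card : ℤ) - k := by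
    intro c k hk
    rw [pf_count f c k hk]
    simp only [S, Finset.sum_range_add, d]
    simp only [Finset.sum_sub_distrib]
    push_cast
    simp
    ring
  have hper : ∀ m, S (m + (n + 1)) = S m - 1 := by
    intro m
    rw [hadd m _ le_rfl, Finset.filter_true_of_mem (fun i _ => ZMod.val_lt _)]
    simp
    ring
  have hgood : ∀ c : ℕ, PFGood (fun i => f i - (c : ZMod (n + 1))) ↔
      ∀ k < n + 1, S c ≤ S (c + k) := by
    intro c
    unfold PFGood
    refine forall_congr' fun k => ?_
    rw [Nat.lt_succ_iff]
    refine imp_congr_right fun hk => ?_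
    rw [hadd c k (by omega)]
    dsimp only
    omega
  obtain ⟨c, hc, h1, h2⟩ := pf_cycle (n + 1) (by omega) S hper
  refine ⟨(c : ZMod (n + 1)), (hgood c).2 h1, fun b hb => ?_⟩
  have hb' : PFGood (fun i => f i - ((b.val : ℕ) : ZMod (n + 1))) := by
    rw [ZMod.natCast_zmod_val]; exact hb
  rw [← h2 b.val (ZMod.val_lt b) ((hgood _).1 hb'), ZMod.natCast_zmod_val]

lemma pf_iff_s3 {n : ℕ} (x : Fin n → Fin n) :
    IsParkingFunction x ↔ PFGood (fun i => (((x i : ℕ)) : ZMod (n + 1))) := by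
  have hv : ∀ i, ((((x i : ℕ)) : ZMod (n + 1))).val = x i := fun i =>
    ZMod.val_cast_of_lt (by omega)
  simp only [PFGood, hv]
  constructor
  · rintro ⟨σ, -, h⟩ k hk
    calc k = ((Finset.univ.filter fun i : Fin n => (i : ℕ) < k).map σ.toEmbedding).card := by
          rw [Finset.card_map, Fin.card_filter_val_lt]; omega
      _ ≤ _ := by
          apply Finset.card_le_card
          intro a
          simp only [Finset.mem_map, Finset.mem_filter, Finset.mem_univ, true_and]
          rintro ⟨i, hi, rfl⟩
          exact (h i).trans_lt hi
  · intro h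
    refine ⟨Tuple.sort x, Tuple.monotone_sort x, fun i => ?_⟩
    by_contra hlt
    push Not at hlt
    have h1 := h (i + 1) (by omega)
    have h2 : (Finset.univ.filter fun j => (x j : ℕ) < i + 1).card ≤
        ((Finset.univ.filter fun j : Fin n => (j : ℕ) < i).map
          (Tuple.sort x).toEmbedding).card := by
      apply Finset.card_le_card
      intro a
      simp only [Finset.mem_map, Finset.mem_filter, Finset.mem_univ, true_and]
      intro ha
      refine ⟨(Tuple.sort x).symm a, ?_, by simp⟩
      by_contra hge
      have h3 : x (Tuple.sort x i) ≤ x (Tuple.sort x ((Tuple.sort x).symm a)) :=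
        Tuple.monotone_sort x (by rw [Fin.le_def]; omega)
      rw [Equiv.apply_symm_apply, Fin.le_def] at h3
      omega
    rw [Finset.card_map, Fin.card_filter_val_lt] at h2
    omega

lemma pf_good_lt {n : ℕ} {g : Fin n → ZMod (n + 1)} (h : PFGood g) (i : Fin n) :
    (g i).val < n := by
  have h1 := h n le_rfl
  have h2 : (Finset.univ.filter fun i => (g i).val < n) = Finset.univ := by
    apply Finset.eq_univ_of_card
    apply le_antisymm (Finset.card_le_univ _)
    simpa using h1
  have : i ∈ (Finset.univ.filter fun i => (g i).val < n) := by rw [h2]; simp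
  simpa using this

theorem card_fixed_parkingFunctions (n : ℕ) (hn : 1 ≤ n) (π : Equiv.Perm (Fin n)) (l : ℕ)
    (hl : l = Multiset.card π.cycleType +
        (Finset.univ.filter fun i : Fin n => π i = i).card) :
    Nat.card {x : Fin n → Fin n // IsParkingFunction x ∧ ∀ i, x (π i) = x i} =
      (n + 1) ^ (l - 1) := by
  have hA := pf_card_fixed π (ZMod (n + 1))
  have hB := pf_card_quot π
  rw [hB, ← hl, Nat.card_zmod] at hA
  have hpos : 0 < l := by
    rw [hl, ← hB]
    have : Nonempty (Quotient (Equiv.Perm.SameCycle.setoid π)) := ⟨Quotient.mk _ ⟨0, hn⟩⟩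
    exact Nat.card_pos
  have hC : Nat.card ({x : Fin n → Fin n // IsParkingFunction x ∧ ∀ i, x (π i) = x i} ×
      ZMod (n + 1)) = Nat.card {f : Fin n → ZMod (n + 1) // ∀ i, f (π i) = f i} := by
    refine Nat.card_eq_of_bijective
      (fun p => ⟨fun i => ((p.1.1 i : ℕ) : ZMod (n + 1)) + p.2, fun i => by
        simp only [p.1.2.2 i]⟩) ⟨?_, ?_⟩
    · rintro ⟨⟨x, hx, hx'⟩, c⟩ ⟨⟨y, hy, hy'⟩, b⟩ h
      have h : ∀ i, ((x i : ℕ) : ZMod (n + 1)) + c = ((y i : ℕ) : ZMod (n + 1)) + b :=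
        fun i => congrFun (congrArg Subtype.val h) i
      have hcb : c = b := by
        apply (pf_unique (fun i => ((x i : ℕ) : ZMod (n + 1)) + c)).unique
        · simpa using (pf_iff_s3 x).1 hx
        · simp only [h]
          simpa using (pf_iff_s3 y).1 hy
      subst hcb
      have hxy : x = y := by
        funext i
        have := congrArg ZMod.val (add_right_cancel (h i))
        rw [ZMod.val_cast_of_lt (by omega), ZMod.val_cast_of_lt (by omega)] at this
        exact Fin.ext this
      subst hxy
      rfl
    · rintro ⟨f, hf⟩
      obtain ⟨c, hc, -⟩ := pf_unique f
      refine ⟨⟨⟨fun i => ⟨(f i - c).val, pf_good_lt hc i⟩, ?_, ?_⟩, c⟩, ?_⟩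
      · rw [pf_iff_s3]
        simpa only [ZMod.natCast_zmod_val] using hc
      · intro i
        simp only [hf]
      · apply Subtype.ext
        funext i
        simp only [ZMod.natCast_zmod_val]
        ring
  rw [Nat.card_prod, hA, Nat.card_zmod] at hC
  obtain ⟨m, rfl⟩ : ∃ m, l = m + 1 := ⟨l - 1, by omega⟩
  rw [pow_succ] at hC
  simpa using Nat.eq_of_mul_eq_mul_right (by omega) hC
end

section
/- (Konheim–Weiss, Lemma 1) For every integer n ≥ 1, the sum over all permutations π of {1,…,n} of the product ∏_{j=1}^{n} τ_{j,n}(π) equals (n+1)^(n−1), where for a permutation π = (π_1,…,π_n) in one-line notation, τ_{j,n}(π) = max{ k : 1 ≤ k ≤ j and π_j ≥ π_m for all m with j−k+1 ≤ m ≤ j } is the length of the longest block of consecutive positions ending at j on which π_j is the maximum. -/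
/-- For a permutation `π` of `Fin n` (0-indexed one-line notation) and a position `j`,
`tau n π j` is the largest `k` with `1 ≤ k ≤ j+1` such that `π j ≥ π m` for all positions
`m` with `j+1-k ≤ m ≤ j` (this is `τ_{j,n}(π)` in 1-indexed notation: the length of the
longest block of consecutive positions ending at `j` on which `π j` is the maximum).
Since the set of such `k` is a nonempty finite set of naturals, its maximum is its `sup`. -/
def tau (n : ℕ) (π : Equiv.Perm (Fin n)) (j : Fin n) : ℕ :=
  ((Finset.Icc 1 ((j : ℕ) + 1)).filter
    (fun k => ∀ m : Fin n, (j : ℕ) + 1 - k ≤ (m : ℕ) → (m : ℕ) ≤ (j : ℕ) → π m ≤ π j)).sup id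

open Classical in
/-- `Parks S p j`: starting at `p` and moving cyclically, the first spot not in `S` is `j`. -/
def KWParks {n : ℕ} (S : Set (Fin (n+1))) (p j : Fin (n+1)) : Prop :=
  ∃ d : ℕ, j = p + Fin.ofNat (n+1) d ∧ j ∉ S ∧ ∀ e < d, p + Fin.ofNat (n+1) e ∈ S

open Classical in
noncomputable def kwR {n : ℕ} (S : Set (Fin (n+1))) (j : Fin (n+1)) : ℕ :=
  (Finset.univ.filter (fun p => KWParks S p j)).card

noncomputable def kwW {n k : ℕ} (f : Fin k → Fin (n+1)) : ℕ :=
  ∏ i, kwR (f '' {i' | i' < i}) (f i)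

theorem kwParks_unique {n : ℕ} (S : Set (Fin (n+1))) (hS : ∃ x, x ∉ S) (p : Fin (n+1)) :
    ∃! j, KWParks S p j := by
  classical
  have hex : ∃ d : ℕ, p + Fin.ofNat (n+1) d ∉ S := by
    obtain ⟨x, hx⟩ := hS
    refine ⟨(x - p).val, ?_⟩
    have : Fin.ofNat (n+1) (x - p).val = x - p := by
      ext; simp [Fin.ofNat, Nat.mod_eq_of_lt (x - p).isLt]
    rw [this]
    simpa using hx
  refine ⟨p + Fin.ofNat (n+1) (Nat.find hex), ⟨Nat.find hex, rfl, Nat.find_spec hex, ?_⟩, ?_⟩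
  · intro e he
    have := Nat.find_min hex he
    simpa using this
  · rintro j ⟨d, rfl, h1, h2⟩
    have : Nat.find hex = d := by
      rw [Nat.find_eq_iff]
      exact ⟨h1, fun e he => by simpa using h2 e he⟩
    rw [this]

theorem kwR_sum {n : ℕ} (S : Set (Fin (n+1))) (hS : ∃ x, x ∉ S) :
    ∑ j, kwR S j = n + 1 := by
  classical
  have h := Finset.sum_card_bipartiteAbove_eq_sum_card_bipartiteBelow
    (s := (Finset.univ : Finset (Fin (n+1)))) (t := (Finset.univ : Finset (Fin (n+1))))
    (fun j p => KWParks S p j)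
  have h2 : ∀ p : Fin (n+1), (Finset.univ.filter (fun j => KWParks S p j)).card = 1 := by
    intro p
    rw [Finset.card_eq_one]
    obtain ⟨j, hj, hu⟩ := kwParks_unique S hS p
    refine ⟨j, ?_⟩
    ext x
    simp only [Finset.mem_filter, Finset.mem_univ, true_and, Finset.mem_singleton]
    exact ⟨fun hx => hu x hx, fun hx => hx ▸ hj⟩
  simp only [Finset.bipartiteAbove, Finset.bipartiteBelow] at h
  unfold kwR
  rw [h, Finset.sum_congr rfl (fun p _ => h2 p)]
  simp

theorem kwR_zero {n : ℕ} (S : Set (Fin (n+1))) (j : Fin (n+1)) (hj : j ∈ S) : kwR S j = 0 := by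
  classical
  unfold kwR
  rw [Finset.card_eq_zero, Finset.filter_eq_empty_iff]
  rintro p - ⟨d, -, h, -⟩
  exact h hj

theorem kwR_shift {n : ℕ} (S T : Set (Fin (n+1))) (j t : Fin (n+1))
    (hT : ∀ x, x + t ∈ T ↔ x ∈ S) : kwR T (j + t) = kwR S j := by
  classical
  unfold kwR
  symm
  refine Finset.card_equiv (Equiv.addRight t) ?_
  intro p
  simp only [Finset.mem_filter, Finset.mem_univ, true_and, Equiv.coe_addRight]
  unfold KWParks
  refine exists_congr fun d => ?_
  have h1 : ∀ e : ℕ, p + t + Fin.ofNat (n+1) e = (p + Fin.ofNat (n+1) e) + t := fun e => by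
    rw [add_right_comm]
  simp only [h1, hT, add_left_inj]

theorem kwW_sum (n k : ℕ) (hk : k ≤ n + 1) :
    ∑ f : Fin k → Fin (n+1), kwW f = (n+1)^k := by
  induction k with
  | zero => simp [kwW]
  | succ k ih =>
    rw [← (Fin.snocEquiv (fun _ => Fin (n+1))).sum_comp, Fintype.sum_prod_type_right]
    have : ∀ f : Fin k → Fin (n+1),
        ∑ x : Fin (n+1), kwW ((Fin.snocEquiv (fun _ => Fin (n+1))) (x, f)) = kwW f * (n+1) := by
      intro f
      have hx : ∃ x, x ∉ Set.range f := by
        by_contra! h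
        have := Fintype.card_le_of_surjective f h
        simp at this
        omega
      refine Eq.trans ?_ (congrArg (kwW f * ·) (kwR_sum _ hx))
      simp only [Finset.mul_sum]
      refine Finset.sum_congr rfl fun x _ => ?_
      unfold kwW
      rw [Fin.prod_univ_castSucc]
      congr 1
      · refine Finset.prod_congr rfl fun i _ => ?_
        simp only [Fin.snocEquiv, Equiv.coe_fn_mk, Fin.snoc_castSucc]
        congr 1
        ext y
        constructor
        · rintro ⟨i', hi', rfl⟩
          induction i' using Fin.lastCases with
          | last => exact absurd hi' (by simp [Fin.le_last])
          | cast i' => exact ⟨i', by simpa using hi', by simp⟩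
        · rintro ⟨i', hi', rfl⟩
          exact ⟨i'.castSucc, by simpa using hi', by simp⟩
      · simp only [Fin.snocEquiv, Equiv.coe_fn_mk, Fin.snoc_last]
        congr 1
        ext y
        constructor
        · rintro ⟨i', hi', rfl⟩
          induction i' using Fin.lastCases with
          | last => exact absurd hi' (by simp)
          | cast i' => exact ⟨i', by simp⟩
        · rintro ⟨i', rfl⟩
          exact ⟨i'.castSucc, by simp [Fin.castSucc_lt_last], by simp⟩
    rw [Finset.sum_congr rfl (fun f _ => this f), ← Finset.sum_mul, ih (by omega), pow_succ]

theorem kwW_inj {n k : ℕ} (f : Fin k → Fin (n+1)) (h : kwW f ≠ 0) : Function.Injective f := by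
  have key : ∀ i i', i' < i → f i' ≠ f i := by
    intro i i' hi he
    apply h
    unfold kwW
    exact Finset.prod_eq_zero (Finset.mem_univ i) (kwR_zero _ _ ⟨i', hi, he⟩)
  intro a b hab
  rcases lt_trichotomy a b with h1 | h1 | h1
  · exact absurd hab (key _ _ h1)
  · exact h1
  · exact absurd hab.symm (key _ _ h1)

theorem kwW_shift {n k : ℕ} (f : Fin k → Fin (n+1)) (t : Fin (n+1)) :
    kwW (fun i => f i + t) = kwW f := by
  unfold kwW
  refine Finset.prod_congr rfl fun i _ => kwR_shift _ _ _ _ fun x => ?_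
  simp

open Classical in
theorem kw_last (n : ℕ) :
    (n+1) * ∑ f : Fin n → Fin (n+1), (if Fin.last n ∉ Set.range f then kwW f else 0)
      = (n+1)^n := by
  have h1 : ∀ c : Fin (n+1),
      ∑ f : Fin n → Fin (n+1), (if c ∉ Set.range f then kwW f else 0) =
      ∑ f : Fin n → Fin (n+1), (if Fin.last n ∉ Set.range f then kwW f else 0) := by
    intro c
    refine Fintype.sum_equiv (Equiv.addRight (fun _ => Fin.last n - c)) _ _ fun f => ?_
    have h2 : kwW ((Equiv.addRight (fun _ => Fin.last n - c)) f) = kwW f := kwW_shift f _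
    rw [h2]
    congr 1
    simp only [Set.mem_range, Equiv.coe_addRight, Pi.add_apply, eq_iff_iff, not_iff_not]
    refine exists_congr fun i => ?_
    constructor
    · rintro rfl; simp
    · intro h
      have : f i = Fin.last n - (Fin.last n - c) := eq_sub_of_add_eq h
      simpa using this
  have h2 : ∑ f : Fin n → Fin (n+1), kwW f =
      ∑ f : Fin n → Fin (n+1), ∑ c, (if c ∉ Set.range f then kwW f else 0) := by
    refine Finset.sum_congr rfl fun f _ => ?_
    by_cases h : kwW f = 0
    · simp [h]
    · have hi := kwW_inj f h
      rw [← Finset.sum_filter, Finset.sum_const]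
      have : (Finset.univ.filter (fun c => c ∉ Set.range f)).card = 1 := by
        have e : Finset.univ.filter (fun c => c ∉ Set.range f) = (Finset.univ.image f)ᶜ := by
          ext; simp
        rw [e, Finset.card_compl, Finset.card_image_of_injective _ hi]
        simp
      rw [this, one_smul]
  rw [← kwW_sum n n (by omega), h2, Finset.sum_comm, Finset.sum_congr rfl (fun c _ => h1 c)]
  simp

theorem tau_eq_card (n : ℕ) (π : Equiv.Perm (Fin n)) (j : Fin n) :
    tau n π j = ((Finset.Icc 1 ((j : ℕ) + 1)).filter
    (fun k => ∀ m : Fin n, (j : ℕ) + 1 - k ≤ (m : ℕ) → (m : ℕ) ≤ (j : ℕ) → π m ≤ π j)).card := by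
  unfold tau
  set A := (Finset.Icc 1 ((j : ℕ) + 1)).filter
    (fun k => ∀ m : Fin n, (j : ℕ) + 1 - k ≤ (m : ℕ) → (m : ℕ) ≤ (j : ℕ) → π m ≤ π j) with hA
  have h1 : 1 ∈ A := by
    simp only [hA, Finset.mem_filter, Finset.mem_Icc]
    refine ⟨by omega, fun m h1 h2 => ?_⟩
    have : m = j := by ext; omega
    rw [this]
  obtain ⟨s, hs, hsup⟩ := Finset.exists_mem_eq_sup A ⟨1, h1⟩ id
  have : A = Finset.Icc 1 (A.sup id) := by
    ext k
    rw [Finset.mem_Icc]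
    constructor
    · intro hk
      exact ⟨(Finset.mem_Icc.1 (Finset.mem_filter.1 hk).1).1, Finset.le_sup (f := id) hk⟩
    · rintro ⟨hk1, hk2⟩
      rw [hsup] at hk2
      simp only [id] at hk2
      simp only [hA, Finset.mem_filter, Finset.mem_Icc] at hs ⊢
      exact ⟨by omega, fun m h1 h2 => hs.2 m (by omega) h2⟩
  conv_rhs => rw [this]
  simp

theorem kwParks_iff {n : ℕ} (S : Set (Fin (n+1))) (hS : Fin.last n ∉ S) (p j : Fin (n+1))
    (hj : j ∉ S) :
    KWParks S p j ↔ p ≤ j ∧ ∀ m, p ≤ m → m < j → m ∈ S := by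
  have hv : ∀ e : ℕ, p.val + e ≤ n → (p + Fin.ofNat (n+1) e).val = p.val + e := by
    intro e he
    rw [Fin.val_add]
    simp only [Fin.ofNat]
    rw [Nat.add_mod_mod, Nat.mod_eq_of_lt (by omega)]
  constructor
  · rintro ⟨d, hd, -, h⟩
    have hle : p.val + d ≤ n := by
      by_contra! hlt
      apply hS
      have := h (n - p.val) (by omega)
      have e : p + Fin.ofNat (n+1) (n - p.val) = Fin.last n := by
        ext; rw [hv _ (by omega)]; simp; omega
      rwa [e] at this
    have hjv : j.val = p.val + d := by rw [hd, hv d hle]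
    refine ⟨by rw [Fin.le_def]; omega, fun m h1 h2 => ?_⟩
    rw [Fin.le_def] at h1
    rw [Fin.lt_def] at h2
    have := h (m.val - p.val) (by omega)
    have e : p + Fin.ofNat (n+1) (m.val - p.val) = m := by
      ext; rw [hv _ (by omega)]; omega
    rwa [e] at this
  · rintro ⟨h1, h2⟩
    rw [Fin.le_def] at h1
    refine ⟨j.val - p.val, ?_, hj, fun e he => ?_⟩
    · ext; rw [hv _ (by omega)]; omega
    · apply h2
      · rw [Fin.le_def, hv _ (by omega)]; omega
      · rw [Fin.lt_def, hv _ (by omega)]; omega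

theorem kwR_eq_tau (n : ℕ) (π : Equiv.Perm (Fin n)) (j : Fin n) :
    kwR ((fun i => (π.symm i).castSucc) '' {i' | i' < π j}) j.castSucc = tau n π j := by
  classical
  rw [tau_eq_card]
  set S := (fun i => (π.symm i).castSucc) '' {i' | i' < π j} with hSdef
  have hmem : ∀ m : Fin n, m.castSucc ∈ S ↔ π m < π j := by
    intro m
    constructor
    · rintro ⟨i, hi, he⟩
      have : π.symm i = m := Fin.castSucc_injective _ he
      rw [← this]; simpa using hi
    · intro h
      exact ⟨π m, h, by simp⟩
  have hlast : Fin.last n ∉ S := by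
    rintro ⟨i, hi, he⟩
    exact absurd he (Fin.castSucc_lt_last _).ne
  have hj : j.castSucc ∉ S := by rw [hmem]; simp
  unfold kwR
  refine Finset.card_bij' (fun p _ => j.val + 1 - p.val)
    (fun k _ => Fin.ofNat (n+1) (j.val + 1 - k)) ?_ ?_ ?_ ?_
  · intro p hp
    rw [Finset.mem_filter, kwParks_iff S hlast p _ hj] at hp
    obtain ⟨-, h1, h2⟩ := hp
    rw [Fin.le_def] at h1
    simp only [Fin.val_castSucc] at h1
    simp only [Finset.mem_filter, Finset.mem_Icc]
    refine ⟨by omega, fun m hm1 hm2 => ?_⟩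
    rcases hm2.lt_or_eq with hlt | heq
    · exact ((hmem m).1 (h2 m.castSucc (by rw [Fin.le_def]; simp; omega)
        (by rw [Fin.lt_def]; simpa using hlt))).le
    · have : m = j := Fin.ext heq
      rw [this]
  · intro k hk
    simp only [Finset.mem_filter, Finset.mem_Icc] at hk
    obtain ⟨hk1, hk2⟩ := hk
    have hv : (Fin.ofNat (n+1) (j.val + 1 - k)).val = j.val + 1 - k := by
      simp only [Fin.ofNat]
      exact Nat.mod_eq_of_lt (by omega)
    rw [Finset.mem_filter, kwParks_iff S hlast _ _ hj]
    refine ⟨Finset.mem_univ _, by rw [Fin.le_def, hv]; simp; omega, fun m hm1 hm2 => ?_⟩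
    rw [Fin.le_def, hv] at hm1
    rw [Fin.lt_def, Fin.val_castSucc] at hm2
    have e : m = (⟨m.val, by omega⟩ : Fin n).castSucc := by ext; simp
    rw [e, hmem]
    refine lt_of_le_of_ne (hk2 _ hm1 hm2.le) fun h => ?_
    have := congrArg Fin.val (π.injective h)
    simp at this
    omega
  · intro p hp
    rw [Finset.mem_filter, kwParks_iff S hlast p _ hj] at hp
    obtain ⟨-, h1, -⟩ := hp
    rw [Fin.le_def] at h1
    simp only [Fin.val_castSucc] at h1
    ext
    simp only [Fin.ofNat]
    rw [Nat.mod_eq_of_lt (by omega)]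
    omega
  · intro k hk
    simp only [Finset.mem_filter, Finset.mem_Icc] at hk
    simp only [Fin.ofNat]
    rw [Nat.mod_eq_of_lt (by omega)]
    omega

open Classical in
theorem kw_perm (n : ℕ) :
    ∑ π : Equiv.Perm (Fin n), ∏ j : Fin n, tau n π j =
    ∑ f : Fin n → Fin (n+1), (if Fin.last n ∉ Set.range f then kwW f else 0) := by
  refine Finset.sum_of_injOn (fun π i => (π.symm i).castSucc) ?_ ?_ ?_ ?_
  · intro a _ b _ h
    have : a.symm = b.symm := by
      ext i
      have := congrArg Fin.val (congrFun h i)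
      simpa using this
    simpa using congrArg Equiv.symm this
  · intro _ _; simp
  · intro f _ hf
    by_contra hne
    have hl : Fin.last n ∉ Set.range f := by
      by_contra h; exact hne (by rw [if_neg (not_not.2 h)])
    rw [if_pos hl] at hne
    have hi := kwW_inj f hne
    apply hf
    have hne' : ∀ i, f i ≠ Fin.last n := fun i h => hl ⟨i, h⟩
    have hg : Function.Injective (fun i => (f i).castPred (hne' i)) := by
      intro a b hab
      exact hi (by simpa using hab)
    refine ⟨(Equiv.ofBijective _ (Finite.injective_iff_bijective.1 hg)).symm, by simp, ?_⟩
    funext i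
    simp
  · intro π _
    rw [if_pos]
    · unfold kwW
      refine Fintype.prod_equiv π _ _ fun j => ?_
      rw [← kwR_eq_tau]
      simp
    · rintro ⟨i, hi⟩
      exact absurd hi (Fin.castSucc_lt_last _).ne

/-- (Konheim–Weiss, Lemma 1) For every `n ≥ 1`,
`∑_{π ∈ S_n} ∏_{j=1}^{n} τ_{j,n}(π) = (n+1)^(n-1)`. -/
theorem konheim_weiss_lemma1 (n : ℕ) (hn : 1 ≤ n) :
    ∑ π : Equiv.Perm (Fin n), ∏ j : Fin n, tau n π j = (n + 1) ^ (n - 1) := by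
  classical
  have h := kw_last n
  rw [← kw_perm] at h
  obtain ⟨m, rfl⟩ : ∃ m, n = m + 1 := ⟨n - 1, by omega⟩
  rw [pow_succ' _ m] at h
  exact Nat.eq_of_mul_eq_mul_left (by omega) h
end

section
/- (Konheim–Weiss, Lemma 2) Fix integers 1 ≤ r ≤ n and a cell c ∈ {0,…,n−1}. The number of preference sequences (j_1,…,j_r) ∈ {0,…,n−1}^r such that, after the circular parking procedure on n cells, cell c is unoccupied, equals n^(r−1)·(n−r). -/
/-- Circular parking on `n` cells (the cells are `ZMod n`).  Given the list `js` of
preferred cells of the successive cars, `parkCirc n js` is the list of cells occupied by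
the cars, in order of arrival: car with preference `jk` parks at `jk + s` where `s` is
the smallest nonnegative integer such that `jk + s (mod n)` is not yet occupied
(such an `s < n` exists as long as some cell is free). -/
def parkCirc (n : ℕ) (js : List (ZMod n)) : List (ZMod n) :=
  js.foldl
    (fun prev jk =>
      let s : ℕ :=
        ((List.range n).find? (fun s : ℕ => decide ((jk + (s : ZMod n)) ∉ prev))).getD 0
      prev ++ [jk + (s : ZMod n)])
    []

theorem kw_parkCirc_concat (n : ℕ) (js : List (ZMod n)) (x : ZMod n) :
    parkCirc n (js ++ [x]) = parkCirc n js ++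
      [x + ((((List.range n).find?
        (fun s : ℕ => decide ((x + (s : ZMod n)) ∉ parkCirc n js))).getD 0 : ℕ) : ZMod n)] := by
  simp [parkCirc, List.foldl_append]

theorem kw_length (n : ℕ) (js : List (ZMod n)) : (parkCirc n js).length = js.length := by
  induction js using List.reverseRecOn with
  | nil => rfl
  | append_singleton js x ih => rw [kw_parkCirc_concat]; simp [ih]

theorem kw_shift (n : ℕ) (a : ZMod n) (js : List (ZMod n)) :
    parkCirc n (js.map (fun x => x + a)) = (parkCirc n js).map (fun x => x + a) := by
  induction js using List.reverseRecOn with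
  | nil => rfl
  | append_singleton js x ih =>
    have h : ∀ s : ℕ, (x + a + (s : ZMod n) ∉ (parkCirc n js).map (fun x => x + a)) ↔
        (x + (s : ZMod n) ∉ parkCirc n js) := by
      intro s
      rw [add_right_comm, List.mem_map_of_injective (add_left_injective a)]
    rw [List.map_append, List.map_singleton, kw_parkCirc_concat, kw_parkCirc_concat, ih]
    simp only [h, List.map_append, List.map_singleton]
    rw [add_right_comm]

theorem kw_nodup (n : ℕ) [NeZero n] (js : List (ZMod n)) (hl : js.length ≤ n) :
    (parkCirc n js).Nodup := by
  induction js using List.reverseRecOn with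
  | nil => simp [parkCirc]
  | append_singleton js x ih =>
    simp only [List.length_append, List.length_singleton] at hl
    have ih := ih (by omega)
    rw [kw_parkCirc_concat]
    cases hf : (List.range n).find? (fun s : ℕ => decide ((x + (s : ZMod n)) ∉ parkCirc n js)) with
    | some s =>
      have := List.find?_some hf
      simp only [decide_eq_true_eq] at this
      rw [← List.concat_eq_append]
      exact ih.concat this
    | none =>
      exfalso
      rw [List.find?_eq_none] at hf
      have hall : ∀ y : ZMod n, y ∈ parkCirc n js := by
        intro y
        have := hf (y - x).val (List.mem_range.2 (ZMod.val_lt _))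
        simpa using this
      have h1 : (Finset.univ : Finset (ZMod n)) ⊆ (parkCirc n js).toFinset := by
        intro y _
        simpa using hall y
      have h2 := Finset.card_le_card h1
      have h3 := List.toFinset_card_le (parkCirc n js)
      rw [kw_length] at h3
      rw [Finset.card_univ, ZMod.card] at h2
      omega

theorem konheim_weiss_lemma2 (n r : ℕ) (hr1 : 1 ≤ r) (hrn : r ≤ n) (c : ZMod n) :
    Nat.card {j : Fin r → ZMod n // c ∉ parkCirc n (List.ofFn j)} =
      n ^ (r - 1) * (n - r) := by
  classical
  haveI : NeZero n := ⟨by omega⟩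
  have hconst : ∀ d : ZMod n,
      Nat.card {j : Fin r → ZMod n // d ∉ parkCirc n (List.ofFn j)} =
      Nat.card {j : Fin r → ZMod n // c ∉ parkCirc n (List.ofFn j)} := by
    intro d
    refine Nat.card_congr
      (Equiv.subtypeEquiv (Equiv.addRight (fun _ : Fin r => c - d)) ?_)
    intro j
    have h1 : List.ofFn ((Equiv.addRight (fun _ : Fin r => c - d)) j) =
        (List.ofFn j).map (fun x => x + (c - d)) := by
      rw [List.map_ofFn]; rfl
    rw [h1, kw_shift]
    have h2 := List.mem_map_of_injective (add_left_injective (c - d))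
      (a := d) (l := parkCirc n (List.ofFn j))
    rw [add_sub_cancel] at h2
    rw [h2]
  have hsum : ∑ d : ZMod n, Nat.card {j : Fin r → ZMod n // d ∉ parkCirc n (List.ofFn j)} =
      n ^ r * (n - r) := by
    simp_rw [Nat.card_eq_fintype_card, Fintype.card_subtype]
    have := Finset.sum_card_bipartiteAbove_eq_sum_card_bipartiteBelow
      (s := (Finset.univ : Finset (ZMod n))) (t := (Finset.univ : Finset (Fin r → ZMod n)))
      (fun d j => d ∉ parkCirc n (List.ofFn j))
    unfold Finset.bipartiteAbove Finset.bipartiteBelow at this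
    rw [this]
    have hc : ∀ j : Fin r → ZMod n,
        (Finset.univ.filter (fun d : ZMod n => d ∉ parkCirc n (List.ofFn j))).card = n - r := by
      intro j
      have he : Finset.univ.filter (fun d : ZMod n => d ∉ parkCirc n (List.ofFn j)) =
          (parkCirc n (List.ofFn j)).toFinsetᶜ := by
        ext; simp
      rw [he, Finset.card_compl, ZMod.card,
        List.toFinset_card_of_nodup (kw_nodup n _ (by simpa using hrn)), kw_length,
        List.length_ofFn]
    simp [hc, ZMod.card]
  simp only [hconst, Finset.sum_const, Finset.card_univ, ZMod.card, smul_eq_mul] at hsum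
  have hn : 0 < n := by omega
  apply Nat.eq_of_mul_eq_mul_left hn
  rw [hsum, ← mul_assoc, ← pow_succ', Nat.sub_add_cancel hr1]
end

section
/- (Konheim–Weiss, Theorem 2) For 1 ≤ k ≤ n define the real number E(n,k) = ((n−k)/(2·n^(k−1))) · Σ_{q=0}^{k−1} binomial(k−1,q)·(q+1)^q·q·(n−q−1)^(k−2−q), where (n−q−1)^(k−2−q) is a real power (the exponent k−2−q may equal −1 when q = k−1). Then for every μ ∈ (0,1), lim_{n→∞} E(n, ⌊μn⌋) = μ(2−μ)/(2(1−μ)^2). -/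
open Filter

/-- The explicit real-valued expression
`E(n,k) = ((n-k)/(2 n^(k-1))) Σ_{q=0}^{k-1} C(k-1,q) (q+1)^q q (n-q-1)^(k-2-q)`,
where `(n-q-1)^(k-2-q)` is a real power with (possibly negative) integer exponent. -/
noncomputable def E (n k : ℕ) : ℝ :=
  (((n : ℝ) - (k : ℝ)) / (2 * (n : ℝ) ^ (k - 1))) *
    ∑ q ∈ Finset.range k,
      (Nat.choose (k - 1) q : ℝ) * ((q : ℝ) + 1) ^ q * (q : ℝ) *
        ((n : ℝ) - (q : ℝ) - 1) ^ ((k : ℤ) - 2 - (q : ℤ))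

/-- Abel polynomials `y (y+j)^(j-1)`. -/
noncomputable def kwA (y : ℝ) : ℕ → ℝ
  | 0 => 1
  | j + 1 => y * (y + (j + 1)) ^ j

lemma kw_fd (m : ℕ) (y : ℝ) :
    ∑ q ∈ Finset.range (m + 2), ((m + 1).choose q : ℝ) * (-1) ^ q * (y + (m + 1) - q) ^ m = 0 := by
  have h := congrFun (fwdDiff_iter_pow_eq_zero_of_lt (R := ℝ) (j := m) (n := m + 1) (Nat.lt_succ_self m)) y
  rw [fwdDiff_iter_eq_sum_shift] at h
  rw [← Finset.sum_range_reflect]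
  simp only [Pi.zero_apply] at h
  rw [← h]
  apply Finset.sum_congr rfl
  intro q hq
  have hq' : q ≤ m + 1 := by simp at hq; omega
  have e : m + 2 - 1 - q = m + 1 - q := by omega
  rw [e, Nat.choose_symm hq', Nat.cast_sub hq']
  simp
  ring_nf

lemma kw_abel (y : ℝ) (m : ℕ) : ∀ x : ℝ,
    ∑ q ∈ Finset.range (m + 1), (m.choose q : ℝ) * (x + q) ^ q * kwA y (m - q)
      = (x + y + m) ^ m := by
  induction m with
  | zero => intro x; simp [kwA]
  | succ m ih =>
    set f : ℝ → ℝ := fun x => ∑ q ∈ Finset.range (m + 1 + 1),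
      ((m + 1).choose q : ℝ) * (x + q) ^ q * kwA y (m + 1 - q) - (x + y + (m + 1 : ℕ)) ^ (m + 1)
      with hf
    have hd : ∀ x, HasDerivAt f 0 x := by
      intro x
      have h1 : HasDerivAt f (∑ q ∈ Finset.range (m + 1 + 1),
          ((m + 1).choose q : ℝ) * (q * (x + q) ^ (q - 1) * 1) * kwA y (m + 1 - q)
          - ((m + 1 : ℕ) : ℝ) * (x + y + (m + 1 : ℕ)) ^ (m + 1 - 1) * 1) x := by
        rw [hf]
        apply HasDerivAt.fun_sub
        · apply HasDerivAt.fun_sum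
          intro q _
          apply HasDerivAt.mul_const
          apply HasDerivAt.const_mul
          exact ((hasDerivAt_id x).add_const _).fun_pow q
        · have := (((hasDerivAt_id x).add_const y).add_const ((m + 1 : ℕ) : ℝ)).fun_pow (m + 1)
          exact this
      convert h1 using 1
      rw [Finset.sum_range_succ']
      have h2 := ih (x + 1)
      have h3 : ∑ q ∈ Finset.range (m + 1), ((m + 1).choose (q + 1) : ℝ) *
          (((q + 1 : ℕ) : ℝ) * (x + (q + 1 : ℕ)) ^ (q + 1 - 1) * 1) * kwA y (m + 1 - (q + 1))
          = ((m + 1 : ℕ) : ℝ) * ∑ q ∈ Finset.range (m + 1),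
            (m.choose q : ℝ) * (x + 1 + q) ^ q * kwA y (m - q) := by
        rw [Finset.mul_sum]
        apply Finset.sum_congr rfl
        intro q _
        have h4 : ((m + 1 : ℕ) : ℝ) * (m.choose q : ℝ)
            = ((m + 1).choose (q + 1) : ℝ) * ((q + 1 : ℕ) : ℝ) := by
          exact_mod_cast Nat.add_one_mul_choose_eq m q
        rw [Nat.add_sub_cancel, Nat.add_sub_add_right,
          show ∀ a b c : ℝ, ((m + 1 : ℕ) : ℝ) * (a * b * c) = ((m + 1 : ℕ) : ℝ) * a * b * c by intros; ring, h4]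
        push_cast
        ring
      rw [h3, h2]
      push_cast
      simp
      ring
    intro x
    have hc : f x = f (-y - (m + 1)) :=
      is_const_of_deriv_eq_zero (fun z => (hd z).differentiableAt) (fun z => (hd z).deriv) _ _
    have h0 : f (-y - (m + 1)) = 0 := by
      have h5 := kw_fd m y
      rw [hf]
      have h6 : (-y - ((m : ℝ) + 1) + y + (m + 1 : ℕ)) = 0 := by push_cast; ring
      simp only [h6]
      rw [zero_pow (Nat.succ_ne_zero m), sub_zero, ← mul_zero y, ← h5, Finset.mul_sum]
      apply Finset.sum_congr rfl
      intro q hq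
      have hq' : q ≤ m + 1 := by simp at hq; omega
      have e1 : (-y - ((m : ℝ) + 1) + q) = (-1) * (y + (m + 1) - q) := by ring
      rw [e1, mul_pow]
      obtain ⟨j, hj⟩ := Nat.exists_eq_add_of_le hq'
      rw [hj, Nat.add_sub_cancel_left]
      rcases j with _ | j
      · have : q = m + 1 := by omega
        subst this
        simp [kwA]
        ring
      · have : m = q + j := by omega
        subst this
        simp only [kwA]
        push_cast
        rw [pow_add]
        ring
    have := hc.trans h0
    rw [hf] at this
    exact sub_eq_zero.mp this

lemma kw_G (y : ℝ) (m : ℕ) : ∀ x : ℝ,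
    ∑ q ∈ Finset.range (m + 1), (m.choose q : ℝ) * (x + q) ^ (q + 1) * kwA y (m - q)
      = ∑ j ∈ Finset.range (m + 1), (m.descFactorial j : ℝ) * (x + j) * (x + y + m) ^ (m - j) := by
  induction m with
  | zero => intro x; simp [kwA]
  | succ m ih =>
    intro x
    have h1 : ∑ q ∈ Finset.range (m + 1 + 1),
        ((m + 1).choose q : ℝ) * (x + q) ^ (q + 1) * kwA y (m + 1 - q)
        = x * ∑ q ∈ Finset.range (m + 1 + 1),
          ((m + 1).choose q : ℝ) * (x + q) ^ q * kwA y (m + 1 - q)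
        + ∑ q ∈ Finset.range (m + 1 + 1),
          (q : ℝ) * (((m + 1).choose q : ℝ) * (x + q) ^ q * kwA y (m + 1 - q)) := by
      rw [Finset.mul_sum, ← Finset.sum_add_distrib]
      apply Finset.sum_congr rfl
      intro q _
      ring
    rw [h1, kw_abel, Finset.sum_range_succ', Finset.sum_range_succ' _ (m + 1)]
    have h3 : ∑ q ∈ Finset.range (m + 1), ((q + 1 : ℕ) : ℝ) * (((m + 1).choose (q + 1) : ℝ) *
          (x + (q + 1 : ℕ)) ^ (q + 1) * kwA y (m + 1 - (q + 1)))
          = ((m + 1 : ℕ) : ℝ) * ∑ q ∈ Finset.range (m + 1),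
            (m.choose q : ℝ) * (x + 1 + q) ^ (q + 1) * kwA y (m - q) := by
        rw [Finset.mul_sum]
        apply Finset.sum_congr rfl
        intro q _
        have h4 : ((m + 1 : ℕ) : ℝ) * (m.choose q : ℝ)
            = ((m + 1).choose (q + 1) : ℝ) * ((q + 1 : ℕ) : ℝ) := by
          exact_mod_cast Nat.add_one_mul_choose_eq m q
        rw [Nat.add_sub_add_right,
          show ∀ a b c : ℝ, ((m + 1 : ℕ) : ℝ) * (a * b * c) = ((m + 1 : ℕ) : ℝ) * a * b * c by intros; ring, h4]
        push_cast
        ring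
    rw [h3, ih, Finset.mul_sum]
    have h5 : ∀ j ∈ Finset.range (m + 1), ((m + 1 : ℕ) : ℝ) *
        ((m.descFactorial j : ℝ) * (x + 1 + j) * (x + 1 + y + m) ^ (m - j))
        = ((m + 1).descFactorial (j + 1) : ℝ) * (x + (j + 1 : ℕ))
          * (x + y + (m + 1 : ℕ)) ^ (m + 1 - (j + 1)) := by
      intro j _
      rw [Nat.succ_descFactorial_succ, Nat.add_sub_add_right]
      push_cast
      ring
    rw [Finset.sum_congr rfl h5]
    simp
    ring

lemma kw_E (n m : ℕ) (h : m + 1 < n) :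
    E n (m + 1) = (1 / 2) * (∑ j ∈ Finset.range (m + 1),
      ((j : ℝ) + 1) * (m.descFactorial j : ℝ) / (n : ℝ) ^ j - 1) := by
  have hn : (n : ℝ) ≠ 0 := by
    have : 0 < n := by omega
    positivity
  have hG := kw_G ((n : ℝ) - (m + 1)) m 1
  have hA := kw_abel ((n : ℝ) - (m + 1)) m 1
  have e : (1 : ℝ) + ((n : ℝ) - (m + 1)) + m = n := by ring
  rw [e] at hG hA
  have key : ((n : ℝ) - (m + 1)) * ∑ q ∈ Finset.range (m + 1),
      (Nat.choose m q : ℝ) * ((q : ℝ) + 1) ^ q * (q : ℝ) *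
        ((n : ℝ) - (q : ℝ) - 1) ^ (((m + 1 : ℕ) : ℤ) - 2 - (q : ℤ))
      = ∑ j ∈ Finset.range (m + 1), (m.descFactorial j : ℝ) * (1 + j) * (n : ℝ) ^ (m - j)
        - (n : ℝ) ^ m := by
    rw [← hG, ← hA, ← Finset.sum_sub_distrib, Finset.mul_sum]
    apply Finset.sum_congr rfl
    intro q hq
    have hq' : q ≤ m := by simp at hq; omega
    have hy : ((n : ℝ) - (m + 1)) ≠ 0 := by
      have : ((m + 1 : ℕ) : ℝ) < n := by exact_mod_cast h
      push_cast at this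
      linarith
    have hk : ((n : ℝ) - (m + 1)) * ((n : ℝ) - (q : ℝ) - 1) ^ (((m + 1 : ℕ) : ℤ) - 2 - (q : ℤ))
        = kwA ((n : ℝ) - (m + 1)) (m - q) := by
      obtain ⟨j, rfl⟩ := Nat.exists_eq_add_of_le hq'
      rw [Nat.add_sub_cancel_left]
      rcases j with _ | j
      · have e2 : (((q + 0 + 1 : ℕ) : ℤ) - 2 - (q : ℤ)) = -1 := by push_cast; ring
        rw [e2, zpow_neg_one]
        simp only [kwA]
        have e3 : (n : ℝ) - q - 1 = (n : ℝ) - (((q + 0 : ℕ) : ℝ) + 1) := by push_cast; ring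
        rw [e3]
        exact mul_inv_cancel₀ hy
      · have e2 : (((q + (j + 1) + 1 : ℕ) : ℤ) - 2 - (q : ℤ)) = (j : ℤ) := by push_cast; ring
        rw [e2, zpow_natCast]
        simp only [kwA]
        push_cast
        ring
    rw [← hk]
    ring
  unfold E
  rw [Nat.add_sub_cancel, div_mul_eq_mul_div, Nat.cast_add_one]
  rw [key]
  have hs : ∑ j ∈ Finset.range (m + 1), (m.descFactorial j : ℝ) * (1 + j) * (n : ℝ) ^ (m - j)
      = (n : ℝ) ^ m * ∑ j ∈ Finset.range (m + 1),
        ((j : ℝ) + 1) * (m.descFactorial j : ℝ) / (n : ℝ) ^ j := by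
    rw [Finset.mul_sum]
    apply Finset.sum_congr rfl
    intro j hj
    have hj' : j ≤ m := by simp at hj; omega
    rw [pow_sub₀ _ hn hj']
    field_simp
    ring
  rw [hs]
  field_simp

lemma kw_pt (μ : ℝ) (h0 : 0 < μ) (j : ℕ) :
    Tendsto (fun n : ℕ => ((⌊μ * (n : ℝ)⌋₊ - 1).descFactorial j : ℝ) / (n : ℝ) ^ j) atTop
      (nhds (μ ^ j)) := by
  have hfl : Tendsto (fun n : ℕ => (⌊μ * (n : ℝ)⌋₊ : ℝ) / n) atTop (nhds μ) :=
    (tendsto_nat_floor_mul_div_atTop h0.le).comp tendsto_natCast_atTop_atTop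
  have hk : Tendsto (fun n : ℕ => ⌊μ * (n : ℝ)⌋₊) atTop atTop :=
    tendsto_nat_floor_atTop.comp
      (Tendsto.const_mul_atTop h0 tendsto_natCast_atTop_atTop)
  induction j with
  | zero => simp
  | succ j ih =>
    have h1 : Tendsto (fun n : ℕ => (⌊μ * (n : ℝ)⌋₊ : ℝ) / n - (1 + j : ℝ) / n) atTop
        (nhds (μ - 0)) :=
      hfl.sub (tendsto_const_div_atTop_nhds_zero_nat _)
    rw [sub_zero] at h1
    have h2 := h1.mul ih
    rw [← pow_succ'] at h2
    refine h2.congr' ?_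
    filter_upwards [hk.eventually_ge_atTop (j + 1)] with n hn
    rw [Nat.descFactorial_succ, Nat.sub_sub, Nat.cast_mul,
      Nat.cast_sub (by omega : 1 + j ≤ ⌊μ * (n : ℝ)⌋₊), pow_succ', mul_div_mul_comm, sub_div]
    push_cast
    rfl

/-- (Konheim–Weiss, Theorem 2) For every `μ ∈ (0,1)`,
`lim_{n→∞} E(n, ⌊μn⌋) = μ(2-μ)/(2(1-μ)^2)`. -/
theorem konheim_weiss_theorem2 (μ : ℝ) (h0 : 0 < μ) (h1 : μ < 1) :
    Tendsto (fun n : ℕ => E n ⌊μ * (n : ℝ)⌋₊) atTop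
      (nhds (μ * (2 - μ) / (2 * (1 - μ) ^ 2))) := by
  have hk : Tendsto (fun n : ℕ => ⌊μ * (n : ℝ)⌋₊) atTop atTop :=
    tendsto_nat_floor_atTop.comp
      (Tendsto.const_mul_atTop h0 tendsto_natCast_atTop_atTop)
  have hsum : HasSum (fun j : ℕ => ((j : ℝ) + 1) * μ ^ j) (1 / (1 - μ) ^ 2) := by
    have := hasSum_choose_mul_geometric_of_norm_lt_one (𝕜 := ℝ) (r := μ) 1
      (by rw [Real.norm_eq_abs, abs_of_pos h0]; exact h1)
    simpa using this
  have hT : Tendsto (fun n : ℕ => ∑' j : ℕ, ((j : ℝ) + 1) *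
      ((⌊μ * (n : ℝ)⌋₊ - 1).descFactorial j : ℝ) / (n : ℝ) ^ j) atTop
      (nhds (∑' j : ℕ, ((j : ℝ) + 1) * μ ^ j)) := by
    apply tendsto_tsum_of_dominated_convergence hsum.summable
    · intro j
      have := (kw_pt μ h0 j).const_mul ((j : ℝ) + 1)
      refine this.congr ?_
      intro n
      rw [mul_div_assoc]
    · filter_upwards [eventually_gt_atTop 0] with n hn j
      have hn' : (0 : ℝ) < n := by exact_mod_cast hn
      rw [Real.norm_of_nonneg (by positivity), mul_div_assoc]
      apply mul_le_mul_of_nonneg_left _ (by positivity)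
      rw [div_le_iff₀ (by positivity), ← mul_pow]
      calc ((⌊μ * (n : ℝ)⌋₊ - 1).descFactorial j : ℝ)
          ≤ (((⌊μ * (n : ℝ)⌋₊ - 1 : ℕ) : ℝ)) ^ j := by
            exact_mod_cast Nat.descFactorial_le_pow _ _
        _ ≤ (μ * n) ^ j := by
            apply pow_le_pow_left₀ (by positivity)
            refine le_trans ?_ (Nat.floor_le (by positivity : 0 ≤ μ * (n : ℝ)))
            exact_mod_cast Nat.sub_le _ _
  rw [hsum.tsum_eq] at hT
  have h2 := (hT.sub_const 1).const_mul (1 / 2)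
  have hl : (1 / 2 : ℝ) * (1 / (1 - μ) ^ 2 - 1) = μ * (2 - μ) / (2 * (1 - μ) ^ 2) := by
    have : (1 - μ) ≠ 0 := by linarith
    field_simp
    ring
  rw [hl] at h2
  refine h2.congr' ?_
  filter_upwards [hk.eventually_ge_atTop 1, eventually_gt_atTop 0] with n hn hn0
  obtain ⟨m, hm⟩ : ∃ m, ⌊μ * (n : ℝ)⌋₊ = m + 1 := ⟨⌊μ * (n : ℝ)⌋₊ - 1, by omega⟩
  have hn' : (0 : ℝ) < n := by exact_mod_cast hn0
  have hlt : m + 1 < n := by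
    rw [← hm, Nat.floor_lt (by positivity)]
    nlinarith
  rw [hm, kw_E n m hlt, Nat.add_sub_cancel]
  congr 2
  apply tsum_eq_sum
  intro j hj
  have : m < j := by simp at hj; omega
  rw [Nat.descFactorial_of_lt this]
  simp
end

section
/- (Konheim–Weiss) For integers 1 ≤ c ≤ p, the number of sequences s ∈ {1,…,p}^c that are parking functions for the one-way street with p spots equals (p+1)^(c−1)·(p+1−c). Equivalently, the probability P(c,p) that c cars with independent uniformly random preferences on {1,…,p} all park equals (1 + 1/p)^c · (1 − c/(p+1)). -/
/-- `s : Fin c → Fin p` (preferences of `c` cars among `p` spots, 0-indexed) is a parking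
function for the one-way street with `p` spots iff for every spot `j`,
`#{k : s k ≥ j} ≤ p - j` (this is `#{k : s_k ≥ j} ≤ n - j + 1` in 1-indexed notation). -/
def IsStreetParking (p c : ℕ) (s : Fin c → Fin p) : Prop :=
  ∀ j : Fin p, (Finset.univ.filter fun k : Fin c => j ≤ s k).card ≤ p - (j : ℕ)

theorem kw_records (S : ℕ → ℤ) (p : ℕ) (d : ℤ) (hd : 0 ≤ d)
    (h1 : ∀ t, S (t + 1) ≤ S t + 1) (h2 : ∀ t, S (t + (p + 1)) = S t + d) :
    (((Finset.range (p + 1)).filter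
      (fun r => ∀ l, l ≤ p → S (p + r - l) < S (p + r + 1))).card : ℤ) = d := by
  have key : ∀ m, m ≤ p + 1 → (((Finset.range m).filter
      (fun r => ∀ l, l ≤ p → S (p + r - l) < S (p + r + 1))).card : ℤ)
      = partialSups S (p + m) - partialSups S p := by
    intro m
    induction m with
    | zero => intro _; simp
    | succ m ih =>
      intro hm
      have ih := ih (by omega)
      rw [Finset.range_add_one, Finset.filter_insert]
      have e : partialSups S (p + (m + 1)) = max (partialSups S (p + m)) (S (p + m + 1)) := by
        rw [← add_assoc, partialSups_add_one]
      have hle : S (p + m) ≤ partialSups S (p + m) := le_partialSups S _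
      have h1' := h1 (p + m)
      split_ifs with h
      · rw [Finset.card_insert_of_notMem (by simp)]
        have : partialSups S (p + m) ≤ S (p + m + 1) - 1 := by
          apply partialSups_le
          intro u hu
          by_cases hum : m ≤ u
          · have := h (p + m - u) (by omega)
            rw [show p + m - (p + m - u) = u by omega] at this
            omega
          · have := h (m - 1 - u) (by omega)
            rw [show p + m - (m - 1 - u) = u + (p + 1) by omega, h2] at this
            omega
        push_cast
        rw [ih, e, max_eq_right (by omega)]
        omega
      · rw [ih, e, max_eq_left]
        by_contra hc
        apply h
        intro l hl
        have := le_partialSups_of_le S (show p + m - l ≤ p + m by omega)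
        omega
  rw [key _ le_rfl]
  have : partialSups S (p + (p + 1)) = partialSups S p + d := by
    apply le_antisymm
    · apply partialSups_le
      intro u hu
      by_cases hup : u ≤ p
      · have := le_partialSups_of_le S hup
        omega
      · obtain ⟨v, rfl⟩ : ∃ v, u = v + (p + 1) := ⟨u - (p + 1), by omega⟩
        have := le_partialSups_of_le S (show v ≤ p by omega)
        have := h2 v
        omega
    · have : partialSups S p ≤ partialSups S (p + (p + 1)) - d := by
        apply partialSups_le
        intro u hu
        have := le_partialSups_of_le S (show u + (p + 1) ≤ p + (p + 1) by omega)
        have := h2 u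
        omega
      omega
  omega

/-- Spot `r` stays empty on the circle. -/
def KWGood (p c : ℕ) (s : Fin c → Fin (p + 1)) (r : Fin (p + 1)) : Prop :=
  ∀ l : ℕ, l ≤ p → (Finset.univ.filter fun k : Fin c => (r - s k).val ≤ l).card ≤ l

theorem kw_div (n x l : ℕ) (hn : l < n) (hx : l + 1 ≤ x) :
    x / n = (x - l - 1) / n + if x % n ≤ l then 1 else 0 := by
  have hn0 : 0 < n := by omega
  have e := Nat.div_add_mod x n
  have hm := Nat.mod_lt x hn0
  generalize x / n = q at *
  generalize x % n = m at *
  subst e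
  split_ifs with h
  · cases q with
    | zero => simp at hx; omega
    | succ q =>
      have : (n * (q + 1) + m - l - 1) / n = q := by
        rw [Nat.div_eq_iff hn0]
        constructor
        · rw [mul_comm q n, mul_add]; omega
        · rw [mul_comm, add_mul]; omega
      omega
  · have : (n * q + m - l - 1) / n = q := by
      rw [Nat.div_eq_iff hn0]
      constructor
      · rw [mul_comm q n]; omega
      · rw [mul_comm]; omega
    omega

theorem kw_good_iff (p c : ℕ) (s : Fin c → Fin (p + 1)) (r : Fin (p + 1)) :
    KWGood p c s r ↔ ∀ l, l ≤ p →
      ((p + r.val - l : ℕ) : ℤ) -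
        ((∑ k, (p + r.val - l + (p + 1) - (s k).val) / (p + 1) : ℕ) : ℤ)
      < ((p + r.val + 1 : ℕ) : ℤ) -
        ((∑ k, (p + r.val + 1 + (p + 1) - (s k).val) / (p + 1) : ℕ) : ℤ) := by
  unfold KWGood
  refine forall_congr' fun l => imp_congr_right fun hl => ?_
  have : (∑ k, (p + r.val + 1 + (p + 1) - (s k).val) / (p + 1)) =
      (∑ k, (p + r.val - l + (p + 1) - (s k).val) / (p + 1)) +
      (Finset.univ.filter fun k : Fin c => (r - s k).val ≤ l).card := by
    rw [Finset.card_filter, ← Finset.sum_add_distrib]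
    refine Finset.sum_congr rfl fun k _ => ?_
    have hk := (s k).2
    rw [kw_div (p + 1) (p + r.val + 1 + (p + 1) - (s k).val) l (by omega) (by omega)]
    have e1 : p + r.val + 1 + (p + 1) - (s k).val - l - 1 =
      p + r.val - l + (p + 1) - (s k).val := by omega
    have e2 : (r - s k).val = (p + r.val + 1 + (p + 1) - (s k).val) % (p + 1) := by
      rw [Fin.sub_def]
      simp only
      rw [show p + r.val + 1 + (p + 1) - (s k).val = (p + 1 - (s k).val + r.val) + (p + 1) by omega,
        Nat.add_mod_right]
    rw [e1, e2]
  rw [this]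
  push_cast [-Nat.cast_sum]
  omega

open Classical in
theorem kw_count_r (p c : ℕ) (hcp : c ≤ p) (s : Fin c → Fin (p + 1)) :
    (Finset.univ.filter (KWGood p c s)).card = p + 1 - c := by
  have := kw_records (fun t => (t : ℤ) - ((∑ k, (t + (p + 1) - (s k).val) / (p + 1) : ℕ) : ℤ))
    p ((p : ℤ) + 1 - c) (by omega) ?_ ?_
  · have h3 : (Finset.univ.filter (KWGood p c s)).card =
      ((Finset.range (p + 1)).filter (fun r => ∀ l, l ≤ p →
        (fun t : ℕ => (t : ℤ) - ((∑ k, (t + (p + 1) - (s k).val) / (p + 1) : ℕ) : ℤ)) (p + r - l)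
         < (fun t : ℕ => (t : ℤ) - ((∑ k, (t + (p + 1) - (s k).val) / (p + 1) : ℕ) : ℤ)) (p + r + 1))).card := by
      refine Finset.card_bij (fun r _ => r.val) ?_ (fun _ _ _ _ h => Fin.ext h) ?_
      · intro r hr
        simp only [Finset.mem_filter, Finset.mem_univ, true_and] at hr
        exact Finset.mem_filter.2 ⟨Finset.mem_range.2 r.2, (kw_good_iff p c s r).1 hr⟩
      · intro r hr
        obtain ⟨hr1, hr2⟩ := Finset.mem_filter.1 hr
        refine ⟨⟨r, Finset.mem_range.1 hr1⟩, ?_, rfl⟩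
        simp only [Finset.mem_filter, Finset.mem_univ, true_and]
        exact (kw_good_iff p c s ⟨r, Finset.mem_range.1 hr1⟩).2 hr2
    rw [← h3] at this
    omega
  · intro t
    have : (∑ k, (t + (p + 1) - (s k).val) / (p + 1)) ≤
        ∑ k, (t + 1 + (p + 1) - (s k).val) / (p + 1) :=
      Finset.sum_le_sum fun k _ => Nat.div_le_div_right (by omega)
    push_cast [-Nat.cast_sum]
    omega
  · intro t
    have : (∑ k, (t + (p + 1) + (p + 1) - (s k).val) / (p + 1)) =
        (∑ k, (t + (p + 1) - (s k).val) / (p + 1)) + c := by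
      have hc1 : ∑ _k : Fin c, 1 = c := by simp
      refine Eq.trans ?_ (congrArg (fun z => _ + z) hc1)
      rw [← Finset.sum_add_distrib]
      refine Finset.sum_congr rfl fun k _ => ?_
      rw [show t + (p + 1) + (p + 1) - (s k).val = t + (p + 1) - (s k).val + (p + 1) by
        have := (s k).2; omega]
      exact Nat.add_div_right _ (by omega)
    simp only [this]
    push_cast [-Nat.cast_sum]
    omega

theorem kw_shift_s7 (p c : ℕ) (s : Fin c → Fin (p + 1)) (r x : Fin (p + 1)) :
    KWGood p c (fun k => s k + x) (r + x) ↔ KWGood p c s r := by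
  unfold KWGood
  simp only [add_sub_add_right_eq_sub]

open Classical in
theorem kw_count_s (p c : ℕ) (hc : 1 ≤ c) (hcp : c ≤ p) :
    (Finset.univ.filter (fun s => KWGood p c s (Fin.last p))).card
      = (p + 1) ^ (c - 1) * (p + 1 - c) := by
  have h1 : ∀ r, (Finset.univ.filter (fun s => KWGood p c s r)).card =
      (Finset.univ.filter (fun s => KWGood p c s (Fin.last p))).card := by
    intro r
    refine Finset.card_equiv (Equiv.addRight (fun _ => Fin.last p - r)) fun s => ?_
    have := kw_shift_s7 p c s r (Fin.last p - r)
    simp only [Finset.mem_filter, Finset.mem_univ, true_and, Equiv.coe_addRight]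
    rw [← this, add_sub_cancel]
    rfl
  have h2 := Finset.sum_card_bipartiteAbove_eq_sum_card_bipartiteBelow
    (s := (Finset.univ : Finset (Fin c → Fin (p + 1)))) (t := Finset.univ) (KWGood p c)
  simp only [Finset.bipartiteAbove, Finset.bipartiteBelow, h1] at h2
  rw [Finset.sum_congr rfl (fun s _ => kw_count_r p c hcp s)] at h2
  simp only [Finset.sum_const, Finset.card_univ, Fintype.card_fun, Fintype.card_fin,
    smul_eq_mul] at h2
  obtain ⟨e, rfl⟩ : ∃ e, c = e + 1 := ⟨c - 1, by omega⟩
  apply Nat.eq_of_mul_eq_mul_left (show 0 < p + 1 by omega)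
  rw [← h2, pow_succ]
  simp only [Nat.add_sub_cancel]
  ring

theorem kw_good_last (p c : ℕ) (s : Fin c → Fin p) :
    KWGood p c (fun k => (s k).castSucc) (Fin.last p) ↔ IsStreetParking p c s := by
  have hv : ∀ k, (Fin.last p - (s k).castSucc).val = p - (s k).val := by
    intro k
    rw [Fin.sub_val_of_le (Fin.le_last _)]
    simp
  unfold KWGood IsStreetParking
  simp only [hv]
  constructor
  · intro h j
    refine le_trans (le_of_eq ?_) (h (p - j) (by omega))
    congr 1
    ext k
    simp only [Finset.mem_filter, Finset.mem_univ, true_and, Fin.le_def]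
    omega
  · intro h l hl
    rcases Nat.eq_zero_or_pos l with rfl | hl0
    · rw [Nat.le_zero, Finset.card_eq_zero, Finset.filter_eq_empty_iff]
      intro k _
      have := (s k).2
      omega
    · refine le_trans (le_of_eq ?_) (le_trans (h ⟨p - l, by omega⟩) (by simp; omega))
      congr 1
      ext k
      simp only [Finset.mem_filter, Finset.mem_univ, true_and, Fin.le_def]
      omega

theorem kw_good_ne (p c : ℕ) (s : Fin c → Fin (p + 1)) (h : KWGood p c s (Fin.last p)) (k) :
    s k ≠ Fin.last p := by
  intro hk
  have := h 0 (by omega)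
  rw [Nat.le_zero, Finset.card_eq_zero, Finset.filter_eq_empty_iff] at this
  apply this (Finset.mem_univ k)
  simp [hk]

theorem kw_card (p c : ℕ) (hc : 1 ≤ c) (hcp : c ≤ p) :
    Nat.card {s : Fin c → Fin p // IsStreetParking p c s} = (p + 1) ^ (c - 1) * (p + 1 - c) := by
  classical
  rw [← kw_count_s p c hc hcp, Nat.card_eq_fintype_card, Fintype.card_subtype]
  refine Finset.card_bij (fun s _ k => (s k).castSucc) ?_ ?_ ?_
  · intro s hs
    simpa [kw_good_last] using hs
  · intro s _ t _ h
    funext k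
    exact Fin.castSucc_injective _ (congrFun h k)
  · intro s hs
    simp only [Finset.mem_filter, Finset.mem_univ, true_and] at hs
    have e : (fun k => ((s k).castPred (kw_good_ne p c s hs k)).castSucc) = s := by
      funext k; simp
    refine ⟨fun k => (s k).castPred (kw_good_ne p c s hs k), ?_, e⟩
    simp only [Finset.mem_filter, Finset.mem_univ, true_and]
    rw [← kw_good_last, e]
    exact hs

/-- (Konheim–Weiss) For `1 ≤ c ≤ p`, the number of parking functions for `c` cars on the
one-way street with `p` spots is `(p+1)^(c-1) * (p+1-c)`; equivalently, the probability that
`c` cars with independent uniform preferences all park is `(1 + 1/p)^c * (1 - c/(p+1))`. -/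
theorem konheim_weiss_street_count (p c : ℕ) (hc : 1 ≤ c) (hcp : c ≤ p) :
    Nat.card {s : Fin c → Fin p // IsStreetParking p c s} = (p + 1) ^ (c - 1) * (p + 1 - c) ∧
    (Nat.card {s : Fin c → Fin p // IsStreetParking p c s} : ℝ) / (p : ℝ) ^ c =
      (1 + 1 / (p : ℝ)) ^ c * (1 - (c : ℝ) / ((p : ℝ) + 1)) := by
  have h := kw_card p c hc hcp
  refine ⟨h, ?_⟩
  rw [h]
  obtain ⟨e, rfl⟩ : ∃ e, c = e + 1 := ⟨c - 1, by omega⟩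
  have hp : (p : ℝ) ≠ 0 := by
    have : 0 < p := by omega
    positivity
  have hp1 : (p : ℝ) + 1 ≠ 0 := by positivity
  rw [Nat.cast_mul, Nat.cast_sub (by omega)]
  have e1 : 1 + 1 / (p : ℝ) = (p + 1) / p := by field_simp
  rw [e1, div_pow]
  rw [Nat.add_sub_cancel]
  push_cast
  rw [pow_succ ((p : ℝ) + 1)]
  field_simp
end

section
/- (Lackner–Panholzer, Lemma 2.3) Let T be a rooted labelled tree on {1,…,n} and let s ∈ {1,…,n}^m. Then s is a tree parking function for T if and only if for every subset A ⊆ {1,…,n} that contains the root and is closed under the parent map of T (i.e., A is the vertex set of a subtree of T containing the root), one has #{k ∈ {1,…,m} : s_k ∈ A} ≤ |A|. -/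
/-- A rooted labelled tree on the vertex set `Fin n`, encoded by its root and its parent
map: the root is its own parent and every vertex reaches the root by iterating the parent
map (this data is equivalent to a tree on `{1,…,n}` with a distinguished root). -/
structure LabelledRootedTree (n : ℕ) where
  root : Fin n
  parent : Fin n → Fin n
  parent_root : parent root = root
  reaches_root : ∀ v : Fin n, ∃ k : ℕ, parent^[k] v = root

/-- The parking procedure driven by a step map `f` on `Fin n` (the parent map of a tree, or
an `n`-mapping).  `occ` is the list of occupied vertices; the drivers in the list arrive in
order, and the driver starting at `v` parks at `f^[i] v` for the least `i` such that
`f^[i] v` is unoccupied (searching `i < n` suffices, since the forward orbit of `v` has at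
most `n` distinct vertices, all appearing among the first `n` iterates, in visit order).
The result is `none` if some driver finds every vertex on its route occupied. -/
def parkAux (n : ℕ) (f : Fin n → Fin n) : List (Fin n) → List (Fin n) → Option (List (Fin n))
  | occ, [] => some occ
  | occ, v :: rest =>
    match (List.range n).find? (fun i => decide (f^[i] v ∉ occ)) with
    | none => none
    | some i => parkAux n f (f^[i] v :: occ) rest

/-- `s : Fin m → Fin n` is a parking function for the step map `f` on `Fin n`:
all `m` drivers, arriving in order with preferences `s 1, …, s m`, park successfully. -/
def ParkingSucceeds {n m : ℕ} (f : Fin n → Fin n) (s : Fin m → Fin n) : Prop :=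
  (parkAux n f [] (List.ofFn s)).isSome

/-- `s` is a tree parking function for the rooted labelled tree `T`: each driver `k` starts
at `s k` and drives towards the root, parking at the first unoccupied vertex. -/
def IsTreeParking {n m : ℕ} (T : LabelledRootedTree n) (s : Fin m → Fin n) : Prop :=
  ParkingSucceeds T.parent s

theorem aux_count {n m : ℕ} (s : Fin m → Fin n) (A : Finset (Fin n)) :
    (Finset.univ.filter fun k : Fin m => s k ∈ A).card
      = (List.ofFn s).countP (fun v => decide (v ∈ A)) := by
  rw [List.ofFn_eq_map, List.countP_map, List.countP_eq_length_filter]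
  rfl

theorem aux_iter_mem {n : ℕ} {f : Fin n → Fin n} {A : Finset (Fin n)}
    (hA : ∀ v ∈ A, f v ∈ A) (i : ℕ) : ∀ v ∈ A, f^[i] v ∈ A := by
  induction i with
  | zero => intro v hv; simpa using hv
  | succ i ih => intro v hv; rw [Function.iterate_succ_apply]; exact ih _ (hA v hv)

theorem aux_forward {n : ℕ} {f : Fin n → Fin n} {A : Finset (Fin n)}
    (hA : ∀ v ∈ A, f v ∈ A) (l : List (Fin n)) :
    ∀ occ : List (Fin n), occ.Nodup → (parkAux n f occ l).isSome →
      occ.countP (fun v => decide (v ∈ A)) + l.countP (fun v => decide (v ∈ A)) ≤ A.card := by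
  induction l with
  | nil =>
    intro occ hnd _
    rw [List.countP_nil, List.countP_eq_length_filter, add_zero]
    have h1 : (occ.filter (fun v => decide (v ∈ A))).Nodup := hnd.filter _
    rw [← List.toFinset_card_of_nodup h1]
    apply Finset.card_le_card
    intro x hx
    simp at hx
    exact hx.2
  | cons v rest ih =>
    intro occ hnd h
    rw [parkAux] at h
    split at h
    · simp at h
    · rename_i i hi
      have hp := List.find?_some hi
      simp only [decide_eq_true_eq] at hp
      have := ih _ (List.nodup_cons.2 ⟨hp, hnd⟩) h
      rw [List.countP_cons] at this ⊢
      by_cases hv : v ∈ A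
      · have h2 := aux_iter_mem hA i v hv
        simp only [hv, h2, decide_true, if_true] at this ⊢
        omega
      · simp only [hv, decide_false] at this ⊢
        simp only [Bool.false_eq_true, if_false]
        omega

theorem aux_orbit {n : ℕ} {f : Fin n → Fin n} {occ : List (Fin n)} {v : Fin n}
    (h : ∀ i < n, f^[i] v ∈ occ) (i : ℕ) : f^[i] v ∈ occ := by
  induction i using Nat.strong_induction_on with
  | _ i ih =>
    by_cases hi : i < n
    · exact h i hi
    · obtain ⟨a, b, hab, he⟩ := Fintype.exists_ne_map_eq_of_card_lt
        (fun k : Fin (n + 1) => f^[k.1] v) (by simp)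
      have key : ∀ a b : ℕ, a < b → b ≤ n → f^[a] v = f^[b] v → f^[i] v ∈ occ := by
        intro a b hab hb he
        have h1 : i = (i - b) + b := by omega
        rw [h1, Function.iterate_add_apply, ← he, ← Function.iterate_add_apply]
        exact ih _ (by omega)
      rcases Nat.lt_or_gt_of_ne (fun hh => hab (Fin.ext hh)) with hlt | hlt
      · exact key a b hlt (by omega) he
      · exact key b a hlt (by omega) he.symm

theorem aux_forall2_count {α : Type*} {R : α → α → Prop} {p : α → Bool}
    {d occ : List α} (h : List.Forall₂ R d occ) (hR : ∀ x y, R x y → p y = true → p x = true) :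
    occ.countP p ≤ d.countP p := by
  induction h with
  | nil => simp
  | cons hxy _ ih =>
    rename_i x y _ _ _
    rw [List.countP_cons, List.countP_cons]
    have := hR _ _ hxy
    by_cases hy : p y = true
    · simp [hy, this hy, ih]
    · simp only [hy]
      simp only [Bool.false_eq_true, if_false]
      omega

theorem aux_backward {n : ℕ} (T : LabelledRootedTree n) (l : List (Fin n)) :
    ∀ d occ : List (Fin n),
      List.Forall₂ (fun p o => ∃ i, T.parent^[i] p = o ∧ ∀ j ≤ i, T.parent^[j] p ∈ occ) d occ →
      parkAux n T.parent occ l = none →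
      ∃ A : Finset (Fin n), T.root ∈ A ∧ (∀ v ∈ A, T.parent v ∈ A) ∧
        A.card < d.countP (fun v => decide (v ∈ A)) + l.countP (fun v => decide (v ∈ A)) := by
  induction l with
  | nil => intro d occ _ h; simp [parkAux] at h
  | cons v rest ih =>
    intro d occ hF h
    rw [parkAux] at h
    split at h
    · rename_i hn
      have hocc : ∀ i, T.parent^[i] v ∈ occ := by
        apply aux_orbit
        intro i hi
        have := List.find?_eq_none.1 hn i (List.mem_range.2 hi)
        simpa using this
      classical
      let A : Finset (Fin n) := Finset.univ.filter (fun u => ∀ i, T.parent^[i] u ∈ occ)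
      have memA : ∀ u, u ∈ A ↔ ∀ i, T.parent^[i] u ∈ occ := by intro u; simp [A]
      have hvA : v ∈ A := (memA v).2 hocc
      have hcl : ∀ v ∈ A, T.parent v ∈ A := by
        intro u hu
        rw [memA] at hu ⊢
        intro i
        rw [← Function.iterate_succ_apply]
        exact hu _
      refine ⟨A, ?_, hcl, ?_⟩
      · obtain ⟨k, hk⟩ := T.reaches_root v
        rw [← hk]
        exact aux_iter_mem hcl k v hvA
      · have h1 : A.card ≤ occ.countP (fun v => decide (v ∈ A)) := by
          rw [List.countP_eq_length_filter]
          refine le_trans (Finset.card_le_card ?_) (List.toFinset_card_le _)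
          intro x hx
          simp only [List.mem_toFinset, List.mem_filter, decide_eq_true_eq]
          exact ⟨(memA x).1 hx 0, hx⟩
        have h2 : occ.countP (fun v => decide (v ∈ A)) ≤ d.countP (fun v => decide (v ∈ A)) := by
          refine aux_forall2_count hF ?_
          rintro x y ⟨i, rfl, hi⟩ hy
          simp only [decide_eq_true_eq] at hy ⊢
          rw [memA] at hy ⊢
          intro j
          by_cases hj : j ≤ i
          · exact hi j hj
          · have := hy (j - i)
            rw [← Function.iterate_add_apply] at this
            rwa [Nat.sub_add_cancel (by omega)] at this
        rw [List.countP_cons]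
        simp only [hvA, decide_true, if_true]
        omega
    · rename_i i hi
      obtain ⟨A, hr, hcl, hc⟩ := ih (v :: d) (T.parent^[i] v :: occ) (by
        refine List.Forall₂.cons ⟨i, rfl, ?_⟩ ?_
        · intro j hj
          rcases Nat.lt_or_eq_of_le hj with hlt | rfl
          · have hi' := (List.find?_range_eq_some.1 hi).2.2 j hlt
            simp at hi'
            exact List.mem_cons_of_mem _ hi'
          · exact List.mem_cons_self
        · refine hF.imp ?_
          rintro x y ⟨k, hk, hk'⟩
          exact ⟨k, hk, fun j hj => List.mem_cons_of_mem _ (hk' j hj)⟩) h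
      refine ⟨A, hr, hcl, ?_⟩
      rw [List.countP_cons] at hc ⊢
      omega

/-- (Lackner–Panholzer, Lemma 2.3) `s` is a tree parking function for `T` iff for every
subset `A` of the vertices containing the root and closed under the parent map (i.e. the
vertex set of a subtree of `T` containing the root), the number of drivers whose preferred
vertex lies in `A` is at most `|A|`. -/
theorem lackner_panholzer_lemma_2_3 (n m : ℕ) (hn : 1 ≤ n) (T : LabelledRootedTree n)
    (s : Fin m → Fin n) :
    IsTreeParking T s ↔
      ∀ A : Finset (Fin n), T.root ∈ A → (∀ v ∈ A, T.parent v ∈ A) →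
        (Finset.univ.filter fun k : Fin m => s k ∈ A).card ≤ A.card := by
  constructor
  · intro h A _ hA
    rw [aux_count]
    have := aux_forward hA (List.ofFn s) [] List.nodup_nil h
    simpa using this
  · intro h
    unfold IsTreeParking ParkingSucceeds
    by_contra hc
    obtain ⟨A, hr, hcl, hlt⟩ := aux_backward T (List.ofFn s) [] [] List.Forall₂.nil
      (by simpa using hc)
    have := h A hr hcl
    rw [aux_count] at this
    simp only [List.countP_nil] at hlt
    omega
end

section
/- (Lackner–Panholzer, Theorem 2.6) Let star_n be the rooted labelled tree on {1,…,n} with root n and nodes 1,…,n−1 all attached to the root, and let chain_n be the rooted labelled tree on {1,…,n} with root n and node j attached to node j+1 for 1 ≤ j ≤ n−1. Then for every rooted labelled tree T on {1,…,n} and every 0 ≤ m ≤ n: S(star_n, m) ≤ S(T, m) ≤ S(chain_n, m), and moreover n(n−1)⋯(n−m+1) + binomial(m,2)·(n−1)(n−2)⋯(n−m+1) ≤ S(T,m) ≤ (n−m+1)·(n+1)^(m−1). -/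
/-- `S(T,m)`: the number of tree parking functions `s ∈ {1,…,n}^m` for `T`. -/
noncomputable def STree {n : ℕ} (T : LabelledRootedTree n) (m : ℕ) : ℕ :=
  Nat.card {s : Fin m → Fin n // IsTreeParking T s}

theorem orbit_lt {n : ℕ} (f : Fin n → Fin n) (v : Fin n) (i : ℕ) :
    ∃ j < n, f^[j] v = f^[i] v := by
  obtain ⟨a, b, hab, h⟩ : ∃ a b : Fin (n+1), a < b ∧ f^[(a:ℕ)] v = f^[(b:ℕ)] v := by
    have : ¬ Function.Injective (fun a : Fin (n+1) => f^[(a:ℕ)] v) := by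
      intro h
      have := Fintype.card_le_of_injective _ h
      simp at this
    simp only [Function.Injective, not_forall] at this
    obtain ⟨a, b, h, hne⟩ := this
    rcases lt_or_gt_of_ne hne with h1 | h1
    · exact ⟨a, b, h1, h⟩
    · exact ⟨b, a, h1, h.symm⟩
  induction i using Nat.strong_induction_on with
  | _ i ih =>
    by_cases hi : i < n
    · exact ⟨i, hi, rfl⟩
    · have hb : (b:ℕ) ≤ i := by omega
      have hab' : (a:ℕ) < b := hab
      obtain ⟨j, hj, e⟩ := ih (i - b + a) (by omega)
      refine ⟨j, hj, ?_⟩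
      rw [e, Function.iterate_add_apply, h, ← Function.iterate_add_apply]
      congr 1; omega

theorem parkAux_of_isSome {n : ℕ} (f : Fin n → Fin n) (U : Finset (Fin n))
    (hU : ∀ v ∈ U, f v ∈ U) (l : List (Fin n)) : ∀ occ, (parkAux n f occ l).isSome →
      l.countP (· ∈ U) ≤ (U.filter (· ∉ occ)).card := by
  have hU' : ∀ i, ∀ v ∈ U, f^[i] v ∈ U := by
    intro i
    induction i with
    | zero => intro v hv; simpa using hv
    | succ i ih => intro v hv; rw [Function.iterate_succ_apply]; exact ih _ (hU v hv)
  induction l with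
  | nil => intro occ _; simp
  | cons v rest ih =>
    intro occ h
    rw [parkAux] at h
    split at h
    · simp at h
    · rename_i i hi
      have h1 := ih _ h
      have hp := List.find?_some hi
      simp only [decide_eq_true_eq] at hp
      rw [List.countP_cons]
      by_cases hv : v ∈ U
      · simp only [hv, decide_true, if_true]
        have : (U.filter (· ∉ f^[i] v :: occ)).card < (U.filter (· ∉ occ)).card := by
          apply Finset.card_lt_card
          rw [Finset.ssubset_iff_of_subset]
          · refine ⟨f^[i] v, ?_, ?_⟩
            · simp [hp, hU' i v hv]
            · simp
          · intro x; simp; tauto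
        omega
      · simp only [hv, decide_false]
        have : (U.filter (· ∉ f^[i] v :: occ)).card ≤ (U.filter (· ∉ occ)).card := by
          apply Finset.card_le_card
          intro x; simp; tauto
        simp; omega

theorem parkAux_none {n : ℕ} (f : Fin n → Fin n) (l : List (Fin n)) :
    ∀ occ, parkAux n f occ l = none → ∃ U : Finset (Fin n), (∀ v ∈ U, f v ∈ U) ∧
      (∀ w ∈ occ, f w ∈ U → w ∈ U) ∧ (U.filter (· ∉ occ)).card < l.countP (· ∈ U) := by
  classical
  induction l with
  | nil => intro occ h; simp [parkAux] at h
  | cons v rest ih =>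
    intro occ h
    rw [parkAux] at h
    split at h
    · rename_i hi
      rw [List.find?_eq_none] at hi
      simp only [List.mem_range, decide_eq_true_eq, not_not] at hi
      refine ⟨Finset.univ.filter (fun w => ∀ i, f^[i] w ∈ occ), ?_, ?_, ?_⟩
      · intro w hw
        simp only [Finset.mem_filter, Finset.mem_univ, true_and] at hw ⊢
        intro i; rw [← Function.iterate_succ_apply]; exact hw _
      · intro w hw hw2
        simp only [Finset.mem_filter, Finset.mem_univ, true_and] at hw2 ⊢
        intro i
        cases i with
        | zero => simpa using hw
        | succ i => rw [Function.iterate_succ_apply]; exact hw2 _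
      · have hv : ∀ i, f^[i] v ∈ occ := by
          intro i
          obtain ⟨j, hj, e⟩ := orbit_lt f v i
          rw [← e]; exact hi j hj
        have : (Finset.filter (· ∉ occ) (Finset.univ.filter (fun w => ∀ i, f^[i] w ∈ occ))) = ∅ := by
          ext x
          simp only [Finset.mem_filter, Finset.mem_univ, true_and, Finset.notMem_empty, iff_false,
            not_and, not_not]
          intro hx; simpa using hx 0
        rw [this, List.countP_cons]
        simp [hv]
    · rename_i i hi
      obtain ⟨U, h1, h2, h3⟩ := ih _ h
      refine ⟨U, h1, fun w hw => h2 w (List.mem_cons_of_mem _ hw), ?_⟩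
      rw [List.countP_cons]
      rw [List.find?_range_eq_some] at hi
      obtain ⟨hp, _, hlt⟩ := hi
      simp at hp hlt
      by_cases hpU : f^[i] v ∈ U
      · have hback : ∀ k ≤ i, f^[i-k] v ∈ U := by
          intro k
          induction k with
          | zero => intro _; simpa using hpU
          | succ k ihk =>
            intro hk
            apply h2
            · exact List.mem_cons_of_mem _ (hlt _ (by omega))
            · rw [← Function.iterate_succ_apply' f]
              have : (i - (k+1)).succ = i - k := by omega
              rw [this]; exact ihk (by omega)
        have hv : v ∈ U := by simpa using hback i le_rfl
        have : U.filter (· ∉ occ) ⊆ insert (f^[i] v) (U.filter (· ∉ f^[i] v :: occ)) := by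
          intro x; simp; tauto
        have := (Finset.card_le_card this).trans (Finset.card_insert_le _ _)
        simp [hv]; omega
      · have : U.filter (· ∉ occ) ⊆ (U.filter (· ∉ f^[i] v :: occ)) := by
          intro x; simp; intro hx hx2; refine ⟨hx, ?_, hx2⟩
          rintro rfl; exact hpU hx
        have := (Finset.card_le_card this)
        omega

theorem park_iff_s10 {n m : ℕ} (f : Fin n → Fin n) (s : Fin m → Fin n) :
    ParkingSucceeds f s ↔ ∀ U : Finset (Fin n), (∀ v ∈ U, f v ∈ U) →
      (Finset.univ.filter (fun k => s k ∈ U)).card ≤ U.card := by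
  have key : ∀ U : Finset (Fin n), (List.ofFn s).countP (· ∈ U) =
      (Finset.univ.filter (fun k => s k ∈ U)).card := by
    intro U
    rw [List.ofFn_eq_map, List.countP_map, List.countP_eq_length_filter]
    rfl
  constructor
  · intro h U hU
    have := parkAux_of_isSome f U hU _ _ h
    rw [key] at this
    simpa using this
  · intro h
    unfold ParkingSucceeds
    by_contra hc
    rw [Option.not_isSome_iff_eq_none] at hc
    obtain ⟨U, h1, _, h3⟩ := parkAux_none f _ _ hc
    rw [key] at h3
    have := h U h1
    simp at h3
    omega

theorem STree_le_of {n : ℕ} (A B : LabelledRootedTree n) (m : ℕ) (σ : Equiv.Perm (Fin n))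
    (h : ∀ U : Finset (Fin n), (∀ v ∈ U, B.parent v ∈ U) → ∀ v, σ v ∈ U → σ (A.parent v) ∈ U) :
    STree A m ≤ STree B m := by
  unfold STree
  refine Nat.card_le_card_of_injective (fun s => ⟨fun k => σ (s.1 k), ?_⟩) ?_
  · have hs := (park_iff_s10 _ _).1 s.2
    refine (park_iff_s10 _ _).2 ?_
    intro U hU
    have := hs (U.map σ.symm.toEmbedding) (by
      intro v hv
      simp at hv ⊢
      exact h U hU v hv)
    simpa using this
  · intro s t hst
    ext k
    have := congrFun (congrArg Subtype.val hst) k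
    have := σ.injective this
    rw [this]

theorem exists_le_parent {n : ℕ} (T : LabelledRootedTree n) :
    ∃ σ : Equiv.Perm (Fin n), ∀ v, σ v ≤ σ (T.parent v) := by
  classical
  let d : Fin n → ℤ := fun v => -(Nat.find (T.reaches_root v) : ℤ)
  have hd : ∀ v, v ≠ T.root → d v < d (T.parent v) := by
    intro v hv
    have h1 := Nat.find_spec (T.reaches_root v)
    have h2 : Nat.find (T.reaches_root v) ≠ 0 := by
      intro h0; rw [h0] at h1; exact hv h1
    obtain ⟨k, hk⟩ := Nat.exists_eq_succ_of_ne_zero h2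
    rw [hk, Function.iterate_succ_apply] at h1
    have := Nat.find_min' (T.reaches_root (T.parent v)) h1
    simp only [d]
    omega
  refine ⟨(Tuple.sort d)⁻¹, fun v => ?_⟩
  by_cases hv : v = T.root
  · rw [hv, T.parent_root]
  · by_contra hc
    have := Tuple.monotone_sort d (not_le.1 hc).le
    simp at this
    have := hd v hv
    omega

theorem lower_bound {n m : ℕ} (T : LabelledRootedTree n) :
    Nat.descFactorial n m + Nat.choose m 2 * Nat.descFactorial (n - 1) (m - 1) ≤ STree T m := by
  classical
  let X := (Fin m ↪ Fin n) ⊕ (Σ j : Fin m, Fin (j:ℕ) × ({k : Fin m // k ≠ j} ↪ {v : Fin n // v ≠ T.root}))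
  have hX : Nat.card X = Nat.descFactorial n m + Nat.choose m 2 * Nat.descFactorial (n - 1) (m - 1) := by
    simp only [X, Nat.card_eq_fintype_card, Fintype.card_sum, Fintype.card_embedding_eq,
      Fintype.card_sigma, Fintype.card_prod, Fintype.card_fin]
    simp
    rw [← Finset.sum_mul, Fin.sum_univ_eq_sum_range (fun i => i) m]
    rw [Finset.sum_range_id, Nat.choose_two_right]
  rw [← hX]
  have hij : ∀ (j : Fin m) (i : Fin (j:ℕ)), (⟨i, i.2.trans j.2⟩ : Fin m) ≠ j := by
    intro j i h
    have := congrArg Fin.val h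
    simp at this
    omega
  let F : X → (Fin m → Fin n) := Sum.elim (fun e => e)
    (fun y k => if h : k = y.1 then y.2.2 ⟨⟨y.2.1, y.2.1.2.trans y.1.2⟩, hij _ _⟩ else y.2.2 ⟨k, h⟩)
  have hroot : ∀ U : Finset (Fin n), (∀ v ∈ U, T.parent v ∈ U) → U.Nonempty → T.root ∈ U := by
    rintro U hU ⟨v, hv⟩
    obtain ⟨k, hk⟩ := T.reaches_root v
    rw [← hk]
    clear hk
    induction k with
    | zero => exact hv
    | succ k ih => rw [Function.iterate_succ_apply']; exact hU _ ih
  have hF : ∀ x, IsTreeParking T (F x) := by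
    intro x
    refine (park_iff_s10 _ _).2 ?_
    intro U hU
    rcases x with e | ⟨j, i, e⟩
    · exact Finset.card_le_card_of_injOn e (by intro k; simp [F]) e.injective.injOn
    · rcases U.eq_empty_or_nonempty with rfl | hne
      · simp
      · have hr := hroot U hU hne
        rw [← Finset.card_erase_add_one hr]
        refine le_trans ?_ (Nat.add_le_add_right (?_ :
          ((Finset.univ.filter (fun k => F (Sum.inr ⟨j, i, e⟩) k ∈ U)).erase j).card ≤ _) 1)
        · have := Finset.pred_card_le_card_erase (s := Finset.univ.filter (fun k => F (Sum.inr ⟨j, i, e⟩) k ∈ U)) (a := j)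
          omega
        · refine Finset.card_le_card_of_injOn (F (Sum.inr ⟨j, i, e⟩)) ?_ ?_
          · intro k hk
            obtain ⟨hk1, hk2⟩ := Finset.mem_erase.1 (Finset.mem_coe.1 hk)
            refine Finset.mem_coe.2 (Finset.mem_erase.2 ⟨?_, (Finset.mem_filter.1 hk2).2⟩)
            have : F (Sum.inr ⟨j, i, e⟩) k = e ⟨k, hk1⟩ := dif_neg hk1
            rw [this]
            exact (e _).2
          · intro k hk l hl h
            have hk1 := (Finset.mem_erase.1 (Finset.mem_coe.1 hk)).1
            have hl1 := (Finset.mem_erase.1 (Finset.mem_coe.1 hl)).1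
            have h1 : F (Sum.inr ⟨j, i, e⟩) k = e ⟨k, hk1⟩ := dif_neg hk1
            have h2 : F (Sum.inr ⟨j, i, e⟩) l = e ⟨l, hl1⟩ := dif_neg hl1
            rw [h1, h2] at h
            exact congrArg Subtype.val (e.injective (Subtype.ext h))
  have hpair : ∀ (j : Fin m) (i : Fin (j:ℕ)) e,
      ∀ a b : Fin m, a < b → F (Sum.inr ⟨j, i, e⟩) a = F (Sum.inr ⟨j, i, e⟩) b →
        (a:ℕ) = i ∧ b = j := by
    intro j i e a b hab h
    have hi := i.2
    simp only [F, Sum.elim_inr] at h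
    split_ifs at h with h1 h2 h2
    · omega
    · have := e.injective (Subtype.ext h)
      simp [Fin.ext_iff] at this
      omega
    · have := e.injective (Subtype.ext h)
      simp [Fin.ext_iff] at this
      exact ⟨this, h2⟩
    · have := e.injective (Subtype.ext h)
      simp at this
      omega
  have hpair' : ∀ (j : Fin m) (i : Fin (j:ℕ)) e,
      F (Sum.inr ⟨j, i, e⟩) ⟨i, i.2.trans j.2⟩ = F (Sum.inr ⟨j, i, e⟩) j := by
    intro j i e
    simp [F, hij]
  unfold STree
  refine Nat.card_le_card_of_injective (fun x => ⟨F x, hF x⟩) ?_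
  intro x y hxy
  have hxy : F x = F y := by simpa using hxy
  rcases x with e | ⟨j, i, e⟩ <;> rcases y with e' | ⟨j', i', e'⟩
  · congr 1; ext k; exact congrArg Fin.val (congrFun hxy k)
  · exfalso
    have := hpair' j' i' e'
    rw [← hxy] at this
    exact hij _ _ (e.injective this)
  · exfalso
    have := hpair' j i e
    rw [hxy] at this
    exact hij _ _ (e'.injective this)
  · have h1 := hpair' j i e
    rw [hxy] at h1
    obtain ⟨h2, h3⟩ := hpair _ _ _ _ _ (show (⟨i, i.2.trans j.2⟩ : Fin m) < j from i.2) h1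
    subst h3
    have h2 : i = i' := Fin.ext h2
    subst h2
    congr 3
    ext ⟨k, hk⟩
    have := congrFun hxy k
    simp [F, hk] at this
    rw [this]

def GoodSeq {n m : ℕ} (t : Fin m → Fin (n+1)) : Prop :=
  ∀ j, 1 ≤ j → j ≤ n + 1 → (Finset.univ.filter (fun k => (t k : ℕ) < j)).card < j

open Classical in
theorem good_shifts {n m : ℕ} (hm : m ≤ n) (t : Fin m → Fin (n+1)) :
    (Finset.univ.filter (fun c : Fin (n+1) => GoodSeq (fun k => t k - c))).card ≤ n + 1 - m := by
  set G := Finset.univ.filter (fun c : Fin (n+1) => GoodSeq (fun k => t k - c)) with hG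
  rcases G.eq_empty_or_nonempty with h0 | hne
  · rw [h0]; simp
  let C : ℕ → ℕ := fun x => (Finset.univ.filter (fun k => (t k : ℕ) < x)).card
  let P : Fin (n+1) → ℤ := fun c => (c:ℤ) - C c
  have hsplit : ∀ c c' : Fin (n+1), c ≤ c' → C c' = C c +
      (Finset.univ.filter (fun k => c ≤ t k ∧ t k < c')).card := by
    intro c c' h
    simp only [C]
    rw [← Finset.card_union_of_disjoint]
    · congr 1; ext k; simp; omega
    · rw [Finset.disjoint_left]; intro k; simp; omega
  have hlt : ∀ c ∈ G, ∀ c', c < c' → P c < P c' := by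
    intro c hc c' h
    have hc : GoodSeq (fun k => t k - c) := by simpa [hG] using hc
    have h1 := hc (c' - c) (by omega) (by omega)
    have h2 := hsplit c c' h.le
    have h3 : (Finset.univ.filter (fun k => ((t k - c : Fin (n+1)) : ℕ) < (c':ℕ) - c)) =
      (Finset.univ.filter (fun k => c ≤ t k ∧ t k < c')) := by
      ext k
      simp only [Finset.mem_filter, Finset.mem_univ, true_and]
      rcases le_or_gt c (t k) with h4 | h4
      · rw [Fin.coe_sub_iff_le.2 h4]; omega
      · rw [Fin.coe_sub_iff_lt.2 h4]; omega
    rw [h3] at h1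
    simp only [P]
    omega
  have hwrap : ∀ c' ∈ G, ∀ c, c ≤ c' → P c' < P c + (n + 1 - m) := by
    intro c' hc c h
    have hc : GoodSeq (fun k => t k - c') := by simpa [hG] using hc
    have h1 := hc (n + 1 - c' + c) (by omega) (by omega)
    have h2 := hsplit c c' h
    have h3 : (Finset.univ.filter (fun k => ((t k - c' : Fin (n+1)) : ℕ) < n + 1 - c' + c)) =
      (Finset.univ.filter (fun k => ¬ (c ≤ t k ∧ t k < c'))) := by
      ext k
      simp only [Finset.mem_filter, Finset.mem_univ, true_and]
      rcases le_or_gt c' (t k) with h4 | h4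
      · rw [Fin.coe_sub_iff_le.2 h4]; omega
      · rw [Fin.coe_sub_iff_lt.2 h4]; omega
    rw [h3] at h1
    have h5 := Finset.card_filter_add_card_filter_not (s := (Finset.univ : Finset (Fin m)))
      (fun k => c ≤ t k ∧ t k < c')
    simp only [Finset.card_univ, Fintype.card_fin] at h5
    simp only [P]
    omega
  let c0 := G.min' hne
  have hc0 : c0 ∈ G := G.min'_mem hne
  have : G.card ≤ (Finset.Ico (P c0) (P c0 + (n + 1 - m))).card := by
    refine Finset.card_le_card_of_injOn P ?_ ?_
    · intro c hc
      have hle : c0 ≤ c := G.min'_le c hc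
      simp only [Finset.coe_Ico, Set.mem_Ico]
      refine ⟨?_, hwrap c hc c0 hle⟩
      rcases hle.eq_or_lt with h | h
      · rw [h]
      · exact (hlt _ hc0 _ h).le
    · intro a ha b hb hab
      rcases lt_trichotomy a b with h | h | h
      · have := hlt a ha b h; omega
      · exact h
      · have := hlt b hb a h; omega
  rw [Int.card_Ico] at this
  omega

open Classical in
theorem good_count {n m : ℕ} (hm : m ≤ n) (h1 : 1 ≤ m) :
    (Finset.univ.filter (fun t : Fin m → Fin (n+1) => GoodSeq t)).card
      ≤ (n - m + 1) * (n + 1) ^ (m - 1) := by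
  have hc : ∀ c : Fin (n+1),
      (Finset.univ.filter (fun t : Fin m → Fin (n+1) => GoodSeq (fun k => t k - c))).card =
      (Finset.univ.filter (fun t : Fin m → Fin (n+1) => GoodSeq t)).card := by
    intro c
    refine Finset.card_bij (fun t _ => fun k => t k - c) ?_ ?_ ?_
    · intro t ht; simpa using ht
    · intro t _ u _ h
      ext k
      have := congrFun h k
      simp only [sub_left_inj] at this
      rw [this]
    · intro t ht
      refine ⟨fun k => t k + c, ?_, ?_⟩
      · simpa using ht
      · simp
  have hdc : ∑ c : Fin (n+1),
      (Finset.univ.filter (fun t : Fin m → Fin (n+1) => GoodSeq (fun k => t k - c))).card =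
      ∑ t : Fin m → Fin (n+1),
        (Finset.univ.filter (fun c : Fin (n+1) => GoodSeq (fun k => t k - c))).card := by
    simp only [Finset.card_filter]
    exact Finset.sum_comm
  have hle := Finset.sum_le_sum (s := (Finset.univ : Finset (Fin m → Fin (n+1))))
    (fun t _ => good_shifts hm t)
  rw [← hdc] at hle
  simp only [hc, Finset.sum_const, Finset.card_univ, Fintype.card_fin, smul_eq_mul,
    Fintype.card_fun] at hle
  refine Nat.le_of_mul_le_mul_left (hle.trans (le_of_eq ?_)) (Nat.succ_pos n)
  obtain ⟨p, rfl⟩ : ∃ p, m = p + 1 := ⟨m - 1, by omega⟩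
  have : n + 1 - (p + 1) = n - (p+1) + 1 := by omega
  rw [this, pow_succ]
  simp only [Nat.add_sub_cancel, Nat.succ_eq_add_one]
  ring

theorem chain_le {n m : ℕ} (hm : m ≤ n) (chain : LabelledRootedTree n)
    (hchain_root : (chain.root : ℕ) = n - 1)
    (hchain_parent : ∀ v : Fin n, (v : ℕ) + 1 < n → ((chain.parent v) : ℕ) = (v : ℕ) + 1) :
    STree chain m ≤ (n - m + 1) * (n + 1) ^ (m - 1) := by
  classical
  rcases Nat.eq_zero_or_pos m with rfl | hpos
  · have : STree chain 0 ≤ 1 := by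
      unfold STree
      exact Finite.card_le_one_iff_subsingleton.2 inferInstance
    simp; omega
  refine le_trans ?_ (good_count hm hpos)
  rw [← Fintype.card_subtype, ← Nat.card_eq_fintype_card]
  unfold STree
  refine Nat.card_le_card_of_injective
    (fun s => ⟨fun k => ⟨n - (s.1 k : ℕ), by omega⟩, ?_⟩) ?_
  · intro j hj1 hj2
    have := (park_iff_s10 _ _).1 s.2 (Finset.univ.filter (fun v : Fin n => n < (v:ℕ) + j)) (by
      intro v hv
      simp only [Finset.mem_filter, Finset.mem_univ, true_and] at hv ⊢
      by_cases h : (v:ℕ) + 1 < n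
      · rw [hchain_parent v h]; omega
      · have : v = chain.root := Fin.ext (by omega)
        rw [this, chain.parent_root, ← this]; exact hv)
    have h2 : (Finset.univ.filter (fun v : Fin n => n < (v:ℕ) + j)).card ≤ j - 1 := by
      have : (Finset.univ.filter (fun v : Fin n => n < (v:ℕ) + j)).card ≤
          (Finset.Ico (n + 1 - j) n).card := by
        refine Finset.card_le_card_of_injOn (fun v => (v:ℕ)) ?_ Fin.val_injective.injOn
        intro v hv
        simp at hv ⊢
        omega
      rw [Nat.card_Ico] at this
      omega
    have h3 : (Finset.univ.filter (fun k => n - (s.1 k : ℕ) < j)) =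
       (Finset.univ.filter (fun k => s.1 k ∈ Finset.univ.filter (fun v : Fin n => n < (v:ℕ) + j))) := by
      ext k; simp; omega
    simp only [h3]
    omega
  · intro s t h
    ext k
    have := congrFun (congrArg Subtype.val h) k
    simp only [Fin.mk.injEq] at this
    omega


/-- (Lackner–Panholzer, Theorem 2.6) Let `star` be the rooted labelled tree on `{1,…,n}`
with root `n` and all other vertices attached to the root, and `chain` the rooted
labelled tree with root `n` and vertex `j` attached to `j+1` (here 0-indexed on
`Fin n`, so the root has index `n-1`).  Then for every rooted labelled tree `T` on
`{1,…,n}` and `0 ≤ m ≤ n`,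
`S(star,m) ≤ S(T,m) ≤ S(chain,m)`, and
`n(n-1)⋯(n-m+1) + C(m,2)(n-1)(n-2)⋯(n-m+1) ≤ S(T,m) ≤ (n-m+1)(n+1)^(m-1)`
(falling factorials). -/
theorem lackner_panholzer_theorem_2_6 (n m : ℕ) (hn : 1 ≤ n) (hm : m ≤ n)
    (star chain T : LabelledRootedTree n)
    (hstar_root : (star.root : ℕ) = n - 1)
    (hstar_parent : ∀ v : Fin n, star.parent v = star.root)
    (hchain_root : (chain.root : ℕ) = n - 1)
    (hchain_parent : ∀ v : Fin n, (v : ℕ) + 1 < n → ((chain.parent v) : ℕ) = (v : ℕ) + 1) :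
    (STree star m ≤ STree T m ∧ STree T m ≤ STree chain m) ∧
    Nat.descFactorial n m + Nat.choose m 2 * Nat.descFactorial (n - 1) (m - 1) ≤ STree T m ∧
    STree T m ≤ (n - m + 1) * (n + 1) ^ (m - 1) := by
  have hUp : STree T m ≤ STree chain m := by
    obtain ⟨σ, hσ⟩ := exists_le_parent T
    refine STree_le_of T chain m σ ?_
    intro U hU v hv
    have hup : ∀ d : ℕ, ∀ w : Fin n, w ∈ U → ∀ x : Fin n, (x:ℕ) = w + d → x ∈ U := by
      intro d
      induction d with
      | zero => intro w hw x hx; rwa [Fin.ext hx]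
      | succ d ih =>
        intro w hw x hx
        refine ih _ (hU w hw) x ?_
        rw [hchain_parent w (by omega)]; omega
    exact hup (σ (T.parent v) - σ v) _ hv _ (by have : (σ v : ℕ) ≤ σ (T.parent v) := hσ v
                                                omega)
  have hLow : STree star m ≤ STree T m := by
    refine STree_le_of star T m (Equiv.swap star.root T.root) ?_
    intro U hU v hv
    rw [hstar_parent, Equiv.swap_apply_left]
    obtain ⟨k, hk⟩ := T.reaches_root (Equiv.swap star.root T.root v)
    rw [← hk]
    clear hk
    induction k with
    | zero => exact hv
    | succ k ih => rw [Function.iterate_succ_apply']; exact hU _ ih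
  exact ⟨⟨hLow, hUp⟩, lower_bound T,
    hUp.trans (chain_le hm chain hchain_root hchain_parent)⟩
end

section
/- (Lackner–Panholzer, Lemma 3.1) For every n ≥ 1, the total number C_n of pairs (f, s), where f is a connected n-mapping and s ∈ {1,…,n}^n is a mapping parking function of length n for f, is given by C_n = n!·(n−1)!·Σ_{j=0}^{n−1} (2n)^j / j!. -/
/-- The functional graph of an `n`-mapping `f`: the graph on `Fin n` with an edge
joining `i` and `f i` for every `i` (loops discarded). -/
def funcGraph (n : ℕ) (f : Fin n → Fin n) : SimpleGraph (Fin n) :=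
  SimpleGraph.fromRel (fun i j => f i = j)


namespace LP
open Classical Finset

/-! Partial functions, reachability, weights. -/

abbrev PF (V : Type) := V → Option V

def R {V : Type} (f : PF V) : V → V → Prop := Relation.ReflTransGen (fun a b => f a = some b)

def Supp {V : Type} (X : Finset V) (f : PF V) : Prop := ∀ a b, f a = some b → a ∈ X ∧ b ∈ X

def Forest {V : Type} (f : PF V) : Prop := ∀ u, ∃ r, R f u r ∧ f r = none

def Conn {V : Type} (X : Finset V) (f : PF V) : Prop :=
  (∀ u ∈ X, f u ≠ none) ∧ ∀ u ∈ X, ∀ u' ∈ X, ∃ z, R f u z ∧ R f u' z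

noncomputable def er {V : Type} (f : PF V) (v : V) : PF V :=
  fun u => if u = v ∨ f u = some v then none else f u

noncomputable def restr {V : Type} (f : PF V) (S : Finset V) : PF V :=
  fun u => if u ∈ S then f u else none

noncomputable def glue {V : Type} (v : V) (S : Finset V) (g h : PF V) (o : Option V) : PF V :=
  fun u => if u = v then o else if u ∈ S then (if g u = none then some v else g u) else h u

noncomputable def w {V : Type} [Fintype V] : PF V → List V → ℕ
  | _, [] => 1
  | f, v :: l => (univ.filter (fun u => R f u v)).card * w (er f v) l

variable {V : Type}

lemma R_inv {f : PF V} (P : V → Prop) (hP : ∀ a b, f a = some b → P a → P b) {a b : V}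
    (h : R f a b) (ha : P a) : P b := by
  induction h with
  | refl => exact ha
  | tail _ h2 ih => exact hP _ _ h2 ih

lemma R_transfer {f f' : PF V} (P : V → Prop)
    (hP : ∀ a b, P a → f a = some b → P b ∧ f' a = some b) {a b : V}
    (h : R f a b) (ha : P a) : R f' a b := by
  have : P b ∧ R f' a b := by
    induction h with
    | refl => exact ⟨ha, .refl⟩
    | tail _ h2 ih => exact ⟨(hP _ _ ih.1 h2).1, ih.2.tail (hP _ _ ih.1 h2).2⟩
  exact this.2

lemma R_head {f : PF V} {a b c : V} (h : R f a b) (hab : a ≠ b) (hc : f a = some c) :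
    R f c b := by
  rcases Relation.ReflTransGen.cases_head h with h | ⟨d, h1, h2⟩
  · exact absurd h hab
  · rw [hc] at h1
    cases h1
    exact h2

lemma R_none {f : PF V} {a b : V} (h : R f a b) (ha : f a = none) : a = b := by
  rcases Relation.ReflTransGen.cases_head h with h | ⟨d, h1, h2⟩
  · exact h
  · simp [ha] at h1

lemma w_split [Fintype V] (S : Finset V) (l : List V) : ∀ (f : PF V)
    (_ : ∀ a b, f a = some b → (a ∈ S ↔ b ∈ S)),
    w f l = w (restr f S) (l.filter (fun u => decide (u ∈ S))) *
      w (restr f Sᶜ) (l.filter (fun u => decide (u ∉ S))) := by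
  induction l with
  | nil => intro f _; simp [w]
  | cons v l ih =>
    intro f hf
    have hf' : ∀ a b, er f v a = some b → (a ∈ S ↔ b ∈ S) := by
      intro a b hab
      unfold er at hab
      split_ifs at hab
      exact hf a b hab
    have key : ∀ T : Finset V, (∀ a b, f a = some b → (a ∈ T ↔ b ∈ T)) → v ∈ T →
        (univ.filter (fun u => R f u v)) = (univ.filter (fun u => R (restr f T) u v)) := by
      intro T hT hv
      ext u
      simp only [mem_filter, mem_univ, true_and]
      constructor
      · intro h
        have hu : u ∈ T := by
          by_contra hu
          exact R_inv (fun x => x ∉ T) (fun a b hab ha => by rwa [← hT a b hab]) h hu hv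
        refine R_transfer (fun x => x ∈ T) (fun a b ha hab => ⟨(hT a b hab).1 ha, ?_⟩) h hu
        simp [restr, ha, hab]
      · intro h
        refine R_transfer (fun _ => True) (fun a b _ hab => ⟨trivial, ?_⟩) h trivial
        unfold restr at hab
        split_ifs at hab
        exact hab
    have e1 : ∀ T : Finset V, er (restr f T) v = restr (er f v) T := by
      intro T
      funext u
      by_cases h : u ∈ T <;> simp [er, restr, h]
    have e2 : ∀ T : Finset V, (∀ a b, f a = some b → (a ∈ T ↔ b ∈ T)) → v ∉ T →
        restr (er f v) T = restr f T := by
      intro T hT hv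
      funext u
      by_cases h : u ∈ T
      · have h1 : u ≠ v := fun e => hv (e ▸ h)
        have h2 : f u ≠ some v := fun e => hv ((hT _ _ e).1 h)
        simp [er, restr, h, h1, h2]
      · simp [restr, h]
    have hfc : ∀ a b, f a = some b → (a ∈ Sᶜ ↔ b ∈ Sᶜ) := by
      intro a b hab
      simp [hf a b hab]
    by_cases hv : v ∈ S
    · have := ih (er f v) hf'
      simp only [w, List.filter_cons, hv, decide_true, if_true, not_true_eq_false, decide_false,
        Bool.false_eq_true, if_false]
      rw [this, key S hf hv, e1, e2 Sᶜ hfc (by simpa using hv), mul_assoc]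
    · have := ih (er f v) hf'
      simp only [w, List.filter_cons, hv, decide_true, if_true, not_false_eq_true, decide_false,
        Bool.false_eq_true, if_false]
      rw [this, key Sᶜ hfc (by simpa using hv), e1, e2 S hf hv]
      ring

section glue
variable {v : V} {S L : Finset V} {g h : PF V} {o : Option V}

lemma glue_v : glue v S g h o v = o := by simp [glue]

lemma glue_S (hvS : v ∉ S) {u : V} (hu : u ∈ S) :
    glue v S g h o u = if g u = none then some v else g u := by
  have : u ≠ v := fun e => hvS (e ▸ hu)
  simp [glue, this, hu]

lemma glue_out {u : V} (hu : u ∉ S) (huv : u ≠ v) : glue v S g h o u = h u := by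
  simp [glue, huv, hu]

lemma glue_R_out (hh : Supp (L \ S) h) (hv : v ∉ L) {u z : V} (hu : u ∉ S) (huv : u ≠ v) :
    R (glue v S g h o) u z ↔ R h u z := by
  have aux : ∀ b, b ∈ L \ S → b ∉ S ∧ b ≠ v := by
    intro b hb
    rw [mem_sdiff] at hb
    exact ⟨hb.2, fun e => hv (e ▸ hb.1)⟩
  constructor
  · intro hR
    refine R_transfer (fun x => x ∉ S ∧ x ≠ v) ?_ hR ⟨hu, huv⟩
    intro a b ha hab
    rw [glue_out ha.1 ha.2] at hab
    exact ⟨aux b (hh _ _ hab).2, hab⟩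
  · intro hR
    refine R_transfer (fun x => x ∉ S ∧ x ≠ v) ?_ hR ⟨hu, huv⟩
    intro a b ha hab
    rw [glue_out ha.1 ha.2]
    exact ⟨aux b (hh _ _ hab).2, hab⟩

lemma R_out_mem {X : Finset V} (hh : Supp X h) {u z : V} (hR : R h u z) (hu : u ∈ X) : z ∈ X :=
  R_inv (fun x => x ∈ X) (fun _ _ hab _ => (hh _ _ hab).2) hR hu

lemma glue_R_S (hvS : v ∉ S) (hg : Supp S g) (hgF : Forest g) {u : V} (hu : u ∈ S) :
    R (glue v S g h o) u v := by
  obtain ⟨r, hr, hr0⟩ := hgF u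
  have h1 : R (glue v S g h o) u r := by
    refine R_transfer (fun x => x ∈ S) ?_ hr hu
    intro a b ha hab
    refine ⟨(hg _ _ hab).2, ?_⟩
    rw [glue_S hvS ha]
    simp [hab]
  have h2 : r ∈ S := R_out_mem hg hr hu
  refine Relation.ReflTransGen.tail h1 ?_
  rw [glue_S hvS h2]
  simp [hr0]

lemma glue_R_iff (hSL : S ⊆ L) (hv : v ∉ L) (hg : Supp S g) (hgF : Forest g)
    (hh : Supp (L \ S) h) {u : V} : R (glue v S g h o) u v ↔ u = v ∨ u ∈ S := by
  have hvS : v ∉ S := fun e => hv (hSL e)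
  constructor
  · intro hR
    by_contra hcon
    push Not at hcon
    rw [glue_R_out hh hv hcon.2 hcon.1] at hR
    rcases Relation.ReflTransGen.cases_tail hR with e | ⟨d, _, h2⟩
    · exact hcon.1 e.symm
    · exact hv (mem_sdiff.1 (hh _ _ h2).2).1
  · rintro (rfl | hu)
    · exact .refl
    · exact glue_R_S hvS hg hgF hu

lemma er_glue_S (hSL : S ⊆ L) (hv : v ∉ L) (hg : Supp S g) :
    restr (er (glue v S g h o) v) S = g := by
  have hvS : v ∉ S := fun e => hv (hSL e)
  funext u
  by_cases hu : u ∈ S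
  · have huv : u ≠ v := fun e => hvS (e ▸ hu)
    simp only [restr, hu, if_true, er, huv, false_or, glue_S hvS hu]
    by_cases h0 : g u = none
    · simp [h0]
    · have : g u ≠ some v := fun e => hvS (hg _ _ e).2
      simp [h0, this]
  · simp only [restr, hu, if_false]
    rcases e : g u with _ | b
    · rfl
    · exact absurd (hg _ _ e).1 hu

lemma er_glue_out [Fintype V] (hv : v ∉ L) (hh : Supp (L \ S) h) :
    restr (er (glue v S g h o) v) Sᶜ = h := by
  funext u
  have hnone : ∀ u, u ∉ L \ S → h u = none := by
    intro u hu
    rcases e : h u with _ | b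
    · rfl
    · exact absurd (hh _ _ e).1 hu
  by_cases hu : u ∈ S
  · simp [restr, hu, hnone]
  · by_cases huv : u = v
    · subst huv
      simp [restr, hu, er, hnone, hv]
    · have : h u ≠ some v := fun e => hv (mem_sdiff.1 (hh _ _ e).2).1
      simp [restr, hu, er, huv, glue_out hu huv, this]

lemma w_glue [Fintype V] (l : List V) (hSL : S ⊆ L) (hv : v ∉ L) (hg : Supp S g)
    (hgF : Forest g) (hh : Supp (L \ S) h) :
    w (glue v S g h o) (v :: l) = (S.card + 1) *
      (w g (l.filter (fun u => decide (u ∈ S))) * w h (l.filter (fun u => decide (u ∉ S)))) := by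
  have hvS : v ∉ S := fun e => hv (hSL e)
  have h1 : (univ.filter (fun u => R (glue v S g h o) u v)) = insert v S := by
    ext u
    simp [glue_R_iff hSL hv hg hgF hh]
  rw [w, h1, card_insert_of_notMem hvS, w_split S l, er_glue_S hSL hv hg, er_glue_out hv hh]
  intro a b hab
  by_cases hav : a = v
  · simp [er, hav] at hab
  by_cases ha : a ∈ S
  · simp only [er, hav, glue_S hvS ha, false_or] at hab
    by_cases h0 : g a = none
    · simp [h0] at hab
    · simp only [h0, if_false] at hab
      split_ifs at hab
      exact ⟨fun _ => (hg _ _ hab).2, fun _ => ha⟩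
  · simp only [er, hav, glue_out ha hav, false_or] at hab
    split_ifs at hab
    exact ⟨fun e => absurd e ha, fun e => absurd e (mem_sdiff.1 (hh _ _ hab).2).2⟩

end glue

lemma exists_glue {v : V} {L : Finset V} {f : PF V} (hv : v ∉ L) (hf : Supp (insert v L) f) :
    ∃ S g h, S ⊆ L ∧ Supp S g ∧ Forest g ∧ Supp (L \ S) h ∧ f = glue v S g h (f v) := by
  set S := L.filter (fun u => R f u v) with hS
  have hvS : v ∉ S := fun e => hv (mem_filter.1 e).1
  have gsub : ∀ a b, restr (er f v) S a = some b → a ∈ S ∧ f a = some b ∧ b ≠ v := by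
    intro a b hab
    unfold restr at hab
    split_ifs at hab with h1
    unfold er at hab
    split_ifs at hab with h2
    push Not at h2
    exact ⟨h1, hab, fun e => h2.2 (e ▸ hab)⟩
  have neS : ∀ a ∈ S, a ≠ v := fun a ha e => hvS (e ▸ ha)
  refine ⟨S, restr (er f v) S, restr f (L \ S), filter_subset _ _, ?_, ?_, ?_, ?_⟩
  · intro a b hab
    obtain ⟨h1, h2, h3⟩ := gsub a b hab
    refine ⟨h1, mem_filter.2 ⟨mem_of_mem_insert_of_ne (hf _ _ h2).2 h3, ?_⟩⟩
    exact R_head (mem_filter.1 h1).2 (neS a h1) h2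
  · intro u
    by_cases hu : u ∈ S
    · have hR := (mem_filter.1 hu).2
      clear hu
      induction hR using Relation.ReflTransGen.head_induction_on with
      | refl => exact ⟨v, .refl, by simp [restr, hvS]⟩
      | @head a c hac _ ih =>
        rcases e : restr (er f v) S a with _ | b
        · exact ⟨a, .refl, e⟩
        · have := (gsub a b e).2.1
          rw [hac] at this
          cases this
          obtain ⟨r, hr, hr0⟩ := ih
          exact ⟨r, Relation.ReflTransGen.head e hr, hr0⟩
    · exact ⟨u, .refl, by simp [restr, hu]⟩
  · intro a b hab
    unfold restr at hab
    split_ifs at hab with h1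
    refine ⟨h1, ?_⟩
    rw [mem_sdiff] at h1 ⊢
    have hnR : ¬ R f a v := fun e => h1.2 (mem_filter.2 ⟨h1.1, e⟩)
    have hnb : ¬ R f b v := fun e => hnR (Relation.ReflTransGen.head hab e)
    have hbv : b ≠ v := by
      rintro rfl
      exact hnb .refl
    exact ⟨mem_of_mem_insert_of_ne (hf _ _ hab).2 hbv, fun e => hnb (mem_filter.1 e).2⟩
  · funext u
    by_cases huv : u = v
    · subst huv; simp [glue]
    by_cases hu : u ∈ S
    · rw [glue_S hvS hu]
      simp only [restr, hu, if_true, er, huv, false_or]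
      by_cases h1 : f u = some v
      · simp [h1]
      · have : f u ≠ none := fun e => huv (R_none (mem_filter.1 hu).2 e)
        simp [h1, this]
    · rw [glue_out hu huv]
      by_cases hL : u ∈ L
      · simp [restr, hL, hu]
      · simp only [restr, mem_sdiff, hL, false_and, if_false]
        rcases e : f u with _ | b
        · rfl
        · exact absurd (mem_of_mem_insert_of_ne (hf _ _ e).1 huv) hL


section numeric

lemma alt_sum (M : ℕ) : ∑ k ∈ range (M + 2),
    ((-1 : ℚ)) ^ (M + 1 - k) * ((M + 1).choose k : ℚ) * ((k : ℚ) + 1) ^ M = 0 := by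
  have h1 := fwdDiff_iter_eq_sum_shift (1 : ℚ) (fun x : ℚ => x ^ M) (M + 1) 1
  have h2 := fwdDiff_iter_pow_eq_zero_of_lt (R := ℚ) (Nat.lt_succ_self M)
  rw [h2] at h1
  simp only [Pi.zero_apply] at h1
  rw [h1]
  refine Finset.sum_congr rfl fun k _ => ?_
  simp [zsmul_eq_mul, add_comm]

/-- Abel's identity with `x = 1`. -/
lemma abel_id (N : ℕ) (z : ℚ) : ∑ k ∈ range (N + 1),
    (N.choose k : ℚ) * (((k : ℚ) + 1) ^ k / (k + 1)) * (z - (k + 1)) ^ (N - k) = z ^ N := by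
  have e1 : ∀ k ∈ range (N + 1),
      (N.choose k : ℚ) * (((k : ℚ) + 1) ^ k / (k + 1)) * (z - (k + 1)) ^ (N - k) =
      ∑ j ∈ range (N + 1), z ^ j * (if j + k ≤ N then (N.choose j : ℚ) * ((N - j).choose k : ℚ) *
        ((-1) ^ (N - j - k) * (((k : ℚ) + 1) ^ (N - j) / (k + 1))) else 0) := by
    intro k hk
    rw [mem_range] at hk
    rw [sub_eq_add_neg, add_pow z, mul_sum]
    rw [← Finset.sum_subset (range_subset_range.2 (show N - k + 1 ≤ N + 1 by omega))]
    · refine Finset.sum_congr rfl fun j hj => ?_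
      rw [mem_range] at hj
      rw [if_pos (by omega)]
      have hc : N.choose k * (N - k).choose j = N.choose j * (N - j).choose k := by
        have a2 := Nat.choose_mul (n := N) (k := k + j) (s := k) (by omega)
        have a3 := Nat.choose_mul (n := N) (k := k + j) (s := j) (by omega)
        simp only [Nat.add_sub_cancel_left, Nat.add_sub_cancel] at a2 a3
        rw [← a2, ← a3, Nat.choose_symm_add]
      have hc' : (N.choose k : ℚ) * (N - k).choose j = N.choose j * (N - j).choose k := by
        exact_mod_cast hc
      rw [← hc']
      have hp : ((k : ℚ) + 1) ^ (N - j) = (k + 1) ^ k * (k + 1) ^ (N - k - j) := by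
        rw [← pow_add]; congr 1; omega
      rw [hp, neg_pow, show N - j - k = N - k - j by omega]
      ring
    · intro j _ hj
      rw [mem_range] at hj
      rw [if_neg (by omega), mul_zero]
  rw [Finset.sum_congr rfl e1, Finset.sum_comm]
  rw [Finset.sum_eq_single_of_mem N (by simp)]
  · rw [Finset.sum_eq_single_of_mem 0 (by simp)]
    · simp
    · intro k _ hk
      rw [if_neg (by omega), mul_zero]
  · intro j hj hjN
    rw [mem_range] at hj
    obtain ⟨M, hM⟩ : ∃ M, N - j = M + 1 := ⟨N - j - 1, by omega⟩
    rw [← mul_sum, ← Finset.sum_subset (range_subset_range.2 (show M + 2 ≤ N + 1 by omega))]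
    · have := alt_sum M
      apply mul_eq_zero_of_right
      rw [← mul_zero (N.choose j : ℚ), ← this, mul_sum]
      refine Finset.sum_congr rfl fun k hk => ?_
      rw [mem_range] at hk
      rw [if_pos (by omega), hM, pow_succ ((k : ℚ) + 1)]
      have : (k : ℚ) + 1 ≠ 0 := by positivity
      field_simp
    · intro k _ hk
      rw [mem_range] at hk
      rw [if_neg (by omega)]

noncomputable def hh (m : ℕ) : ℚ := 2 ^ m * (m + 1) ^ m / (m + 1) ^ 2

lemma hh_rec (n : ℕ) : hh (n + 1) = ∑ k ∈ range (n + 1),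
    (n.choose k : ℚ) * ((k + 1) * ((n - k : ℕ) + 1) * (hh k * hh (n - k))) := by
  have h0 := abel_id n (n + 2)
  have h1 := h0
  rw [← Finset.sum_range_reflect] at h1
  have h2 : ∑ k ∈ range (n + 1),
    (n.choose k : ℚ) * ((k + 1) * ((n - k : ℕ) + 1) * (hh k * hh (n - k))) =
     2 ^ n / (n + 2) * ((n + 2) ^ n + (n + 2) ^ n) := by
    rw [(congrArg₂ (· + ·) h1 h0).symm]
    rw [← sum_add_distrib, mul_sum]
    refine Finset.sum_congr rfl fun k hk => ?_
    rw [mem_range] at hk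
    have hkn : k ≤ n := by omega
    have hs : n + 1 - 1 - k = n - k := by omega
    have hs' : n - (n - k) = k := by omega
    rw [hs, hs', Nat.choose_symm hkn]
    unfold hh
    obtain ⟨m, rfl⟩ : ∃ m, n = k + m := ⟨n - k, by omega⟩
    simp only [Nat.add_sub_cancel_left]
    push_cast
    rw [show (k : ℚ) + m + 2 - (m + 1) = k + 1 by ring,
      show (k : ℚ) + m + 2 - (k + 1) = m + 1 by ring, pow_add]
    have : (k : ℚ) + 1 ≠ 0 := by positivity
    have : (m : ℚ) + 1 ≠ 0 := by positivity
    have : (k : ℚ) + m + 2 ≠ 0 := by positivity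
    field_simp
    ring
  rw [h2]
  unfold hh
  push_cast
  have : (n : ℚ) + 2 ≠ 0 := by positivity
  rw [show (n : ℚ) + 1 + 1 = n + 2 by ring]
  field_simp
  ring

noncomputable def cc (m : ℕ) : ℚ :=
  (Nat.factorial (m - 1) : ℚ) * ∑ j ∈ range m, (2 * (m : ℚ)) ^ j / (Nat.factorial j : ℚ)

/-- `m * cc m` written with `i = m - j`. -/
lemma cc_mul (m : ℕ) : (m : ℚ) * cc m =
    ∑ i ∈ range m, (m.descFactorial (i + 1) : ℚ) * (2 * m) ^ (m - (i + 1)) := by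
  rcases m with _ | m
  · simp
  unfold cc
  rw [← mul_assoc, Nat.add_sub_cancel, ← Finset.sum_range_reflect, mul_sum]
  refine Finset.sum_congr rfl fun i hi => ?_
  rw [mem_range] at hi
  have h1 : m + 1 - 1 - i = m + 1 - (i + 1) := by omega
  have h2 := Nat.factorial_mul_descFactorial (show i + 1 ≤ m + 1 by omega)
  have h3 : ((m + 1 - (i + 1)).factorial : ℚ) * ((m + 1).descFactorial (i + 1) : ℚ) =
    ((m + 1 : ℕ) : ℚ) * (m.factorial : ℚ) := by
    have := congrArg (Nat.cast : ℕ → ℚ) h2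
    rw [Nat.factorial_succ] at this
    exact_mod_cast this
  rw [h1, ← h3]
  have : ((m + 1 - (i + 1)).factorial : ℚ) ≠ 0 := by positivity
  field_simp

lemma cc_rec (n : ℕ) : cc (n + 1) = (n + 1) ^ 2 * hh n + ∑ k ∈ range (n + 1),
    (n.choose k : ℚ) * ((k + 1) * hh k * ((n - k : ℕ) * cc (n - k))) := by
  have e1 : ∀ k ∈ range (n + 1),
      (n.choose k : ℚ) * ((k + 1) * hh k * ((n - k : ℕ) * cc (n - k))) =
      ∑ i ∈ range n, (n.descFactorial (i + 1) : ℚ) * 2 ^ (n - (i + 1)) *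
        (if k < n - i then ((n - (i + 1)).choose k : ℚ) * (((k : ℚ) + 1) ^ k / (k + 1)) *
        (((n : ℚ) + 1) - (k + 1)) ^ (n - (i + 1) - k) else 0) := by
    intro k hk
    rw [mem_range] at hk
    rw [cc_mul, mul_sum, mul_sum]
    rw [← Finset.sum_subset (range_subset_range.2 (show n - k ≤ n by omega))]
    · refine Finset.sum_congr rfl fun i hi => ?_
      rw [mem_range] at hi
      rw [if_pos (by omega)]
      have hc : n.choose k * (n - k).descFactorial (i + 1) =
          n.descFactorial (i + 1) * (n - (i + 1)).choose k := by
        rw [Nat.descFactorial_eq_factorial_mul_choose, Nat.descFactorial_eq_factorial_mul_choose]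
        have a2 := Nat.choose_mul (n := n) (k := k + (i + 1)) (s := k) (by omega)
        have a3 := Nat.choose_mul (n := n) (k := k + (i + 1)) (s := i + 1) (by omega)
        rw [Nat.add_sub_cancel_left] at a2
        rw [Nat.add_sub_cancel] at a3
        rw [mul_left_comm, ← a2, mul_assoc, ← a3, Nat.choose_symm_add]
      have hc' : (n.choose k : ℚ) * (n - k).descFactorial (i + 1) =
          n.descFactorial (i + 1) * (n - (i + 1)).choose k := by exact_mod_cast hc
      unfold hh
      have hp : (2 : ℚ) ^ (n - (i + 1)) = 2 ^ k * 2 ^ (n - k - (i + 1)) := by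
        rw [← pow_add]; congr 1; omega
      have hnk : ((n - k : ℕ) : ℚ) = (n : ℚ) + 1 - (k + 1) := by
        rw [Nat.cast_sub (by omega)]; ring
      rw [hp, show n - (i + 1) - k = n - k - (i + 1) by omega, hnk, mul_pow]
      have : (k : ℚ) + 1 ≠ 0 := by positivity
      calc _ = ((n.choose k : ℚ) * (n - k).descFactorial (i + 1)) * (((k : ℚ) + 1) * (2 ^ k * (k + 1) ^ k / (k + 1) ^ 2) * (2 ^ (n - k - (i + 1)) * ((n : ℚ) + 1 - (k + 1)) ^ (n - k - (i + 1)))) := by ring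
        _ = _ := by
          rw [hc']
          field_simp
    · intro i _ hi
      rw [mem_range] at hi
      rw [if_neg (by omega), mul_zero]
  rw [Finset.sum_congr rfl e1, Finset.sum_comm]
  have e2 : ∀ i ∈ range n, ∑ k ∈ range (n + 1), (n.descFactorial (i + 1) : ℚ) * 2 ^ (n - (i + 1)) *
        (if k < n - i then ((n - (i + 1)).choose k : ℚ) * (((k : ℚ) + 1) ^ k / (k + 1)) *
        (((n : ℚ) + 1) - (k + 1)) ^ (n - (i + 1) - k) else 0) =
      (n.descFactorial (i + 1) : ℚ) * (2 * (n + 1)) ^ (n - (i + 1)) := by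
    intro i hi
    rw [mem_range] at hi
    rw [← mul_sum, ← Finset.sum_subset (range_subset_range.2 (show n - (i + 1) + 1 ≤ n + 1 by omega))]
    · rw [mul_pow, ← abel_id (n - (i + 1)) (n + 1), ← mul_assoc]
      congr 1
      refine Finset.sum_congr rfl fun k hk => ?_
      rw [mem_range] at hk
      rw [if_pos (by omega)]
    · intro k _ hk
      rw [mem_range] at hk
      rw [if_neg (by omega)]
  rw [Finset.sum_congr rfl e2]
  have h3 := cc_mul (n + 1)
  rw [Finset.sum_range_succ'] at h3
  have hne : ((n + 1 : ℕ) : ℚ) ≠ 0 := by positivity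
  apply mul_left_cancel₀ hne
  rw [h3, mul_add, add_comm, mul_sum]
  congr 1
  · unfold hh
    simp only [zero_add, Nat.descFactorial_one, Nat.add_sub_cancel, mul_pow]
    push_cast
    have : (n : ℚ) + 1 ≠ 0 := by positivity
    field_simp
  · refine Finset.sum_congr rfl fun i hi => ?_
    rw [Nat.succ_descFactorial_succ]
    push_cast
    ring

end numeric

section recur
variable [Fintype V]

noncomputable def FS (X : Finset V) : Finset (PF V) := univ.filter (fun f => Supp X f ∧ Forest f)
noncomputable def CS (X : Finset V) : Finset (PF V) := univ.filter (fun f => Supp X f ∧ Conn X f)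

lemma master (v : V) (l : List V) (L : Finset V) (hv : v ∉ L)
    (A : Finset V → Finset (PF V)) (B : Finset V → Finset (Option V)) (Tg : Finset (PF V))
    (hA : ∀ S ⊆ L, ∀ h ∈ A S, Supp (L \ S) h)
    (h1 : ∀ S ⊆ L, ∀ g h o, Supp S g → Forest g → h ∈ A S → o ∈ B S → glue v S g h o ∈ Tg)
    (h2 : ∀ f ∈ Tg, Supp (insert v L) f ∧ ∀ S g h o, S ⊆ L → Supp S g → Forest g →
      Supp (L \ S) h → f = glue v S g h o → h ∈ A S ∧ o ∈ B S) :
    ∑ f ∈ Tg, w f (v :: l) = ∑ S ∈ L.powerset, (S.card + 1) * (B S).card *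
      ((∑ g ∈ FS S, w g (l.filter (fun u => decide (u ∈ S)))) *
        ∑ h ∈ A S, w h (l.filter (fun u => decide (u ∉ S)))) := by
  have e1 : ∀ S ∈ L.powerset, (S.card + 1) * (B S).card *
      ((∑ g ∈ FS S, w g (l.filter (fun u => decide (u ∈ S)))) *
        ∑ h ∈ A S, w h (l.filter (fun u => decide (u ∉ S)))) =
      ∑ x ∈ (FS S ×ˢ A S) ×ˢ B S, w (glue v S x.1.1 x.1.2 x.2) (v :: l) := by
    intro S hS
    rw [mem_powerset] at hS
    rw [sum_product, sum_mul_sum, ← sum_product', mul_sum]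
    refine Finset.sum_congr rfl fun x hx => ?_
    rw [mem_product] at hx
    obtain ⟨hx1, hx2⟩ := hx
    have hx1 := (mem_filter.1 hx1).2
    have : ∀ o ∈ B S, w (glue v S x.1 x.2 o) (v :: l) = (S.card + 1) *
      (w x.1 (l.filter (fun u => decide (u ∈ S))) *
        w x.2 (l.filter (fun u => decide (u ∉ S)))) := fun o _ =>
      w_glue l hS hv hx1.1 hx1.2 (hA S hS _ hx2)
    rw [Finset.sum_congr rfl this, sum_const, smul_eq_mul]
    ring
  rw [Finset.sum_congr rfl e1]
  rw [← sum_sigma L.powerset (fun S => (FS S ×ˢ A S) ×ˢ B S)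
    (fun x => w (glue v x.1 x.2.1.1 x.2.1.2 x.2.2) (v :: l))]
  symm
  refine Finset.sum_bij (fun x _ => glue v x.1 x.2.1.1 x.2.1.2 x.2.2) ?_ ?_ ?_ ?_
  · rintro ⟨S, ⟨g, h⟩, o⟩ hx
    simp only [mem_sigma, mem_powerset, mem_product] at hx
    obtain ⟨hS, ⟨hg, hh⟩, ho⟩ := hx
    have hg := (mem_filter.1 hg).2
    exact h1 S hS g h o hg.1 hg.2 hh ho
  · rintro ⟨S, ⟨g, h⟩, o⟩ hx ⟨S', ⟨g', h'⟩, o'⟩ hx' heq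
    simp only [mem_sigma, mem_powerset, mem_product] at hx hx' heq
    obtain ⟨hS, ⟨hg, hh⟩, ho⟩ := hx
    obtain ⟨hS', ⟨hg', hh'⟩, ho'⟩ := hx'
    have hg := (mem_filter.1 hg).2
    have hg' := (mem_filter.1 hg').2
    have hh := hA S hS _ hh
    have hh' := hA S' hS' _ hh'
    have eS : S = S' := by
      ext u
      have a1 := glue_R_iff (o := o) hS hv hg.1 hg.2 hh (u := u)
      have a2 := glue_R_iff (o := o') hS' hv hg'.1 hg'.2 hh' (u := u)
      rw [heq, a2] at a1
      constructor
      · intro hu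
        rcases a1.2 (Or.inr hu) with e | e
        · exact absurd (hS hu) (e ▸ hv)
        · exact e
      · intro hu
        rcases a1.1 (Or.inr hu) with e | e
        · exact absurd (hS' hu) (e ▸ hv)
        · exact e
    subst eS
    have eg : g = g' := by
      rw [← er_glue_S (h := h) (o := o) hS hv hg.1, heq, er_glue_S hS hv hg'.1]
    have eh : h = h' := by
      rw [← er_glue_out (g := g) (o := o) hv hh, heq, er_glue_out hv hh']
    have eo : o = o' := by
      rw [← glue_v (v := v) (S := S) (g := g) (h := h) (o := o), heq, glue_v]
    subst eg eh eo
    rfl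
  · intro f hf
    obtain ⟨hs, h3⟩ := h2 f hf
    obtain ⟨S, g, h, hS, hg, hgF, hh, e⟩ := exists_glue hv hs
    obtain ⟨h4, h5⟩ := h3 S g h _ hS hg hgF hh e
    refine ⟨⟨S, ⟨g, h⟩, f v⟩, ?_, e.symm⟩
    simp only [mem_sigma, mem_powerset, mem_product]
    exact ⟨hS, ⟨mem_filter.2 ⟨mem_univ _, hg, hgF⟩, h4⟩, h5⟩
  · intro x _
    rfl

section cond
variable {v : V} {S L : Finset V} {g h : PF V} {o : Option V}

lemma glue_supp (hSL : S ⊆ L) (hv : v ∉ L) (hg : Supp S g)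
    (hh : Supp (L \ S) h) (ho : ∀ b, o = some b → b ∈ insert v L) :
    Supp (insert v L) (glue v S g h o) := by
  have hvS : v ∉ S := fun e => hv (hSL e)
  intro a b hab
  by_cases hav : a = v
  · subst hav
    rw [glue_v] at hab
    exact ⟨mem_insert_self _ _, ho b hab⟩
  by_cases ha : a ∈ S
  · rw [glue_S hvS ha] at hab
    refine ⟨mem_insert_of_mem (hSL ha), ?_⟩
    split_ifs at hab
    · cases hab
      exact mem_insert_self _ _
    · exact mem_insert_of_mem (hSL (hg _ _ hab).2)
  · rw [glue_out ha hav] at hab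
    have := hh _ _ hab
    rw [mem_sdiff, mem_sdiff] at this
    exact ⟨mem_insert_of_mem this.1.1, mem_insert_of_mem this.2.1⟩

/-- if `v` is sent into `S ∪ {v}`, this set is closed. -/
lemma glue_closed (hSL : S ⊆ L) (hv : v ∉ L) (hg : Supp S g) (ho : ∀ b, o = some b → b ∈ insert v S)
    {a b : V} (hR : R (glue v S g h o) a b) (ha : a ∈ insert v S) : b ∈ insert v S := by
  have hvS : v ∉ S := fun e => hv (hSL e)
  refine R_inv (fun x => x ∈ insert v S) ?_ hR ha
  intro a b hab ha
  rcases mem_insert.1 ha with rfl | ha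
  · rw [glue_v] at hab
    exact ho b hab
  · rw [glue_S hvS ha] at hab
    split_ifs at hab
    · cases hab
      exact mem_insert_self _ _
    · exact mem_insert_of_mem (hg _ _ hab).2

lemma glue_forest (hSL : S ⊆ L) (hv : v ∉ L) (hg : Supp S g) (hgF : Forest g)
    (hh : Supp (L \ S) h) (ho : ∀ b, o = some b → b ∈ insert v L) :
    Forest (glue v S g h o) ↔ Forest h ∧ ∀ b, o = some b → b ∈ L \ S := by
  have hvS : v ∉ S := fun e => hv (hSL e)
  have hnone : ∀ u, u ∉ L \ S → h u = none := by
    intro u hu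
    rcases e : h u with _ | b
    · rfl
    · exact absurd (hh _ _ e).1 hu
  have hne : ∀ u ∈ L \ S, u ∉ S ∧ u ≠ v := fun u hu =>
    ⟨(mem_sdiff.1 hu).2, fun e => hv (e ▸ (mem_sdiff.1 hu).1)⟩
  constructor
  · intro hF
    constructor
    · intro u
      by_cases hu : u ∈ L \ S
      · obtain ⟨h1, h2⟩ := hne u hu
        obtain ⟨r, hr, hr0⟩ := hF u
        rw [glue_R_out hh hv h1 h2] at hr
        have hrm := R_out_mem hh hr hu
        obtain ⟨h3, h4⟩ := hne r hrm
        rw [glue_out h3 h4] at hr0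
        exact ⟨r, hr, hr0⟩
      · exact ⟨u, .refl, hnone u hu⟩
    · intro b hb
      subst hb
      by_contra hcon
      have hb : b ∈ insert v S := by
        have := ho b rfl
        simp only [mem_insert, mem_sdiff] at this hcon ⊢
        tauto
      obtain ⟨r, hr, hr0⟩ := hF v
      have hrm := glue_closed hSL hv hg (fun b' hb' => by cases hb'; exact hb) hr
        (mem_insert_self _ _)
      rcases mem_insert.1 hrm with rfl | hrm
      · simp [glue_v] at hr0
      · rw [glue_S hvS hrm] at hr0
        split_ifs at hr0
        contradiction
  · rintro ⟨hF, ho'⟩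
    have hout : ∀ u, u ∉ S → u ≠ v → ∃ r, R (glue v S g h o) u r ∧ glue v S g h o r = none := by
      intro u h1 h2
      by_cases hu : u ∈ L \ S
      · obtain ⟨r, hr, hr0⟩ := hF u
        obtain ⟨h3, h4⟩ := hne r (R_out_mem hh hr hu)
        exact ⟨r, (glue_R_out hh hv h1 h2).2 hr, by rw [glue_out h3 h4, hr0]⟩
      · exact ⟨u, .refl, by rw [glue_out h1 h2, hnone u hu]⟩
    have hvr : ∃ r, R (glue v S g h o) v r ∧ glue v S g h o r = none := by
      rcases o with _ | b
      · exact ⟨v, .refl, glue_v⟩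
      · obtain ⟨h3, h4⟩ := hne b (ho' b rfl)
        obtain ⟨r, hr, hr0⟩ := hout b h3 h4
        exact ⟨r, Relation.ReflTransGen.head glue_v hr, hr0⟩
    intro u
    by_cases huv : u = v
    · subst huv; exact hvr
    by_cases hu : u ∈ S
    · obtain ⟨r, hr, hr0⟩ := hvr
      exact ⟨r, (glue_R_S hvS hg hgF hu).trans hr, hr0⟩
    · exact hout u hu huv

lemma glue_conn (hSL : S ⊆ L) (hv : v ∉ L) (hg : Supp S g) (hgF : Forest g)
    (hh : Supp (L \ S) h) (ho : ∀ b, o = some b → b ∈ insert v L) :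
    Conn (insert v L) (glue v S g h o) ↔ Conn (L \ S) h ∧
      ∃ b, o = some b ∧ b ∈ (if L \ S = ∅ then insert v S else L \ S) := by
  have hvS : v ∉ S := fun e => hv (hSL e)
  have hne : ∀ u ∈ L \ S, u ∉ S ∧ u ≠ v := fun u hu =>
    ⟨(mem_sdiff.1 hu).2, fun e => hv (e ▸ (mem_sdiff.1 hu).1)⟩
  have hin : ∀ u ∈ L \ S, u ∈ insert v L := fun u hu => mem_insert_of_mem (mem_sdiff.1 hu).1
  constructor
  · rintro ⟨hT, hC⟩
    refine ⟨⟨?_, ?_⟩, ?_⟩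
    · intro u hu
      have := hT u (hin u hu)
      rwa [glue_out (hne u hu).1 (hne u hu).2] at this
    · intro u hu u' hu'
      obtain ⟨z, h1, h2⟩ := hC u (hin u hu) u' (hin u' hu')
      rw [glue_R_out hh hv (hne u hu).1 (hne u hu).2] at h1
      rw [glue_R_out hh hv (hne u' hu').1 (hne u' hu').2] at h2
      exact ⟨z, h1, h2⟩
    · have h0 := hT v (mem_insert_self _ _)
      rw [glue_v] at h0
      obtain ⟨b, rfl⟩ := Option.ne_none_iff_exists'.1 h0
      refine ⟨b, rfl, ?_⟩
      have hb := ho b rfl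
      split_ifs with he
      · have : L = S := Subset.antisymm (sdiff_eq_empty_iff_subset.1 he) hSL
        rwa [← this]
      · obtain ⟨u, hu⟩ := nonempty_iff_ne_empty.2 he
        by_contra hcon
        have hb' : b ∈ insert v S := by
          simp only [mem_insert, mem_sdiff] at hb hcon ⊢
          tauto
        obtain ⟨z, h1, h2⟩ := hC u (hin u hu) v (mem_insert_self _ _)
        rw [glue_R_out hh hv (hne u hu).1 (hne u hu).2] at h1
        have hz := hne z (R_out_mem hh h1 hu)
        have hz' := glue_closed hSL hv hg (fun b' hb'' => by cases hb''; exact hb') h2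
          (mem_insert_self _ _)
        rcases mem_insert.1 hz' with e | e
        · exact hz.2 e
        · exact hz.1 e
  · rintro ⟨⟨hT, hC⟩, b, rfl, hb⟩
    constructor
    · intro u hu
      by_cases huv : u = v
      · subst huv; simp [glue_v]
      by_cases huS : u ∈ S
      · rw [glue_S hvS huS]
        split_ifs with h0
        · simp
        · exact h0
      · rw [glue_out huS huv]
        exact hT u (mem_sdiff.2 ⟨mem_of_mem_insert_of_ne hu huv, huS⟩)
    · have hv' : ∀ u ∈ insert v S, R (glue v S g h (some b)) u v := by
        intro u hu
        rw [glue_R_iff hSL hv hg hgF hh]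
        exact mem_insert.1 hu
      by_cases he : L \ S = ∅
      · have : L = S := Subset.antisymm (sdiff_eq_empty_iff_subset.1 he) hSL
        rw [this]
        intro u hu u' hu'
        exact ⟨v, hv' u hu, hv' u' hu'⟩
      · rw [if_neg he] at hb
        have key : ∀ u ∈ insert v L, ∃ c ∈ L \ S, R (glue v S g h (some b)) u c := by
          intro u hu
          by_cases hu' : u ∈ insert v S
          · exact ⟨b, hb, (hv' u hu').tail glue_v⟩
          · refine ⟨u, ?_, .refl⟩
            simp only [mem_insert, mem_sdiff] at hu hu' ⊢
            tauto
        intro u hu u' hu'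
        obtain ⟨c, hc, hR⟩ := key u hu
        obtain ⟨c', hc', hR'⟩ := key u' hu'
        obtain ⟨z, h1, h2⟩ := hC c hc c' hc'
        rw [← glue_R_out (g := g) (o := some b) hh hv (hne c hc).1 (hne c hc).2] at h1
        rw [← glue_R_out (g := g) (o := some b) hh hv (hne c' hc').1 (hne c' hc').2] at h2
        exact ⟨z, hR.trans h1, hR'.trans h2⟩
end cond

lemma FS_rec (v : V) (l : List V) (L : Finset V) (hv : v ∉ L) :
    ∑ f ∈ FS (insert v L), w f (v :: l) = ∑ S ∈ L.powerset, (S.card + 1) * ((L \ S).card + 1) *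
      ((∑ g ∈ FS S, w g (l.filter (fun u => decide (u ∈ S)))) *
        ∑ h ∈ FS (L \ S), w h (l.filter (fun u => decide (u ∉ S)))) := by
  rw [master v l L hv (fun S => FS (L \ S)) (fun S => insertNone (L \ S))]
  · simp [card_insertNone]
  · intro S _ h hh
    exact (mem_filter.1 hh).2.1
  · intro S hS g h o hg hgF hh ho
    have hh := (mem_filter.1 hh).2
    have ho : ∀ b, o = some b → b ∈ L \ S := by
      intro b hb
      subst hb
      simpa using ho
    have ho' : ∀ b, o = some b → b ∈ insert v L := fun b hb =>
      mem_insert_of_mem (mem_sdiff.1 (ho b hb)).1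
    exact mem_filter.2 ⟨mem_univ _, glue_supp hS hv hg hh.1 ho',
      (glue_forest hS hv hg hgF hh.1 ho').2 ⟨hh.2, ho⟩⟩
  · intro f hf
    obtain ⟨hs, hF⟩ := (mem_filter.1 hf).2
    refine ⟨hs, ?_⟩
    rintro S g h o hS hg hgF hh rfl
    have ho' : ∀ b, o = some b → b ∈ insert v L := fun b hb => (hs v b (by rw [glue_v, hb])).2
    obtain ⟨h1, h2⟩ := (glue_forest hS hv hg hgF hh ho').1 hF
    refine ⟨mem_filter.2 ⟨mem_univ _, hh, h1⟩, ?_⟩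
    rw [mem_insertNone]
    intro a ha
    exact h2 a ha

lemma CS_rec (v : V) (l : List V) (L : Finset V) (hv : v ∉ L) :
    ∑ f ∈ CS (insert v L), w f (v :: l) = ∑ S ∈ L.powerset,
      (S.card + 1) * (if L \ S = ∅ then S.card + 1 else (L \ S).card) *
      ((∑ g ∈ FS S, w g (l.filter (fun u => decide (u ∈ S)))) *
        ∑ h ∈ CS (L \ S), w h (l.filter (fun u => decide (u ∉ S)))) := by
  rw [master v l L hv (fun S => CS (L \ S))
    (fun S => (if L \ S = ∅ then insert v S else L \ S).image some)]
  · refine Finset.sum_congr rfl fun S hS => ?_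
    rw [mem_powerset] at hS
    rw [card_image_of_injective _ (Option.some_injective V)]
    split_ifs
    · rw [card_insert_of_notMem (fun e => hv (hS e))]
    · rfl
  · intro S _ h hh
    exact (mem_filter.1 hh).2.1
  · intro S hS g h o hg hgF hh ho
    have hh := (mem_filter.1 hh).2
    obtain ⟨b, hb, rfl⟩ := mem_image.1 ho
    have ho' : ∀ b', some b = some b' → b' ∈ insert v L := by
      intro b' hb'
      cases hb'
      split_ifs at hb
      · exact insert_subset_insert v hS hb
      · exact mem_insert_of_mem (mem_sdiff.1 hb).1
    exact mem_filter.2 ⟨mem_univ _, glue_supp hS hv hg hh.1 ho',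
      (glue_conn hS hv hg hgF hh.1 ho').2 ⟨hh.2, b, rfl, hb⟩⟩
  · intro f hf
    obtain ⟨hs, hF⟩ := (mem_filter.1 hf).2
    refine ⟨hs, ?_⟩
    rintro S g h o hS hg hgF hh rfl
    have ho' : ∀ b, o = some b → b ∈ insert v L := fun b hb => (hs v b (by rw [glue_v, hb])).2
    obtain ⟨h1, b, rfl, hb⟩ := (glue_conn hS hv hg hgF hh ho').1 hF
    exact ⟨mem_filter.2 ⟨mem_univ _, hh, h1⟩, mem_image.2 ⟨b, hb, rfl⟩⟩

lemma filter_facts (l : List V) (hl : l.Nodup) (L S : Finset V) (hL : l.toFinset = L) (hS : S ⊆ L) :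
    (l.filter (fun u => decide (u ∈ S))).toFinset = S ∧
    (l.filter (fun u => decide (u ∉ S))).toFinset = L \ S ∧
    (l.filter (fun u => decide (u ∈ S))).length = S.card ∧
    (l.filter (fun u => decide (u ∉ S))).length = L.card - S.card := by
  have h1 : (l.filter (fun u => decide (u ∈ S))).toFinset = S := by
    ext u
    have : u ∈ S → u ∈ l := fun h => by
      have := hS h
      rw [← hL] at this
      simpa using this
    simp
    tauto
  have h2 : (l.filter (fun u => decide (u ∉ S))).toFinset = L \ S := by
    ext u
    simp [← hL]
  refine ⟨h1, h2, ?_, ?_⟩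
  · rw [← List.toFinset_card_of_nodup (hl.filter _), h1]
  · rw [← List.toFinset_card_of_nodup (hl.filter _), h2, card_sdiff_of_subset hS]

lemma FS_empty : (FS (∅ : Finset V)) = {fun _ => none} := by
  ext f
  simp only [FS, mem_filter, mem_univ, true_and, mem_singleton]
  constructor
  · rintro ⟨h, _⟩
    funext u
    rcases e : f u with _ | b
    · rfl
    · simpa using (h _ _ e).1
  · rintro rfl
    exact ⟨fun a b h => by simp at h, fun u => ⟨u, .refl, rfl⟩⟩

lemma CS_empty : (CS (∅ : Finset V)) = {fun _ => none} := by
  ext f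
  simp only [CS, mem_filter, mem_univ, true_and, mem_singleton]
  constructor
  · rintro ⟨h, _⟩
    funext u
    rcases e : f u with _ | b
    · rfl
    · simpa using (h _ _ e).1
  · rintro rfl
    exact ⟨fun a b h => by simp at h, fun u hu => by simp at hu, fun u hu => by simp at hu⟩

lemma FS_count : ∀ (m : ℕ) (l : List V), l.length = m → l.Nodup →
    ((∑ f ∈ FS l.toFinset, w f l : ℕ) : ℚ) = hh m := by
  intro m
  induction m using Nat.strong_induction_on with
  | _ m ih =>
    intro l hlm hl
    rcases l with _ | ⟨v, l⟩
    · subst hlm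
      simp [FS_empty, w, hh]
    · obtain ⟨hv, hl⟩ := List.nodup_cons.1 hl
      simp only [List.length_cons] at hlm
      subst hlm
      have hLc : l.toFinset.card = l.length := List.toFinset_card_of_nodup hl
      rw [List.toFinset_cons, FS_rec v l _ (by simpa using hv), hh_rec, Nat.cast_sum]
      have := sum_powerset_apply_card (fun k => ((k : ℚ) + 1) * ((l.length - k : ℕ) + 1) *
        (hh k * hh (l.length - k))) (x := l.toFinset)
      simp only [hLc, nsmul_eq_mul] at this
      rw [← this]
      refine Finset.sum_congr rfl fun S hS => ?_
      rw [mem_powerset] at hS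
      obtain ⟨f1, f2, f3, f4⟩ := filter_facts l hl _ S rfl hS
      have hc := card_le_card hS
      rw [hLc] at hc f4
      have i1 := ih S.card (by omega) _ f3 (hl.filter _)
      have i2 := ih (l.length - S.card) (by omega) _ f4 (hl.filter _)
      rw [f1] at i1
      rw [f2] at i2
      rw [Nat.cast_mul, Nat.cast_mul (∑ g ∈ FS S, _), i1, i2, card_sdiff_of_subset hS, hLc]
      push_cast
      ring

lemma CS_count : ∀ (m : ℕ) (l : List V), l.length = m + 1 → l.Nodup →
    ((∑ f ∈ CS l.toFinset, w f l : ℕ) : ℚ) = cc (m + 1) := by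
  intro m
  induction m using Nat.strong_induction_on with
  | _ m ih =>
    intro l hlm hl
    rcases l with _ | ⟨v, l⟩
    · simp at hlm
    · obtain ⟨hv, hl⟩ := List.nodup_cons.1 hl
      simp only [List.length_cons, Nat.add_right_cancel_iff] at hlm
      subst hlm
      have hLc : l.toFinset.card = l.length := List.toFinset_card_of_nodup hl
      rw [List.toFinset_cons, CS_rec v l _ (by simpa using hv), cc_rec, Nat.cast_sum]
      have := sum_powerset_apply_card (fun k => ((k : ℚ) + 1) * hh k *
        ((l.length - k : ℕ) * cc (l.length - k))) (x := l.toFinset)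
      simp only [hLc, nsmul_eq_mul] at this
      rw [← this]
      rw [← Finset.sum_erase_add _ _ (mem_powerset_self l.toFinset),
        ← Finset.sum_erase_add (a := l.toFinset) _ (fun S => ((S.card : ℚ) + 1) * hh S.card *
        ((l.length - S.card : ℕ) * cc (l.length - S.card))) (mem_powerset_self l.toFinset),
        add_comm]
      rw [← add_assoc, add_right_comm]
      congr 1
      · simp only [hLc, Nat.sub_self, Nat.cast_zero, zero_mul, mul_zero, add_zero, sdiff_self]
        obtain ⟨f1, f2, f3, f4⟩ := filter_facts l hl _ _ rfl (Subset.refl l.toFinset)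
        have i1 := FS_count _ _ f3 (hl.filter _)
        rw [f1, hLc] at i1
        rw [hLc, Nat.sub_self, List.length_eq_zero_iff] at f4
        rw [f4, Nat.cast_mul, Nat.cast_mul (∑ g ∈ FS l.toFinset, _), i1]
        simp [CS_empty, w]
        left
        ring
      · refine Finset.sum_congr rfl fun S hS => ?_
        rw [mem_erase, mem_powerset] at hS
        obtain ⟨hne, hS⟩ := hS
        obtain ⟨f1, f2, f3, f4⟩ := filter_facts l hl _ S rfl hS
        have hc := card_lt_card (ssubset_of_subset_of_ne hS hne)
        rw [hLc] at hc f4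
        have i1 := FS_count S.card _ f3 (hl.filter _)
        have i2 := ih (l.length - S.card - 1) (by omega) _ (by rw [f4]; omega) (hl.filter _)
        rw [f1] at i1
        rw [f2, show l.length - S.card - 1 + 1 = l.length - S.card by omega] at i2
        rw [if_neg (fun e => hne (Subset.antisymm hS (sdiff_eq_empty_iff_subset.1 e)))]
        rw [Nat.cast_mul, Nat.cast_mul (∑ g ∈ FS S, _), i1, i2, card_sdiff_of_subset hS, hLc]
        push_cast
        ring

end recur

section park

noncomputable def restr2 (f : V → V) (X : Finset V) : PF V :=
  fun a => if a ∈ X ∧ f a ∈ X then some (f a) else none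

lemma restr2_eq {f : V → V} {X : Finset V} {a b : V} :
    restr2 f X a = some b ↔ a ∈ X ∧ f a ∈ X ∧ f a = b := by
  unfold restr2
  split_ifs with h
  · simp [h]
  · simp
    tauto

lemma er_restr2 (f : V → V) (L : Finset V) (v : V) (hv : v ∉ L) :
    er (restr2 f (insert v L)) v = restr2 f L := by
  funext a
  unfold er
  by_cases h1 : a = v
  · subst h1
    simp [restr2, hv]
  · by_cases h2 : f a = v
    · simp [restr2, h2, hv]
    · simp [restr2, h1, h2]

noncomputable def XX (v : V) (l : List V) : Finset V := insert v l.toFinset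

lemma mem_XX {v a : V} {l : List V} : a ∈ XX v l ↔ a = v ∨ a ∈ l := by simp [XX]

noncomputable def LF (l : List V) : Finset V := l.toFinset

lemma LF_univ [Fintype V] {l : List V} (h1 : l.Nodup) (h2 : l.length = Fintype.card V) :
    LF l = univ := by
  rw [LF, ← card_eq_iff_eq_univ, List.toFinset_card_of_nodup h1, h2]

noncomputable def CC [Fintype V] (l : List V) : ℕ := ∑ f ∈ CS l.toFinset, w f l

lemma CC_univ [Fintype V] {l : List V} (h1 : l.Nodup) (h2 : l.length = Fintype.card V)
    (W : Finset (V → V)) (hW : ∀ f, f ∈ W ↔ Conn univ (fun a => some (f a))) :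
    ∑ f ∈ W, w (fun a => some (f a)) l = CC l := by
  have hu : l.toFinset = univ := LF_univ h1 h2
  unfold CC
  rw [hu]
  refine Finset.sum_bij (fun f _ => fun a => some (f a)) ?_ ?_ ?_ ?_
  · intro f hf
    exact mem_filter.2 ⟨mem_univ _, fun a b _ => by simp, (hW f).1 hf⟩
  · intro f _ g _ h
    funext a
    exact Option.some_injective _ (congrFun h a)
  · intro F hF
    obtain ⟨_, hC⟩ := (mem_filter.1 hF).2
    have : ∀ a, ∃ b, F a = some b := fun a => Option.ne_none_iff_exists'.1 (hC.1 a (mem_univ _))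
    choose f hf using this
    have e : F = fun a => some (f a) := funext hf
    exact ⟨f, (hW f).2 (e ▸ hC), e.symm⟩
  · intro f _
    rfl

noncomputable def TT [Fintype V] (f : V → V) : List V → Finset (List V)
  | [] => {[]}
  | v :: l => ((univ.filter (fun u => R (restr2 f (XX v l)) u v)) ×ˢ TT f l).image
      (fun p => p.1 :: p.2)

lemma card_TT [Fintype V] (f : V → V) (l : List V) (hl : l.Nodup) :
    (TT f l).card = w (restr2 f (LF l)) l := by
  induction l with
  | nil => simp [TT, w]
  | cons v l ih =>
    obtain ⟨hv, hl⟩ := List.nodup_cons.1 hl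
    rw [TT, card_image_of_injective, card_product, ih hl, w, LF, LF, List.toFinset_cons, XX,
      er_restr2 _ _ _ (by simpa using hv)]
    rintro ⟨a, b⟩ ⟨c, d⟩ h
    simpa using h

lemma R_restr2_iter {f : V → V} {X : Finset V} {u v : V} (h : R (restr2 f X) u v) (hv : v ∈ X) :
    ∃ i, f^[i] u = v ∧ ∀ j ≤ i, f^[j] u ∈ X := by
  induction h using Relation.ReflTransGen.head_induction_on with
  | refl =>
    refine ⟨0, rfl, fun j hj => ?_⟩
    obtain rfl : j = 0 := by omega
    exact hv
  | @head a c hac _ ih =>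
    obtain ⟨i, h1, h2⟩ := ih
    obtain ⟨ha, _, rfl⟩ := restr2_eq.1 hac
    refine ⟨i + 1, h1, fun j hj => ?_⟩
    rcases j with _ | j
    · exact ha
    · exact h2 j (by omega)

lemma find_iff {n : ℕ} (f : Fin n → Fin n) (l : List (Fin n)) (u v : Fin n) :
    (∃ i, (List.range n).find? (fun i => decide (f^[i] u ∉ l)) = some i ∧ f^[i] u = v) ↔
      v ∉ l ∧ R (restr2 f (XX v l)) u v := by
  constructor
  · rintro ⟨i, h, rfl⟩
    rw [List.find?_range_eq_some] at h
    obtain ⟨h1, h2, h3⟩ := h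
    refine ⟨by simpa using h1, ?_⟩
    have h3 : ∀ j < i, f^[j] u ∈ l := fun j hj => by simpa using h3 j hj
    have hm : ∀ j ≤ i, f^[j] u ∈ XX (f^[i] u) l := by
      intro j hj
      rcases Nat.lt_or_eq_of_le hj with h | h
      · exact mem_XX.2 (Or.inr (h3 j h))
      · subst h; exact mem_XX.2 (Or.inl rfl)
    have : ∀ j ≤ i, R (restr2 f (XX (f^[i] u) l)) u (f^[j] u) := by
      intro j
      induction j with
      | zero => intro _; exact .refl
      | succ j ih =>
        intro hj
        refine (ih (by omega)).tail (restr2_eq.2 ⟨hm j (by omega), ?_⟩)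
        rw [← Function.iterate_succ_apply' f]
        exact ⟨hm _ hj, rfl⟩
    exact this i le_rfl
  · rintro ⟨hv, hR⟩
    obtain ⟨i0, hi0, hX⟩ := R_restr2_iter hR (mem_XX.2 (Or.inl rfl))
    have hex : ∃ i, f^[i] u = v := ⟨i0, hi0⟩
    set i := Nat.find hex with hi
    have hiv : f^[i] u = v := Nat.find_spec hex
    have hmin : ∀ j < i, f^[j] u ≠ v := fun j hj => Nat.find_min hex hj
    have hle : i ≤ i0 := Nat.find_min' hex hi0
    refine ⟨i, ?_, hiv⟩
    rw [List.find?_range_eq_some]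
    have key : ∀ j k, j < k → k ≤ i → f^[j] u ≠ f^[k] u := by
      intro j k hjk hk he
      apply hmin (i - k + j) (by omega)
      rw [Function.iterate_add_apply, he, ← Function.iterate_add_apply, Nat.sub_add_cancel hk, hiv]
    refine ⟨by simpa [hiv] using hv, ?_, ?_⟩
    · rw [List.mem_range]
      have hinj : Function.Injective (fun j : Fin (i + 1) => f^[(j : ℕ)] u) := by
        intro a b hab
        rcases lt_trichotomy (a : ℕ) b with h | h | h
        · exact absurd hab (key _ _ h (by omega))
        · exact Fin.ext h
        · exact absurd hab.symm (key _ _ h (by omega))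
      have := Fintype.card_le_of_injective _ hinj
      simp at this
      omega
    · intro j hj
      have := hX j (by omega)
      rcases mem_XX.1 this with h | h
      · exact absurd h (hmin j hj)
      · simpa using h

lemma parkAux_append {n : ℕ} (f : Fin n → Fin n) (a b : List (Fin n)) : ∀ occ,
    parkAux n f occ (a ++ b) = (parkAux n f occ a).bind (fun o => parkAux n f o b) := by
  induction a with
  | nil => intro occ; simp [parkAux]
  | cons v a ih =>
    intro occ
    simp only [List.cons_append, parkAux]
    split
    · rfl
    · exact ih _

lemma park_snoc {n : ℕ} (f : Fin n → Fin n) (v : Fin n) (t l : List (Fin n)) :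
    parkAux n f [] (t ++ [v]) = some l ↔ ∃ x l', l = x :: l' ∧ parkAux n f [] t = some l' ∧
      x ∉ l' ∧ R (restr2 f (XX x l')) v x := by
  rw [parkAux_append]
  simp only [Option.bind_eq_some_iff]
  constructor
  · rintro ⟨l', h1, h2⟩
    simp only [parkAux] at h2
    split at h2
    · simp at h2
    · rename_i i hi
      cases h2
      exact ⟨_, l', rfl, h1, (find_iff f l' v _).1 ⟨i, hi, rfl⟩⟩
  · rintro ⟨x, l', rfl, h1, h2⟩
    obtain ⟨i, hi, rfl⟩ := (find_iff f l' v _).2 h2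
    refine ⟨l', h1, ?_⟩
    simp only [parkAux, hi]

lemma park_facts {n : ℕ} (f : Fin n → Fin n) (t : List (Fin n)) : ∀ l,
    parkAux n f [] t.reverse = some l → l.Nodup ∧ l.length = t.length := by
  induction t with
  | nil => intro l h; simp [parkAux] at h; subst h; simp
  | cons v t ih =>
    intro l h
    rw [List.reverse_cons, park_snoc] at h
    obtain ⟨x, l', rfl, h1, h2, _⟩ := h
    obtain ⟨h3, h4⟩ := ih l' h1
    exact ⟨List.nodup_cons.2 ⟨h2, h3⟩, by simp [h4]⟩

lemma mem_TT {n : ℕ} (f : Fin n → Fin n) (l : List (Fin n)) : ∀ t, l.Nodup →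
    (t ∈ TT f l ↔ parkAux n f [] t.reverse = some l) := by
  induction l with
  | nil =>
    intro t _
    simp only [TT, mem_singleton]
    constructor
    · rintro rfl; simp [parkAux]
    · intro h
      have := (park_facts f t _ h).2
      exact List.length_eq_zero_iff.1 this.symm
  | cons v l ih =>
    intro t hl
    obtain ⟨hv, hl⟩ := List.nodup_cons.1 hl
    simp only [TT, mem_image, mem_product, mem_filter, mem_univ, true_and, Prod.exists]
    constructor
    · rintro ⟨u, t', ⟨h1, h2⟩, rfl⟩
      rw [List.reverse_cons, park_snoc]
      exact ⟨v, l, rfl, (ih t' hl).1 h2, hv, h1⟩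
    · intro h
      rcases t with _ | ⟨u, t⟩
      · simp [parkAux] at h
      · rw [List.reverse_cons, park_snoc] at h
        obtain ⟨x, l', he, h1, h2, h3⟩ := h
        cases he
        exact ⟨u, t, ⟨h3, (ih t hl).2 h1⟩, rfl⟩

noncomputable def NN (n : ℕ) : Finset (List (Fin n)) := (List.finRange n).permutations.toFinset

lemma mem_NN {n : ℕ} (l : List (Fin n)) : l ∈ NN n ↔ l.Nodup ∧ l.length = n := by
  simp only [NN, List.mem_toFinset, List.mem_permutations]
  constructor
  · intro h
    exact ⟨h.nodup_iff.2 (List.nodup_finRange n), by simpa using h.length_eq⟩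
  · rintro ⟨h1, h2⟩
    rw [List.perm_ext_iff_of_nodup h1 (List.nodup_finRange n)]
    have : l.toFinset = univ := by
      rw [← card_eq_iff_eq_univ, List.toFinset_card_of_nodup h1, h2, Fintype.card_fin]
    intro a
    have := Finset.ext_iff.1 this a
    simpa using this

lemma card_NN (n : ℕ) : (NN n).card = n.factorial := by
  rw [NN, List.toFinset_card_of_nodup (List.nodup_permutations _ (List.nodup_finRange n)),
    List.length_permutations, List.length_finRange]

lemma card_park {n : ℕ} (f : Fin n → Fin n) :
    (univ.filter (fun s : Fin n → Fin n => ParkingSucceeds f s)).card =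
      ∑ l ∈ NN n, (TT f l).card := by
  rw [← card_biUnion]
  · refine Finset.card_bij (fun s _ => (List.ofFn s).reverse) ?_ ?_ ?_
    · intro s hs
      have hs := (mem_filter.1 hs).2
      unfold ParkingSucceeds at hs
      obtain ⟨l, hl⟩ := Option.isSome_iff_exists.1 hs
      have h1 := park_facts f (List.ofFn s).reverse l (by simpa using hl)
      rw [mem_biUnion]
      refine ⟨l, (mem_NN l).2 ⟨h1.1, by simpa using h1.2⟩, ?_⟩
      rw [mem_TT f l _ h1.1]
      simpa using hl
    · intro a _ b _ h
      exact List.ofFn_injective (List.reverse_injective h)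
    · intro t ht
      obtain ⟨l, hl, ht⟩ := mem_biUnion.1 ht
      obtain ⟨h1, h2⟩ := (mem_NN l).1 hl
      rw [mem_TT f l _ h1] at ht
      have h3 := (park_facts f t l ht).2
      have h4 : t.reverse.length = n := by simp [← h3, h2]
      have h5 : List.ofFn (fun i : Fin n => t.reverse.get (i.cast h4.symm)) = t.reverse := by
        apply List.ext_get
        · simp [← h3, h2]
        · intro i _ _
          simp
      refine ⟨_, mem_filter.2 ⟨mem_univ _, ?_⟩, by rw [h5, List.reverse_reverse]⟩
      unfold ParkingSucceeds
      rw [h5, ht]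
      rfl
  · intro l hl l' hl' hne
    rw [Function.onFun, disjoint_left]
    intro t h1 h2
    rw [mem_TT f l _ ((mem_NN l).1 hl).1] at h1
    rw [mem_TT f l' _ ((mem_NN l').1 hl').1] at h2
    rw [h1] at h2
    exact hne (Option.some_injective _ h2)

lemma R_det {f : PF V} {a b c : V} (h1 : R f a b) (h2 : R f a c) : R f b c ∨ R f c b :=
  Relation.ReflTransGen.total_of_right_unique
    (fun x y z hxy hxz => Option.some_injective _ (hxy.symm.trans hxz)) h1 h2

lemma conn_iff {n : ℕ} (hn : 1 ≤ n) (f : Fin n → Fin n) :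
    (funcGraph n f).Connected ↔ Conn univ (fun a => some (f a)) := by
  constructor
  · intro h
    refine ⟨by simp, ?_⟩
    have : ∀ u u', (funcGraph n f).Reachable u u' →
        ∃ z, R (fun a => some (f a)) u z ∧ R (fun a => some (f a)) u' z := by
      intro u u' hr
      rw [SimpleGraph.reachable_iff_reflTransGen] at hr
      induction hr with
      | refl => exact ⟨u, .refl, .refl⟩
      | @tail b c _ hbc ih =>
        obtain ⟨z, h1, h2⟩ := ih
        have hbc : b ≠ c ∧ (f b = c ∨ f c = b) := by
          simpa [funcGraph, SimpleGraph.fromRel_adj] using hbc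
        rcases hbc.2 with e | e
        · have h3 : R (fun a => some (f a)) b c := Relation.ReflTransGen.single (by simp [e])
          rcases R_det h2 h3 with h | h
          · exact ⟨c, h1.trans h, .refl⟩
          · exact ⟨z, h1, h⟩
        · exact ⟨z, h1, Relation.ReflTransGen.head (by simp [e]) h2⟩
    intro u _ u' _
    exact this u u' (h.preconnected u u')
  · rintro ⟨_, hC⟩
    have : ∀ u z, R (fun a => some (f a)) u z → (funcGraph n f).Reachable u z := by
      intro u z h
      induction h with
      | refl => exact SimpleGraph.Reachable.refl _
      | @tail b c _ hbc ih =>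
        have hbc : f b = c := by simpa using hbc
        by_cases e : b = c
        · exact e ▸ ih
        · refine ih.trans (SimpleGraph.Adj.reachable ?_)
          rw [funcGraph, SimpleGraph.fromRel_adj]
          exact ⟨e, Or.inl hbc⟩
    have hne : Nonempty (Fin n) := ⟨⟨0, hn⟩⟩
    refine SimpleGraph.Connected.mk ?_
    intro u u'
    obtain ⟨z, h1, h2⟩ := hC u (mem_univ _) u' (mem_univ _)
    exact (this u z h1).trans (this u' z h2).symm

lemma total {n : ℕ} (hn : 1 ≤ n) (l : List (Fin n)) (hl : l ∈ NN n) :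
    ∑ f ∈ univ.filter (fun f : Fin n → Fin n => (funcGraph n f).Connected), (TT f l).card =
      CC l := by
  obtain ⟨h1, h2⟩ := (mem_NN l).1 hl
  rw [← CC_univ h1 (by simp [h2])
    (univ.filter (fun f : Fin n → Fin n => (funcGraph n f).Connected))
    (fun f => by rw [← conn_iff hn]; simp)]
  refine Finset.sum_congr rfl fun f _ => ?_
  rw [card_TT f l h1, LF_univ h1 (by simp [h2])]
  congr 1
  funext a
  simp [restr2]

lemma main {n : ℕ} (hn : 1 ≤ n) :
    (Nat.card {p : (Fin n → Fin n) × (Fin n → Fin n) //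
        (funcGraph n p.1).Connected ∧ ParkingSucceeds p.1 p.2} : ℚ) = n.factorial * cc n := by
  have h1 : Nat.card {p : (Fin n → Fin n) × (Fin n → Fin n) //
        (funcGraph n p.1).Connected ∧ ParkingSucceeds p.1 p.2} =
      ∑ f ∈ univ.filter (fun f : Fin n → Fin n => (funcGraph n f).Connected),
        (univ.filter (fun s : Fin n → Fin n => ParkingSucceeds f s)).card := by
    rw [Nat.card_eq_fintype_card, Fintype.card_subtype, ← card_sigma]
    refine Finset.card_bij (fun p _ => ⟨p.1, p.2⟩) ?_ ?_ ?_
    · intro p hp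
      simpa using hp
    · rintro ⟨a, b⟩ _ ⟨c, d⟩ _ h
      simpa using h
    · rintro ⟨a, b⟩ h
      exact ⟨(a, b), by simpa using h, rfl⟩
  rw [h1, Finset.sum_congr rfl (fun f _ => card_park f), Finset.sum_comm,
    Finset.sum_congr rfl (fun l hl => total hn l hl), Nat.cast_sum]
  have h2 : ∀ l ∈ NN n, ((CC l : ℕ) : ℚ) = cc n := by
    intro l hl
    obtain ⟨h3, h4⟩ := (mem_NN l).1 hl
    obtain ⟨m, rfl⟩ : ∃ m, n = m + 1 := ⟨n - 1, by omega⟩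
    exact CS_count m l h4 h3
  rw [Finset.sum_congr rfl h2, sum_const, card_NN, nsmul_eq_mul]

end park

end LP

/-- (Lackner–Panholzer, Lemma 3.1) For every `n ≥ 1`, the total number `C_n` of pairs
`(f, s)` with `f` a connected `n`-mapping and `s ∈ {1,…,n}^n` a mapping parking
function for `f` is `C_n = n! (n-1)! Σ_{j=0}^{n-1} (2n)^j / j!`. -/
theorem lackner_panholzer_lemma_3_1 (n : ℕ) (hn : 1 ≤ n) :
    (Nat.card {p : (Fin n → Fin n) × (Fin n → Fin n) //
        (funcGraph n p.1).Connected ∧ ParkingSucceeds p.1 p.2} : ℚ) =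
      (Nat.factorial n : ℚ) * (Nat.factorial (n - 1) : ℚ) *
        ∑ j ∈ Finset.range n, (2 * (n : ℚ)) ^ j / (Nat.factorial j : ℚ) := by
  rw [LP.main hn, LP.cc, mul_assoc]
end
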